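/- Let M be a connected topological manifold without boundary of dimension at least 2, let F be a field, and fix k ≥ 0. Assume the singular cohomology groups H^k(PConf_n(M); F) are finite-dimensional over F for all n. Then there exists a polynomial p ∈ ℚ[X] of degree at most 2k such that dim_F H^k(PConf_n(M); F) = p(n) for all n > max(−1, 8k − 2). -/

import Mathlib

/-!
Write `C` for the diagram of singular chain complexes of the configuration spaces of `M`, indexed by
finite sets and opposites of injections, a point being forgotten along each inclusion. The derivative
`D A` of such a diagram `A` is the cone of `A(S ⊔ pt) → A(S)` (`Shift.D`). The proof has a geometric
half, which bounds the derivatives of `C`, and an algebraic half, which deduces polynomiality.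

*Geometry* (`conf_van`). The complex `(Dⁿ C)(∅)` has no homology in degrees `j` with `2 j < 3 n`. By
induction on `n`: `D C` is the cone of the projection of `{(y, c) : y ∉ c}` to the configurations `c`.
This projection is the inclusion `{(y, c) : y ∉ c} → M × Conf` (`VP_pmIncl`) followed by the
projection `M × Conf → Conf`. The latter is two degrees more connected than `Conf` because `M` is
locally Euclidean and path connected: the inclusion of the discrete copy of `M` times `Conf` is
homotopic to a map through one fibre (`VP_prod_snd`). For the former, Mayer–Vietoris (`VP_sUnion`)
localizes the position of `y` to charts `W`. There, the configuration is split into two sets of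
labels, of which only the first has to avoid `y`; moving one label from the first set to the second
changes the space only by a configuration point colliding with `y`, that is, by `(E, E ∖ 0)` times a
smaller configuration space, and `E ∖ 0` is connected because `dim E ≥ 2` (`VP_ax`, `VP_XYr`). Once
all labels are in the second set there is no condition. All of this takes place at the level of
diagrams, so that it applies to every iterated derivative at once.

*Algebra* (`HV.poly`). By an induction on finite sets, `(Dⁱ C)(S)` has no homology in degrees `j`
with `2 j < 3 i`, for all `S`. Starting there and lowering the order of the derivative one by one
(`Cog.step`), every class in `H_{k+i}((Dⁱ C)(S))` that dies on all subsets with one point less is zero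
for `S` large, and consequently (`Cog.sur`, `Sur.boundary`) for `|S| ≥ 4 k` there are short exact
sequences
`0 → H_{k+i+1}((Dⁱ⁺¹ C)(S)) → H_{k+i}((Dⁱ C)(S ⊔ pt)) → H_{k+i}((Dⁱ C)(S)) → 0`.
So the dimension of the left-hand group is the difference function of that of `H_{k+i}(Dⁱ C)`. The
groups vanish for `i > 2 k`, and `2 k + 1` discrete integrations give a polynomial of degree at most
`2 k` valid for `n ≥ 4 k`, which contains the required range.

Homology is developed here for a concrete model of singular chains; over a field, the cohomology of
the statement is the dual of this homology (`SCoh_dual`).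
-/


open CategoryTheory AlgebraicTopology

/-- The configuration space of `n` labeled points in `X`: injective maps
`Fin n → X`, topologized as a subspace of the product `X^{Fin n}`. -/
def PConf (n : ℕ) (X : Type) [TopologicalSpace X] : Type :=
  {c : Fin n → X // Function.Injective c}

instance (n : ℕ) (X : Type) [TopologicalSpace X] : TopologicalSpace (PConf n X) :=
  instTopologicalSpaceSubtype

/-- The singular chain complex of a topological space with coefficients in a field `F`:
the alternating face map complex of the free simplicial `F`-module on the singular
simplicial set. -/
noncomputable def singularChains (F : Type) [Field F] (X : TopCat) :
    ChainComplex (ModuleCat F) ℕ :=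
  (alternatingFaceMapComplex (ModuleCat F)).obj
    (((SimplicialObject.whiskering _ _).obj (ModuleCat.free F)).obj (TopCat.toSSet.obj X))

/-- The singular cochain complex with coefficients in `F`, obtained by applying
`Hom_F(-, F)` to the singular chain complex. -/
noncomputable def singularCochains (F : Type) [Field F] (X : TopCat) :
    HomologicalComplex (ModuleCat F) (ComplexShape.down ℕ).symm :=
  (Functor.mapHomologicalComplex
      ((linearYoneda F (ModuleCat F)).obj (ModuleCat.of F F)) _).obj
    (singularChains F X).op

/-- Singular cohomology `H^k(X; F)` with coefficients in a field `F`. -/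
noncomputable def SCoh (F : Type) [Field F] (k : ℕ) (X : TopCat) : ModuleCat F :=
  (singularCochains F X).homology k

/-! ### Graded complexes, cones and vanishing ranges -/

/-- A chain complex over `F`, encoded by its total space: a module `X` with a differential `d` and
a family `gr` of submodules of homogeneous elements (no direct sum decomposition is required). -/
structure Cx (F : Type) [Field F] where
  X : Type
  [acg : AddCommGroup X]
  [mod : Module F X]
  d : X →ₗ[F] X
  gr : ℤ → Submodule F X
  dd : ∀ x, d (d x) = 0
  d_gr : ∀ j x, x ∈ gr j → d x ∈ gr (j - 1)

namespace Cx

variable {F : Type} [Field F]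

instance (A : Cx F) : AddCommGroup A.X := A.acg
instance (A : Cx F) : Module F A.X := A.mod

attribute [simp] Cx.dd

/-- A chain map: a linear map commuting with `d` and preserving homogeneous elements. -/
@[ext]
structure Hom (A B : Cx F) where
  f : A.X →ₗ[F] B.X
  comm : ∀ x, f (A.d x) = B.d (f x)
  gr : ∀ j x, x ∈ A.gr j → f x ∈ B.gr j

instance : Category (Cx F) where
  Hom := Hom
  id A := ⟨LinearMap.id, fun _ => rfl, fun _ _ h => h⟩
  comp u v := ⟨v.f ∘ₗ u.f, fun x => by simp [u.comm, v.comm], fun j x h => v.gr j _ (u.gr j x h)⟩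

@[ext] lemma hom_ext {A B : Cx F} {u v : A ⟶ B} (h : ∀ x, u.f x = v.f x) : u = v :=
  Hom.ext (LinearMap.ext h)

@[simp] lemma id_f (A : Cx F) (x : A.X) : Hom.f (𝟙 A) x = x := rfl
@[simp] lemma comp_f {A B C : Cx F} (u : A ⟶ B) (v : B ⟶ C) (x : A.X) :
    Hom.f (u ≫ v) x = v.f (u.f x) := rfl

/-- The mapping cone of a chain map. -/
def cone {A B : Cx F} (u : A ⟶ B) : Cx F where
  X := A.X × B.X
  d := LinearMap.prod (-(A.d ∘ₗ LinearMap.fst F A.X B.X))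
    (u.f ∘ₗ LinearMap.fst F A.X B.X + B.d ∘ₗ LinearMap.snd F A.X B.X)
  gr j := (A.gr (j - 1)).prod (B.gr j)
  dd x := by
    ext <;> simp [u.comm]
  d_gr j x h := by
    refine ⟨?_, ?_⟩
    · simpa using A.d_gr _ _ h.1
    · exact Submodule.add_mem _ (u.gr _ _ h.1) (B.d_gr _ _ h.2)

lemma cone_d {A B : Cx F} (u : A ⟶ B) (a : A.X) (b : B.X) :
    (cone u).d ((a, b) : A.X × B.X) = ((-A.d a, u.f a + B.d b) : A.X × B.X) := rfl

lemma mem_cone_gr {A B : Cx F} (u : A ⟶ B) (j : ℤ) (a : A.X) (b : B.X) :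
    ((a, b) : A.X × B.X) ∈ (cone u).gr j ↔ a ∈ A.gr (j - 1) ∧ b ∈ B.gr j := Iff.rfl

/-- Functoriality of the mapping cone for commutative squares. -/
def coneMap {A B A' B' : Cx F} {u : A ⟶ B} {u' : A' ⟶ B'} (a : A ⟶ A') (b : B ⟶ B')
    (h : u ≫ b = a ≫ u') : cone u ⟶ cone u' where
  f := LinearMap.prodMap a.f b.f
  comm x := by
    have := fun y => LinearMap.congr_fun (congrArg Hom.f h) y
    obtain ⟨x, y⟩ := x
    have h1 := this x
    change b.f (u.f x) = u'.f (a.f x) at h1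
    change ((a.f (-A.d x), b.f (u.f x + B.d y)) : A'.X × B'.X) =
      (-A'.d (a.f x), u'.f (a.f x) + B'.d (b.f y))
    simp [a.comm, b.comm, h1]
  gr j x hx := ⟨a.gr _ _ hx.1, b.gr _ _ hx.2⟩

lemma coneMap_f {A B A' B' : Cx F} {u : A ⟶ B} {u' : A' ⟶ B'} (a : A ⟶ A') (b : B ⟶ B')
    (h : u ≫ b = a ≫ u') (x : A.X) (y : B.X) :
    (coneMap a b h).f ((x, y) : A.X × B.X) = ((a.f x, b.f y) : A'.X × B'.X) := rfl

/-- `A.Van m`: the homology of `A` vanishes in all degrees `j` with `2 * j < m`. -/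
def Van (A : Cx F) (m : ℤ) : Prop :=
  ∀ j : ℤ, 2 * j < m → ∀ z ∈ A.gr j, A.d z = 0 → ∃ w ∈ A.gr (j + 1), A.d w = z

lemma Van.mono {A : Cx F} {m m' : ℤ} (h : A.Van m) (hm : m' ≤ m) : A.Van m' :=
  fun j hj => h j (by omega)

lemma Van.of_iso {A B : Cx F} {m : ℤ} (h : A.Van m) (e : A ≅ B) : B.Van m := by
  intro j hj z hz dz
  have e2 : ∀ y, e.hom.f (e.inv.f y) = y := fun y =>
    LinearMap.congr_fun (congrArg Hom.f e.inv_hom_id) y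
  obtain ⟨w, hw, hd⟩ := h j hj (e.inv.f z) (e.inv.gr _ _ hz) (by rw [← e.inv.comm, dz, map_zero])
  exact ⟨e.hom.f w, e.hom.gr _ _ hw, by rw [← e.hom.comm, hd, e2]⟩

lemma van_iff_of_iso {A B : Cx F} {m : ℤ} (e : A ≅ B) : A.Van m ↔ B.Van m :=
  ⟨fun h => h.of_iso e, fun h => h.of_iso e.symm⟩

/-- Vanishing for the cone: `u` is surjective in the stated range and injective one degree lower,
phrased on elements. -/
lemma van_cone_elim {A B : Cx F} {u : A ⟶ B} {m : ℤ} (h : (cone u).Van m) {j : ℤ} (hj : 2 * j < m)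
    {a : A.X} {b : B.X} (ha : a ∈ A.gr (j - 1)) (hb : b ∈ B.gr j) (da : A.d a = 0)
    (db : u.f a + B.d b = 0) :
    ∃ a' ∈ A.gr j, ∃ b' ∈ B.gr (j + 1), A.d a' = -a ∧ u.f a' + B.d b' = b := by
  obtain ⟨⟨a', b'⟩, hw, hd⟩ := h j hj (a, b) ⟨ha, hb⟩ (by rw [cone_d, da, db]; simp; rfl)
  rw [cone_d] at hd
  refine ⟨a', ?_, b', hw.2, ?_, (Prod.ext_iff.1 hd).2⟩
  · have := hw.1
    simpa using this
  · have : -A.d a' = a := (Prod.ext_iff.1 hd).1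
    rw [← this, neg_neg]

lemma van_cone_intro {A B : Cx F} {u : A ⟶ B} {m : ℤ}
    (h : ∀ j, 2 * j < m → ∀ a ∈ A.gr (j - 1), ∀ b ∈ B.gr j, A.d a = 0 → u.f a + B.d b = 0 →
      ∃ a' ∈ A.gr j, ∃ b' ∈ B.gr (j + 1), A.d a' = -a ∧ u.f a' + B.d b' = b) :
    (cone u).Van m := by
  rintro j hj ⟨a, b⟩ ⟨ha, hb⟩ hd
  rw [cone_d] at hd
  have h1 : -A.d a = 0 := (Prod.ext_iff.1 hd).1
  have h2 : u.f a + B.d b = 0 := (Prod.ext_iff.1 hd).2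
  obtain ⟨a', ha', b', hb', e1, e2⟩ := h j hj a ha b hb (by simpa using h1) h2
  refine ⟨(a', b'), ⟨by simpa using ha', hb'⟩, ?_⟩
  rw [cone_d, e1, e2, neg_neg]

/-- Surjectivity form of a vanishing cone. -/
lemma van_cone_surj {A B : Cx F} {u : A ⟶ B} {m : ℤ} (h : (cone u).Van m) {j : ℤ} (hj : 2 * j < m)
    {b : B.X} (hb : b ∈ B.gr j) (db : B.d b = 0) :
    ∃ a' ∈ A.gr j, ∃ b' ∈ B.gr (j + 1), A.d a' = 0 ∧ u.f a' + B.d b' = b := by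
  obtain ⟨a', h1, b', h2, h3, h4⟩ := van_cone_elim h hj (zero_mem _) hb (map_zero _) (by simp [db])
  exact ⟨a', h1, b', h2, by simpa using h3, h4⟩

lemma van_cone_of_id (A : Cx F) (m : ℤ) : (cone (𝟙 A)).Van m := by
  refine van_cone_intro fun j hj a ha b hb da db => ⟨b, hb, 0, zero_mem _, ?_, by simp⟩
  rw [id_f] at db
  exact (neg_eq_of_add_eq_zero_right db).symm

lemma van_cone1 {A B C : Cx F} {u : A ⟶ B} {v : B ⟶ C} {m : ℤ} (hu : (cone u).Van m)
    (hv : (cone v).Van m) : (cone (u ≫ v)).Van m := by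
  refine van_cone_intro fun j hj a ha c hc da dc => ?_
  rw [comp_f] at dc
  obtain ⟨b, hb, c', hc', e1, e2⟩ := van_cone_elim hv hj (u.gr _ _ ha) hc
    (by rw [← u.comm, da, map_zero]) dc
  obtain ⟨a', ha', b', hb', e3, e4⟩ := van_cone_elim hu hj ha hb da (by rw [e1]; simp)
  refine ⟨a', ha', v.f b' + c', add_mem (v.gr _ _ hb') hc', e3, ?_⟩
  rw [comp_f, map_add, ← add_assoc, ← v.comm, ← map_add, e4, e2]

lemma van_cone2 {A B C : Cx F} {u : A ⟶ B} {v : B ⟶ C} {m m' : ℤ} (huv : (cone (u ≫ v)).Van m)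
    (hu : (cone u).Van m') (hm : m - 2 ≤ m') : (cone v).Van m := by
  refine van_cone_intro fun j hj b hb c hc db dc => ?_
  obtain ⟨a, ha, b', hb', da, e1⟩ := van_cone_surj hu (j := j - 1) (by omega) hb db
  rw [sub_add_cancel] at hb'
  obtain ⟨a', ha', c', hc', e2, e3⟩ := van_cone_elim huv hj (a := a) (b := c + v.f b') ha
    (add_mem hc (v.gr _ _ hb')) da (by
      rw [comp_f, map_add, ← v.comm, ← dc, ← e1, map_add]; abel)
  refine ⟨u.f a' - b', sub_mem (u.gr _ _ ha') hb', c', hc', ?_, ?_⟩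
  · rw [map_sub, ← u.comm, e2, map_neg, ← e1]; abel
  · rw [comp_f] at e3
    rw [map_sub, sub_add_eq_add_sub, e3]; abel

lemma van_cone3 {A B C : Cx F} {u : A ⟶ B} {v : B ⟶ C} {m m' : ℤ} (huv : (cone (u ≫ v)).Van m)
    (hv : (cone v).Van m') (hm : m + 2 ≤ m') : (cone u).Van m := by
  refine van_cone_intro fun j hj a ha b hb da db => ?_
  obtain ⟨a', ha', c', hc', e2, e3⟩ := van_cone_elim huv hj (a := a) (b := v.f b) ha
    (v.gr _ _ hb) da (by rw [comp_f, ← v.comm, ← map_add, db, map_zero])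
  rw [comp_f] at e3
  obtain ⟨b', hb', c'', hc'', e4, e5⟩ := van_cone_elim hv (j := j + 1) (by omega)
    (a := u.f a' - b) (b := c') (by simpa using sub_mem (u.gr _ _ ha') hb) hc'
    (by rw [map_sub, ← u.comm, e2, map_neg, ← sub_eq_zero.2 db.symm]; abel)
    (by rw [map_sub, ← e3]; abel)
  exact ⟨a', ha', b', hb', e2, by rw [e4]; abel⟩

lemma van_cone_v1 {A B : Cx F} {u : A ⟶ B} {m m' : ℤ} (hA : A.Van m') (hB : B.Van m)
    (hm : m - 2 ≤ m') : (cone u).Van m := by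
  refine van_cone_intro fun j hj a ha b hb da db => ?_
  obtain ⟨a', ha', e1⟩ := hA (j - 1) (by omega) a ha da
  rw [sub_add_cancel] at ha'
  obtain ⟨b', hb', e2⟩ := hB j hj (b + u.f a') (add_mem hb (u.gr _ _ ha'))
    (by rw [map_add, ← u.comm, e1, add_comm, db])
  exact ⟨-a', neg_mem ha', b', hb', by rw [map_neg, e1], by rw [map_neg, e2]; abel⟩

lemma van_cone_v2 {A B : Cx F} {u : A ⟶ B} {m : ℤ} (hA : A.Van m) (hu : (cone u).Van m) :
    B.Van m := by
  intro j hj b hb db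
  obtain ⟨a, ha, b', hb', e1, e2⟩ := van_cone_surj hu hj hb db
  obtain ⟨a', ha', e3⟩ := hA j hj a ha e1
  exact ⟨u.f a' + b', add_mem (u.gr _ _ ha') hb', by rw [map_add, ← u.comm, e3, e2]⟩

lemma van_cone_v3 {A B : Cx F} {u : A ⟶ B} {m m' : ℤ} (hB : B.Van m) (hu : (cone u).Van m')
    (hm : m + 2 ≤ m') : A.Van m := by
  intro j hj a ha da
  obtain ⟨b, hb, e1⟩ := hB j hj (u.f a) (u.gr _ _ ha) (by rw [← u.comm, da, map_zero])
  obtain ⟨a', ha', b', hb', e2, -⟩ := van_cone_elim hu (j := j + 1) (by omega) (a := a) (b := -b)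
    (by simpa using ha) (neg_mem hb) da (by rw [map_neg, e1]; abel)
  exact ⟨-a', neg_mem ha', by rw [map_neg, e2, neg_neg]⟩

lemma van_cone_of_iso {A B : Cx F} (u : A ⟶ B) [IsIso u] (m : ℤ) : (cone u).Van m := by
  refine van_cone_intro fun j hj a ha b hb da db => ?_
  have e1 : ∀ y, u.f ((inv u).f y) = y := fun y =>
    LinearMap.congr_fun (congrArg Hom.f (IsIso.inv_hom_id u)) y
  have e2 : ∀ y, (inv u).f (u.f y) = y := fun y =>
    LinearMap.congr_fun (congrArg Hom.f (IsIso.hom_inv_id u)) y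
  refine ⟨(inv u).f b, (inv u).gr _ _ hb, 0, zero_mem _, ?_, by simp [e1]⟩
  rw [← (inv u).comm, eq_neg_of_add_eq_zero_right db, map_neg, e2]

/-- Replacing a map along a commutative square whose vertical maps are isomorphisms. -/
def coneIso {A B A' B' : Cx F} {u : A ⟶ B} {u' : A' ⟶ B'} (a : A ≅ A') (b : B ≅ B')
    (h : u ≫ b.hom = a.hom ≫ u') : cone u ≅ cone u' where
  hom := coneMap a.hom b.hom h
  inv := coneMap a.inv b.inv (by rw [Iso.comp_inv_eq, Category.assoc, h, Iso.inv_hom_id_assoc])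
  hom_inv_id := by
    ext ⟨x, y⟩
    exact Prod.ext (LinearMap.congr_fun (congrArg Hom.f a.hom_inv_id) x)
      (LinearMap.congr_fun (congrArg Hom.f b.hom_inv_id) y)
  inv_hom_id := by
    ext ⟨x, y⟩
    exact Prod.ext (LinearMap.congr_fun (congrArg Hom.f a.inv_hom_id) x)
      (LinearMap.congr_fun (congrArg Hom.f b.inv_hom_id) y)

section transpose

variable {A B A' B' : Cx F} {u' : A' ⟶ B'} {a : A ⟶ A'} {b : B ⟶ B'} {u : A ⟶ B}

/-- The iterated cone of a commutative square does not depend on the order of the two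
directions. -/
def transp (h : u ≫ b = a ≫ u') : cone (coneMap a b h) ⟶ cone (coneMap u u' h.symm) where
  f :=
    { toFun := fun x => (((-x.1.1, x.2.1), (x.1.2, x.2.2)) : (A.X × A'.X) × (B.X × B'.X))
      map_add' := fun x y => by
        refine Prod.ext (Prod.ext ?_ rfl) rfl
        exact neg_add _ _
      map_smul' := fun c x => by
        refine Prod.ext (Prod.ext ?_ rfl) rfl
        exact (smul_neg _ _).symm }
  comm x := by
    obtain ⟨⟨x1, x2⟩, ⟨y1, y2⟩⟩ := x
    refine Prod.ext (Prod.ext ?_ ?_) (Prod.ext ?_ ?_)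
    · change -(-(-A.d x1)) = -(-A.d (-x1)); simp
    · change a.f x1 + -A'.d y1 = -(a.f (-x1) + A'.d y1); simp; abel
    · change -(u.f x1 + B.d x2) = u.f (-x1) + -B.d x2; simp; abel
    · change b.f x2 + (u'.f y1 + B'.d y2) = u'.f y1 + (b.f x2 + B'.d y2); abel
  gr j x hx := ⟨⟨neg_mem hx.1.1, hx.2.1⟩, ⟨hx.1.2, hx.2.2⟩⟩

lemma transp_transp (h : u ≫ b = a ≫ u') : transp h ≫ transp h.symm = 𝟙 _ := by
  ext ⟨⟨x1, x2⟩, ⟨y1, y2⟩⟩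
  exact Prod.ext (Prod.ext (neg_neg x1) rfl) rfl

/-- `transp` as an isomorphism. -/
def transpIso (h : u ≫ b = a ≫ u') : cone (coneMap a b h) ≅ cone (coneMap u u' h.symm) :=
  ⟨transp h, transp h.symm, transp_transp h, transp_transp h.symm⟩

end transpose

/-- The inductive step of the Mayer–Vietoris argument: two squares with acyclic total cone and a
map between them whose cones vanish at three corners. -/
lemma mv_step {a₀ a₁ a₂ a₃ b₀ b₁ b₂ b₃ : Cx F} {i₁ : a₀ ⟶ a₁} {i₂ : a₀ ⟶ a₂} {k₁ : a₁ ⟶ a₃}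
    {k₂ : a₂ ⟶ a₃} {i₁' : b₀ ⟶ b₁} {i₂' : b₀ ⟶ b₂} {k₁' : b₁ ⟶ b₃} {k₂' : b₂ ⟶ b₃}
    {x₀ : a₀ ⟶ b₀} {x₁ : a₁ ⟶ b₁} {x₂ : a₂ ⟶ b₂} {x₃ : a₃ ⟶ b₃} {m : ℤ}
    (ha : i₁ ≫ k₁ = i₂ ≫ k₂) (hb : i₁' ≫ k₁' = i₂' ≫ k₂')
    (c₁ : x₀ ≫ i₁' = i₁ ≫ x₁) (c₂ : x₀ ≫ i₂' = i₂ ≫ x₂)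
    (c₃ : x₁ ≫ k₁' = k₁ ≫ x₃) (c₄ : x₂ ≫ k₂' = k₂ ≫ x₃)
    (hA : ∀ m, (cone (coneMap i₂ k₁ ha)).Van m) (hB : ∀ m, (cone (coneMap i₂' k₁' hb)).Van m)
    (h₀ : (cone x₀).Van m) (h₁ : (cone x₁).Van m) (h₂ : (cone x₂).Van m) : (cone x₃).Van m := by
  -- `p → q → s` and `p → r → s` with `p = cone i₁`, `q = cone k₂`, `r = cone i₁'`, `s = cone k₂'`
  have pr : (cone (coneMap x₀ x₁ c₁.symm)).Van m :=
    (van_cone_v1 (u := coneMap i₁ i₁' c₁) (h₀.mono (m' := m - 2) (by omega)) h₁ le_rfl).of_iso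
      (transpIso _)
  have e : coneMap x₀ x₁ c₁.symm ≫ coneMap i₂' k₁' hb = coneMap i₂ k₁ ha ≫ coneMap x₂ x₃ c₄.symm := by
    ext ⟨y, z⟩
    refine Prod.ext ?_ ?_
    · exact LinearMap.congr_fun (congrArg Hom.f c₂) y
    · exact LinearMap.congr_fun (congrArg Hom.f c₃) z
  have ps := van_cone1 pr (hB m)
  rw [e] at ps
  have qs := van_cone2 ps (hA (m - 2)) le_rfl
  exact van_cone_v2 h₂ (qs.of_iso (transpIso _))

/-- The same step for a square of complexes. -/
lemma mv_step_single {a₀ a₁ a₂ a₃ : Cx F} {i₁ : a₀ ⟶ a₁} {i₂ : a₀ ⟶ a₂} {k₁ : a₁ ⟶ a₃}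
    {k₂ : a₂ ⟶ a₃} {m : ℤ} (ha : i₁ ≫ k₁ = i₂ ≫ k₂)
    (hA : ∀ m, (cone (coneMap i₂ k₁ ha)).Van m)
    (h₀ : a₀.Van m) (h₁ : a₁.Van m) (h₂ : a₂.Van m) : a₃.Van m :=
  van_cone_v2 h₂ (van_cone_v2 (van_cone_v1 (u := i₁) (h₀.mono (m' := m - 2) (by omega)) h₁ le_rfl)
    (hA m))

end Cx

/-! ### Diagrams of complexes and iterated cones along shifts -/

section diagrams

open Cx

variable {F : Type} [Field F] {J : Type 1} [Category.{0} J]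

/-- The pointwise cone of a map of diagrams of complexes. -/
@[simps]
def coneN {A B : J ⥤ Cx F} (α : A ⟶ B) : J ⥤ Cx F where
  obj j := cone (α.app j)
  map f := coneMap (A.map f) (B.map f) (α.naturality f).symm

/-- Functoriality of `coneN`. -/
@[simps]
def coneNMap {A B A' B' : J ⥤ Cx F} {α : A ⟶ B} {α' : A' ⟶ B'} (a : A ⟶ A') (b : B ⟶ B')
    (h : α ≫ b = a ≫ α') : coneN α ⟶ coneN α' where
  app j := coneMap (a.app j) (b.app j) (NatTrans.congr_app h j)
  naturality j j' f := by
    ext ⟨x, y⟩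
    exact Prod.ext (LinearMap.congr_fun (congrArg Hom.f (a.naturality f)) x)
      (LinearMap.congr_fun (congrArg Hom.f (b.naturality f)) y)

/-- `coneNMap` on isomorphisms. -/
def coneNIso {A B A' B' : J ⥤ Cx F} {α : A ⟶ B} {α' : A' ⟶ B'} (a : A ≅ A') (b : B ≅ B')
    (h : α ≫ b.hom = a.hom ≫ α') : coneN α ≅ coneN α' :=
  NatIso.ofComponents
    (fun j => coneIso (a.app j) (b.app j) (NatTrans.congr_app h j))
    (fun f => (coneNMap a.hom b.hom h).naturality f)

/-- An endofunctor of the indexing category together with a map to the identity. -/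
structure Shift (J : Type 1) [Category.{0} J] where
  s : J ⥤ J
  η : s ⟶ 𝟭 J

/-- The map `A ∘ s → A` induced by a shift. -/
@[simps]
def Shift.eta (s : Shift J) (A : J ⥤ Cx F) : s.s ⋙ A ⟶ A where
  app j := A.map (s.η.app j)
  naturality j j' f := by
    have := s.η.naturality f
    simp only [Functor.comp_map, ← A.map_comp, this]
    rfl

/-- The derivative of a diagram `A` along a shift: the cone of `A ∘ s → A`. -/
@[simps]
def Shift.D (s : Shift J) : (J ⥤ Cx F) ⥤ (J ⥤ Cx F) where
  obj A := coneN (s.eta A)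
  map {A B} α := coneNMap (Functor.whiskerLeft s.s α) α (by
    ext j : 2
    exact (α.naturality (s.η.app j)))

/-- Iterated derivatives along the word `w`, evaluated at the object `j₀`. -/
def T (j₀ : J) : List (Shift J) → ((J ⥤ Cx F) ⥤ Cx F)
  | [] => (evaluation J (Cx F)).obj j₀
  | s :: w => s.D ⋙ T j₀ w

/-- Derivatives commute with cones. -/
def Shift.transpD (s : Shift J) {A B : J ⥤ Cx F} (α : A ⟶ B) :
    s.D.obj (coneN α) ≅ coneN (s.D.map α) :=
  NatIso.ofComponents (fun j => transpIso (α.naturality (s.η.app j)).symm)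
    (fun f => by ext ⟨⟨x1, x2⟩, ⟨y1, y2⟩⟩; exact Prod.ext (Prod.ext (map_neg _ _).symm rfl) rfl)

variable {j₀ : J}

/-- Iterated derivatives commute with cones. -/
def ccT (j₀ : J) : ∀ (w : List (Shift J)) {A B : J ⥤ Cx F} (α : A ⟶ B),
    (T j₀ w).obj (coneN α) ≅ cone ((T j₀ w).map α)
  | [], _, _, _ => Iso.refl _
  | s :: w, _, _, α => (T j₀ w).mapIso (s.transpD α) ≪≫ ccT j₀ w (s.D.map α)

lemma T_sq_comm (w : List (Shift J)) {A B A' B' : J ⥤ Cx F} {α : A ⟶ B} {α' : A' ⟶ B'}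
    {a : A ⟶ A'} {b : B ⟶ B'} (h : α ≫ b = a ≫ α') :
    (T j₀ w).map α ≫ (T j₀ w).map b = (T j₀ w).map a ≫ (T j₀ w).map α' := by
  rw [← Functor.map_comp, h, Functor.map_comp]

lemma ccT_naturality (w : List (Shift J)) : ∀ {A B A' B' : J ⥤ Cx F} {α : A ⟶ B} {α' : A' ⟶ B'}
    (a : A ⟶ A') (b : B ⟶ B') (h : α ≫ b = a ≫ α'),
    (T j₀ w).map (coneNMap a b h) ≫ (ccT j₀ w α').hom =
      (ccT j₀ w α).hom ≫ coneMap ((T j₀ w).map a) ((T j₀ w).map b) (T_sq_comm w h) := by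
  induction w with
  | nil => intros; rfl
  | cons s w ih =>
    intro A B A' B' α α' a b h
    have h' : s.D.map α ≫ s.D.map b = s.D.map a ≫ s.D.map α' := by
      rw [← Functor.map_comp, h, Functor.map_comp]
    have e := ih (s.D.map a) (s.D.map b) h'
    have e2 : s.D.map (coneNMap a b h) ≫ (s.transpD α').hom =
        (s.transpD α).hom ≫ coneNMap (s.D.map a) (s.D.map b) h' := by
      ext j ⟨⟨x1, x2⟩, ⟨y1, y2⟩⟩
      exact Prod.ext (Prod.ext (map_neg _ _).symm rfl) rfl
    change (T j₀ w).map (s.D.map _) ≫ (T j₀ w).map _ ≫ (ccT j₀ w _).hom =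
      ((T j₀ w).map _ ≫ (ccT j₀ w _).hom) ≫ _
    rw [← Functor.map_comp_assoc, e2, Functor.map_comp_assoc, e]
    exact (Category.assoc _ _ _).symm

/-- Iterated derivatives only depend on the values at objects reachable from `j₀`. -/
lemma T_van (P : J → Prop) (w : List (Shift J)) {m : ℤ} (h0 : P j₀)
    (hP : ∀ s ∈ w, ∀ j, P j → P (s.s.obj j)) :
    ∀ {A : J ⥤ Cx F}, (∀ j, P j → (A.obj j).Van m) → ((T j₀ w).obj A).Van m := by
  induction w with
  | nil => exact fun h => h _ h0
  | cons s w ih =>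
    intro A h
    exact ih (fun t ht => hP t (List.mem_cons_of_mem _ ht)) (A := s.D.obj A) fun j hj =>
      van_cone_v1 (m' := m) (h _ (hP s List.mem_cons_self j hj)) (h j hj) (by omega)

lemma T_van' (w : List (Shift J)) {m : ℤ} {A : J ⥤ Cx F} (h : ∀ j, (A.obj j).Van m) :
    ((T j₀ w).obj A).Van m :=
  T_van (fun _ => True) w trivial (fun _ _ _ _ => trivial) fun j _ => h j

lemma T_coneN (w : List (Shift J)) {m : ℤ} {A B : J ⥤ Cx F} (α : A ⟶ B) :
    ((T j₀ w).obj (coneN α)).Van m ↔ (cone ((T j₀ w).map α)).Van m :=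
  van_iff_of_iso (ccT j₀ w α)

lemma T_cone_van (w : List (Shift J)) {m : ℤ} {A B : J ⥤ Cx F} (α : A ⟶ B)
    (h : ∀ j, (cone (α.app j)).Van m) : (cone ((T j₀ w).map α)).Van m :=
  (T_coneN w α).1 (T_van' w h)

lemma T_cons (s : Shift J) (w : List (Shift J)) {m : ℤ} {A : J ⥤ Cx F} :
    ((T j₀ (s :: w)).obj A).Van m ↔ (cone ((T j₀ w).map (s.eta A))).Van m :=
  T_coneN w (s.eta A)

lemma T_sq (w : List (Shift J)) {m : ℤ} {A B A' B' : J ⥤ Cx F} {α : A ⟶ B} {α' : A' ⟶ B'}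
    {a : A ⟶ A'} {b : B ⟶ B'} (h : α ≫ b = a ≫ α')
    (hv : ∀ j, (cone (coneMap (a.app j) (b.app j) (NatTrans.congr_app h j))).Van m) :
    (cone (coneMap ((T j₀ w).map a) ((T j₀ w).map b) (T_sq_comm w h))).Van m :=
  (T_cone_van w (coneNMap a b h) hv).of_iso
    (coneIso (ccT j₀ w α) (ccT j₀ w α') (ccT_naturality w a b h))

lemma T_append (w w' : List (Shift J)) :
    ∀ A : J ⥤ Cx F, (T j₀ (w ++ w')).obj A = (T j₀ w').obj (w.foldl (fun A s => s.D.obj A) A) := by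
  induction w with
  | nil => exact fun A => rfl
  | cons s w ih => exact fun A => ih (s.D.obj A)

/-- `B` is a directed union of the complexes `A i`. -/
structure DU {ι : Type} [Preorder ι] {A : ι → Cx F} {B : Cx F} (φ : ∀ i, A i ⟶ B) : Prop where
  inj : ∀ i, Function.Injective (φ i).f
  mono : ∀ i i', i ≤ i' → ∀ j, ∀ x ∈ (A i).gr j, ∃ x' ∈ (A i').gr j, (φ i').f x' = (φ i).f x
  surj : ∀ j, ∀ x ∈ B.gr j, ∃ i, ∃ x' ∈ (A i).gr j, (φ i).f x' = x

section

variable {ι : Type} [Preorder ι]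

lemma DU.van {A : ι → Cx F} {B : Cx F} {φ : ∀ i, A i ⟶ B} (h : DU φ) {m : ℤ}
    (hA : ∀ i, (A i).Van m) : B.Van m := by
  intro j hj z hz dz
  obtain ⟨i, z', hz', rfl⟩ := h.surj j z hz
  obtain ⟨w, hw, rfl⟩ := hA i j hj z' hz' (h.inj i (by rw [(φ i).comm, dz, map_zero]))
  exact ⟨(φ i).f w, (φ i).gr _ _ hw, ((φ i).comm w).symm⟩

lemma DU.cone [IsDirectedOrder ι] {A A' : ι → Cx F} {B B' : Cx F} {φ : ∀ i, A i ⟶ B} {φ' : ∀ i, A' i ⟶ B'}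
    (h : DU φ) (h' : DU φ') {f : ∀ i, A i ⟶ A' i} {g : B ⟶ B'} (c : ∀ i, f i ≫ φ' i = φ i ≫ g) :
    DU (fun i => coneMap (φ i) (φ' i) (c i)) where
  inj i := fun ⟨x, y⟩ ⟨x', y'⟩ e =>
    Prod.ext (h.inj i (Prod.ext_iff.1 e).1) (h'.inj i (Prod.ext_iff.1 e).2)
  mono i i' hi j := fun ⟨x, y⟩ hx => by
    obtain ⟨a, ha, ea⟩ := h.mono i i' hi _ x hx.1
    obtain ⟨b, hb, eb⟩ := h'.mono i i' hi _ y hx.2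
    exact ⟨(a, b), ⟨ha, hb⟩, Prod.ext ea eb⟩
  surj j := fun ⟨x, y⟩ hx => by
    obtain ⟨i₁, a, ha, ea⟩ := h.surj _ x hx.1
    obtain ⟨i₂, b, hb, eb⟩ := h'.surj _ y hx.2
    obtain ⟨i, h1, h2⟩ := exists_ge_ge i₁ i₂
    obtain ⟨a, ha, ea'⟩ := h.mono _ _ h1 _ a ha
    obtain ⟨b, hb, eb'⟩ := h'.mono _ _ h2 _ b hb
    exact ⟨i, (a, b), ⟨ha, hb⟩, Prod.ext (ea'.trans ea) (eb'.trans eb)⟩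

lemma DU.iterate [IsDirectedOrder ι] (w : List (Shift J)) : ∀ {A : ι → J ⥤ Cx F} {B : J ⥤ Cx F} {φ : ∀ i, A i ⟶ B},
    (∀ j, DU fun i => (φ i).app j) → DU fun i => (T j₀ w).map (φ i) := by
  induction w with
  | nil => exact fun h => h j₀
  | cons s w ih =>
    intro A B φ h
    exact ih fun j => (h (s.s.obj j)).cone (h j) fun i => (φ i).naturality (s.η.app j)

end

end diagrams

/-! ### Formal ordered simplices -/

section lists

variable (F : Type) [Field F]

/-- Formal linear combinations of ordered simplices, given by their vertex lists. The empty list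
is the augmentation. -/
abbrev LC (α : Type) : Type := List α →₀ F

variable {F} {α β : Type}

/-- Adjoining a vertex in front. -/
noncomputable abbrev consL (v : α) : LC F α →ₗ[F] LC F α := Finsupp.lmapDomain F F (List.cons v)

/-- The map on formal simplices induced by a map of vertices. -/
noncomputable abbrev mapL (f : α → β) : LC F α →ₗ[F] LC F β := Finsupp.lmapDomain F F (List.map f)

/-- The boundary of an ordered simplex, by recursion on the number of vertices. -/
noncomputable def dl (F : Type) [Field F] : List α → LC F α
  | [] => 0
  | v :: l => Finsupp.single l 1 - consL v (dl F l)

/-- The boundary operator on formal simplices. -/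
noncomputable def dL : LC F α →ₗ[F] LC F α := Finsupp.linearCombination F (dl F)

@[simp] lemma dL_single (l : List α) : dL (Finsupp.single l (1 : F)) = dl F l := by simp [dL]

/-- Linear maps out of `LC` agree if they agree on lists. -/
lemma LC_ext {M : Type} [AddCommGroup M] [Module F M] {f g : LC F α →ₗ[F] M}
    (h : ∀ l, f (Finsupp.single l 1) = g (Finsupp.single l 1)) : f = g := by
  ext l; exact h l

@[simp] lemma consL_single (v : α) (l : List α) (c : F) :
    consL v (Finsupp.single l c) = Finsupp.single (v :: l) c := by simp [consL]

@[simp] lemma mapL_single (f : α → β) (l : List α) (c : F) :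
    mapL f (Finsupp.single l c) = Finsupp.single (l.map f) c := by simp [mapL]

lemma dL_consL (v : α) (x : LC F α) : dL (consL v x) = x - consL v (dL x) := by
  have : dL ∘ₗ consL v = (LinearMap.id - consL v ∘ₗ dL : LC F α →ₗ[F] LC F α) := by
    refine LC_ext fun l => ?_
    simp only [LinearMap.comp_apply, LinearMap.sub_apply, consL_single, dL_single, dl,
      LinearMap.id_apply]
  exact LinearMap.congr_fun this x

lemma mapL_consL (f : α → β) (v : α) (x : LC F α) :
    mapL f (consL v x) = consL (f v) (mapL f x) := by
  have : mapL f ∘ₗ consL v = (consL (f v) ∘ₗ mapL f : LC F α →ₗ[F] LC F β) :=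
    LC_ext fun l => by simp
  exact LinearMap.congr_fun this x

lemma dl_dl (l : List α) : dL (dl F l) = 0 := by
  induction l with
  | nil => simp [dl]
  | cons v l ih => simp only [dl, map_sub, dL_single, dL_consL, ih, map_zero, sub_zero, sub_self]

lemma dL_dL (x : LC F α) : dL (dL x) = 0 := by
  have : dL ∘ₗ dL = (0 : LC F α →ₗ[F] LC F α) := LC_ext fun l => by simp [dl_dl]
  exact LinearMap.congr_fun this x

lemma mapL_dl (f : α → β) (l : List α) : mapL f (dl F l) = dl F (l.map f) := by
  induction l with
  | nil => simp [dl]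
  | cons v l ih => simp only [dl, map_sub, mapL_single, mapL_consL, ih, List.map_cons]

lemma mapL_dL (f : α → β) (x : LC F α) : mapL f (dL x) = dL (mapL f x) := by
  have : mapL f ∘ₗ dL = (dL ∘ₗ mapL f : LC F α →ₗ[F] LC F β) :=
    LC_ext fun l => by simp only [LinearMap.comp_apply, dL_single, mapL_dl, mapL_single]
  exact LinearMap.congr_fun this x

lemma dl_eq_sum (l : List α) :
    dl F l = ∑ i : Fin l.length, (-1 : F) ^ (i : ℕ) • Finsupp.single (l.eraseIdx i) 1 := by
  induction l with
  | nil => simp [dl]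
  | cons v l ih =>
    rw [dl, ih, map_sum]
    change _ = ∑ i : Fin (l.length + 1), _
    rw [Fin.sum_univ_succ, sub_eq_add_neg, ← Finset.sum_neg_distrib]
    simp [pow_succ]

/-- `dl` is supported on the sublists obtained by deleting an entry. -/
lemma dl_mem (P : List α → Prop) (l : List α)
    (h : ∀ i : Fin l.length, P (l.eraseIdx i)) : dl F l ∈ Finsupp.supported F F {l | P l} := by
  rw [dl_eq_sum]
  exact sum_mem fun i _ => Submodule.smul_mem _ _ (Finsupp.single_mem_supported F _ (h i))

lemma mem_supported_of_forall {α β : Type} {P : α → Prop} {Q : β → Prop}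
    (f : (α →₀ F) →ₗ[F] (β →₀ F))
    (h : ∀ l, P l → f (Finsupp.single l 1) ∈ Finsupp.supported F F {l | Q l}) {x : α →₀ F}
    (hx : x ∈ Finsupp.supported F F {l | P l}) : f x ∈ Finsupp.supported F F {l | Q l} := by
  rw [Finsupp.supported_eq_span_single] at hx
  refine Submodule.span_induction (p := fun x _ => f x ∈ Finsupp.supported F F {l | Q l})
    ?_ ?_ ?_ ?_ hx
  · rintro _ ⟨l, hl, rfl⟩; exact h l hl
  · simp
  · intro x y _ _ hx hy; rw [map_add]; exact add_mem hx hy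
  · intro c x _ hx; rw [map_smul]; exact Submodule.smul_mem _ _ hx

/-- Two linear maps which agree on the lists satisfying `P` agree on combinations of these. -/
lemma eq_on_supported {M : Type} [AddCommGroup M] [Module F M] {α : Type} {P : α → Prop}
    (f g : (α →₀ F) →ₗ[F] M)
    (h : ∀ l, P l → f (Finsupp.single l 1) = g (Finsupp.single l 1)) {x : α →₀ F}
    (hx : x ∈ Finsupp.supported F F {l | P l}) : f x = g x := by
  rw [Finsupp.supported_eq_span_single] at hx
  refine LinearMap.eqOn_span ?_ hx
  rintro _ ⟨l, hl, rfl⟩; exact h l hl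

/-- The prism decomposition of `Δ × [0,1]`, with `p` and `q` the inclusions of the two ends. -/
noncomputable def prism (p q : α → β) : List α → LC F β
  | [] => 0
  | v :: l => Finsupp.single (p v :: q v :: l.map q) 1 - consL (p v) (prism p q l)

/-- Linear extension of `prism`. -/
noncomputable def prismL (p q : α → β) : LC F α →ₗ[F] LC F β :=
  Finsupp.linearCombination F (prism p q)

@[simp] lemma prismL_single (p q : α → β) (l : List α) :
    prismL p q (Finsupp.single l (1 : F)) = prism p q l := by simp [prismL]

lemma prismL_consL (p q : α → β) (v : α) (x : LC F α) :
    prismL p q (consL v x) = consL (p v) (consL (q v) (mapL q x)) - consL (p v) (prismL p q x) := by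
  have : prismL p q ∘ₗ consL v = (consL (p v) ∘ₗ consL (q v) ∘ₗ mapL q -
      consL (p v) ∘ₗ prismL p q : LC F α →ₗ[F] LC F β) := by
    refine LC_ext fun l => ?_
    simp only [LinearMap.comp_apply, LinearMap.sub_apply, consL_single, prismL_single, prism,
      mapL_single]
  exact LinearMap.congr_fun this x

lemma prism_boundary (p q : α → β) (l : List α) :
    dL (prism p q l) + prismL p q (dl F l) =
      Finsupp.single (l.map q) 1 - Finsupp.single (l.map p) 1 := by
  induction l with
  | nil => simp [prism, dl]
  | cons v l ih =>
    have e : dL (prism p q l) = Finsupp.single (l.map q) 1 - Finsupp.single (l.map p) 1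
      - prismL p q (dl F l) := by rw [← ih]; abel
    simp only [prism, dl, map_sub, dL_consL, dL_single, prismL_single, prismL_consL, e, dl,
      consL_single, List.map_cons, mapL_dl]
    abel

lemma prism_map {α' β' : Type} {p q : α → β} {p' q' : α' → β'} (a : α → α') (b : β → β')
    (hp : ∀ x, b (p x) = p' (a x)) (hq : ∀ x, b (q x) = q' (a x)) (l : List α) :
    mapL b (prism p q l) = (prism p' q' (l.map a) : LC F β') := by
  induction l with
  | nil => simp [prism]
  | cons v l ih =>
    simp only [prism, map_sub, mapL_single, mapL_consL, ih, List.map_cons, hp, hq, List.map_map]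
    rw [List.map_congr_left (g := q' ∘ a)]
    intro x _; exact hq x

lemma prism_length (p q : α → β) (l : List α) :
    prism p q l ∈ Finsupp.supported F F {l' : List β | l'.length = l.length + 1} := by
  induction l with
  | nil => simp [prism]
  | cons v l ih =>
    refine sub_mem (Finsupp.single_mem_supported F _ (by simp)) ?_
    refine mem_supported_of_forall (consL (p v)) (fun l' hl' => ?_) ih
    rw [consL_single]
    exact Finsupp.single_mem_supported F _ (by simpa using hl')

/-- Operators defined by recursion along boundaries: `op l = g l (op (∂ l))`. -/
noncomputable def opN (c : LC F α) (g : List α → LC F α → LC F α) : ℕ → List α → LC F α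
  | 0, _ => c
  | n + 1, l => g l (Finsupp.linearCombination F (opN c g n) (dl F l))

/-- Linear extension of `opN`, with the recursion depth given by the number of vertices. -/
noncomputable def opL (c : LC F α) (g : List α → LC F α → LC F α) : LC F α →ₗ[F] LC F α :=
  Finsupp.linearCombination F fun l => opN c g l.length l

lemma dl_length (n : ℕ) (l : List α) (h : l.length = n + 1) :
    dl F l ∈ Finsupp.supported F F {l : List α | l.length = n} :=
  dl_mem (fun l : List α => l.length = n) l fun i => by rw [List.length_eraseIdx_of_lt i.2, h]; rfl

lemma opL_single (c : LC F α) (g : List α → LC F α → LC F α) (l : List α) (hl : l ≠ []) :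
    opL c g (Finsupp.single l 1) = g l (opL c g (dl F l)) := by
  obtain ⟨v, l, rfl⟩ := List.exists_cons_of_ne_nil hl
  rw [opL, Finsupp.linearCombination_single, one_smul]
  change g _ _ = _
  congr 1
  refine eq_on_supported (P := fun l' : List α => l'.length = l.length) _ _ (fun l' h => ?_)
    (dl_length _ (v :: l) rfl)
  simp [h]

lemma opL_nil (c : LC F α) (g : List α → LC F α → LC F α) :
    opL c g (Finsupp.single [] 1) = c := by
  simp [opL, opN]

lemma opL_map {c : LC F α} {g : List α → LC F α → LC F α} {c' : LC F β}
    {g' : List β → LC F β → LC F β} (a : α → β) (hc : mapL a c = c')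
    (hg : ∀ l ≠ [], ∀ x, mapL a (g l x) = g' (l.map a) (mapL a x)) (x : LC F α) :
    mapL a (opL c g x) = opL c' g' (mapL a x) := by
  suffices h : ∀ n, ∀ l : List α, l.length = n →
      mapL a (opL c g (Finsupp.single l 1)) = opL c' g' (Finsupp.single (l.map a) 1) by
    have : mapL a ∘ₗ opL c g = opL c' g' ∘ₗ mapL a := LC_ext fun l => by
      simpa using h _ l rfl
    exact LinearMap.congr_fun this x
  intro n
  induction n with
  | zero =>
    intro l hl
    obtain rfl := List.length_eq_zero_iff.1 hl
    rw [opL_nil, List.map_nil, opL_nil, hc]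
  | succ n ih =>
    intro l hl
    have hl' : l ≠ [] := by rintro rfl; simp at hl
    rw [opL_single _ _ _ hl', opL_single _ _ _ (by simpa using hl'), hg _ hl', ← mapL_dl]
    congr 1
    exact eq_on_supported (P := fun l' : List α => l'.length = n) (mapL a ∘ₗ opL c g)
      (opL c' g' ∘ₗ mapL a) (fun l' h => by simpa using ih l' h) (dl_length _ l hl)

end lists

/-! ### Singular chains -/

section singular

open Cx

variable {V V' : Type} [NormedAddCommGroup V] [NormedSpace ℝ V] [NormedAddCommGroup V']
  [NormedSpace ℝ V']

instance (ι : Type) [Fintype ι] : Fact (Convex ℝ (stdSimplex ℝ ι)) := ⟨convex_stdSimplex ℝ ι⟩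

instance (K : Set V) (K' : Set V') [h : Fact (Convex ℝ K)] [h' : Fact (Convex ℝ K')] :
    Fact (Convex ℝ (K ×ˢ K')) := ⟨h.1.prod h'.1⟩

instance : Fact (Convex ℝ unitInterval) := ⟨convex_Icc 0 1⟩

lemma stdSimplex_sum_map {ι κ : Type} [Fintype ι] [Fintype κ] (f : ι → κ) (t : stdSimplex ℝ ι)
    (g : κ → V) : ∑ k, (stdSimplex.map f t) k • g k = ∑ i, t i • g (f i) := by
  classical
  rw [stdSimplex.map_coe]
  simp only [FunOnFinite.linearMap_apply_apply, Finset.sum_smul]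
  rw [← Finset.sum_fiberwise Finset.univ f]
  refine Finset.sum_congr rfl fun k _ => Finset.sum_congr rfl fun i hi => ?_
  rw [(Finset.mem_filter.1 hi).2]

section affine

variable {K : Set V} {K' : Set V'} [hK' : Fact (Convex ℝ K')] [hK : Fact (Convex ℝ K)]

/-- The affine simplex in the convex set `K` with prescribed vertices. -/
def aff {ι : Type} [Fintype ι] (g : ι → K) : C(stdSimplex ℝ ι, K) where
  toFun t := ⟨∑ i, t i • (g i : V), hK.1.sum_mem (fun i _ => t.2.1 i) t.2.2 fun i _ => (g i).2⟩
  continuous_toFun := by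
    refine Continuous.subtype_mk (continuous_finsetSum _ fun i _ => ?_) _
    exact ((continuous_apply i).comp continuous_subtype_val).smul continuous_const

lemma aff_coe {ι : Type} [Fintype ι] (g : ι → K) (t : stdSimplex ℝ ι) :
    (aff g t : V) = ∑ i, t i • (g i : V) := rfl

lemma aff_map {ι κ : Type} [Fintype ι] [Fintype κ] (f : ι → κ) (g : κ → K) (t : stdSimplex ℝ ι) :
    aff g (stdSimplex.map f t) = aff (g ∘ f) t :=
  Subtype.ext (stdSimplex_sum_map f t fun k => (g k : V))

lemma aff_vertex {ι : Type} [Fintype ι] [DecidableEq ι] (g : ι → K) (i : ι) :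
    aff g (stdSimplex.vertex i) = g i := by
  apply Subtype.ext
  rw [aff_coe, stdSimplex.vertex_coe, Finset.sum_eq_single i] <;> simp +contextual

lemma aff_id {ι : Type} [Fintype ι] [DecidableEq ι] (t : stdSimplex ℝ ι) :
    aff (K := stdSimplex ℝ ι) (fun i => stdSimplex.vertex i) t = t := by
  apply Subtype.ext
  funext k
  rw [aff_coe, Finset.sum_apply, Finset.sum_eq_single k]
  · simp; rfl
  · intro b _ hb
    simp [hb.symm]
  · simp

/-- A map between convex sets is affine if it preserves convex combinations. -/
def IsAff (a : K → K') : Prop :=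
  ∀ (n : ℕ) (g : Fin n → K) (t : stdSimplex ℝ (Fin n)), a (aff g t) = aff (a ∘ g) t

lemma isAff_aff {n : ℕ} (g : Fin n → K) : IsAff (aff g) := by
  intro m h t
  apply Subtype.ext
  simp only [aff_coe, Function.comp_apply, Finset.smul_sum, smul_smul]
  rw [Finset.sum_comm]
  refine Finset.sum_congr rfl fun i _ => ?_
  rw [← Finset.sum_smul]
  congr 1
  have e := congrFun (aff_coe h t) i
  rw [Finset.sum_apply] at e
  exact e

lemma IsAff.prod {W : Type} [NormedAddCommGroup W] [NormedSpace ℝ W] {L : Set W}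
    [hL : Fact (Convex ℝ L)] {a : K → K'} (ha : IsAff a) :
    IsAff (K := K ×ˢ L) (K' := K' ×ˢ L) fun x => ⟨((a ⟨x.1.1, x.2.1⟩ : K').1, x.1.2),
      (a ⟨x.1.1, x.2.1⟩).2, x.2.2⟩ := by
  intro n g t
  apply Subtype.ext
  refine Prod.ext ?_ ?_
  · have h := congrArg Subtype.val (ha n (fun i => ⟨(g i).1.1, (g i).2.1⟩) t)
    rw [aff_coe] at h
    rw [aff_coe, Prod.fst_sum]
    refine Eq.trans ?_ h
    refine congrArg (fun x => (a x).1) (Subtype.ext ?_)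
    exact (congrArg Prod.fst (aff_coe g t)).trans Prod.fst_sum
  · rw [aff_coe, Prod.snd_sum]
    exact (congrArg Prod.snd (aff_coe g t)).trans Prod.snd_sum

end affine

/-- Singular simplices of a space, of all dimensions. -/
abbrev Sx (E : Type) [TopologicalSpace E] : Type := Σ n : ℕ, C(stdSimplex ℝ (Fin (n + 1)), E)

variable (F : Type) [Field F] {E E' : Type} [TopologicalSpace E'] [TopologicalSpace E]

/-- The inclusion of the `i`-th face of the standard simplex. -/
noncomputable def face {n : ℕ} (i : Fin (n + 2)) :
    C(stdSimplex ℝ (Fin (n + 1)), stdSimplex ℝ (Fin (n + 2))) :=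
  ⟨stdSimplex.map i.succAbove, stdSimplex.continuous_map _⟩

/-- The boundary of a singular simplex. -/
noncomputable def ds : Sx E → (Sx E →₀ F)
  | ⟨0, _⟩ => 0
  | ⟨n + 1, σ⟩ => ∑ i : Fin (n + 2), (-1 : F) ^ (i : ℕ) • Finsupp.single ⟨n, σ.comp (face i)⟩ 1

/-- The differential of the singular chains. -/
noncomputable def dS : (Sx E →₀ F) →ₗ[F] (Sx E →₀ F) := Finsupp.linearCombination F (ds F)

/-- Composition with a continuous map. -/
abbrev Sx.comp (f : C(E, E')) (σ : Sx E) : Sx E' := ⟨σ.1, f.comp σ.2⟩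

variable {F}

@[simp] lemma dS_single (σ : Sx E) : dS F (Finsupp.single σ 1) = ds F σ := by simp [dS]

/-- The map on singular chains induced by a continuous map. -/
noncomputable abbrev mapS (f : C(E, E')) : (Sx E →₀ F) →ₗ[F] (Sx E' →₀ F) :=
  Finsupp.lmapDomain F F (Sx.comp f)

@[simp] lemma mapS_single (f : C(E, E')) (σ : Sx E) (c : F) :
    mapS f (Finsupp.single σ c) = Finsupp.single (Sx.comp f σ) c := by simp [mapS]

lemma Sx_ext {M : Type} [AddCommGroup M] [Module F M] {f g : (Sx E →₀ F) →ₗ[F] M}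
    (h : ∀ l, f (Finsupp.single l 1) = g (Finsupp.single l 1)) : f = g := by
  ext l; exact h l

lemma mapS_dS (f : C(E, E')) (x : Sx E →₀ F) : mapS f (dS F x) = dS F (mapS f x) := by
  have : mapS f ∘ₗ dS F = dS F ∘ₗ mapS f := Sx_ext fun ⟨n, σ⟩ => by
    cases n with
    | zero => simp [ds]
    | succ n =>
      simp only [LinearMap.comp_apply, dS_single, ds, map_sum, map_smul, mapS_single]
      rfl
  exact LinearMap.congr_fun this x

section phi

variable {K : Set V} {K' : Set V'} [hK' : Fact (Convex ℝ K')] [hK : Fact (Convex ℝ K)]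

/-- The singular simplex obtained from a vertex list in `K` and a map `K → E`. -/
noncomputable def phil (f : C(K, E)) : List K → (Sx E →₀ F)
  | [] => 0
  | v :: l => Finsupp.single ⟨l.length, f.comp (aff fun i : Fin (l.length + 1) => (v :: l).get i)⟩ 1

/-- Linear extension of `phil`. -/
noncomputable def phi (f : C(K, E)) : LC F K →ₗ[F] (Sx E →₀ F) :=
  Finsupp.linearCombination F (phil f)

@[simp] lemma phi_single (f : C(K, E)) (l : List K) :
    phi f (Finsupp.single l (1 : F)) = phil f l := by simp [phi]

lemma phil_of_length (f : C(K, E)) (l : List K) (n : ℕ) (h : l.length = n + 1) :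
    phil f l = Finsupp.single
      ⟨n, f.comp (aff fun i : Fin (n + 1) => l.get (i.cast h.symm))⟩ (1 : F) := by
  cases l with
  | nil => simp at h
  | cons v l =>
    obtain rfl : l.length = n := by simpa using h
    rfl

lemma phil_ofFn (f : C(K, E)) {n : ℕ} (g : Fin (n + 1) → K) :
    phil f (List.ofFn g) = Finsupp.single ⟨n, f.comp (aff g)⟩ (1 : F) := by
  rw [phil_of_length f _ n (by simp)]
  congr 4
  funext i
  exact List.get_ofFn g _

lemma eraseIdx_ofFn {α : Type} {n : ℕ} (g : Fin (n + 1) → α) (i : Fin (n + 1)) :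
    (List.ofFn g).eraseIdx i = List.ofFn (g ∘ i.succAbove) := by
  refine List.ext_getElem (by rw [List.length_eraseIdx_of_lt (by simpa using i.2)]; simp) fun k h1 h2 => ?_
  rw [List.getElem_eraseIdx]
  split_ifs with h
  · simp only [List.getElem_ofFn, Function.comp_apply]
    congr 1
    rw [Fin.succAbove_of_castSucc_lt _ _ (by simpa [Fin.lt_def] using h)]
    rfl
  · simp only [List.getElem_ofFn, Function.comp_apply]
    congr 1
    rw [Fin.succAbove_of_le_castSucc _ _ (by simpa [Fin.le_def] using h)]
    rfl

lemma phi_dl_ofFn (f : C(K, E)) {n : ℕ} (g : Fin (n + 1) → K) :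
    phi f (dl F (List.ofFn g)) = ds F ⟨n, f.comp (aff g)⟩ := by
  cases n with
  | zero => simp [dl, ds, phil]
  | succ n =>
    rw [dl_eq_sum, ds, map_sum]
    have e : (List.ofFn g).length = n + 2 := by simp
    rw [← Fin.sum_congr' _ e.symm]
    refine Finset.sum_congr rfl fun i _ => ?_
    rw [map_smul, phi_single, Fin.val_cast, eraseIdx_ofFn, phil_ofFn]
    congr 3
    ext t
    exact congrArg f (aff_map _ g t).symm

lemma phi_dL (f : C(K, E)) (x : LC F K) : phi f (dL x) = dS F (phi f x) := by
  have : phi f ∘ₗ dL = (dS F ∘ₗ phi f : LC F K →ₗ[F] _) := LC_ext fun l => by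
    simp only [LinearMap.comp_apply, dL_single, phi_single]
    rcases l.eq_nil_or_concat' with rfl | ⟨l', b, rfl⟩
    · simp [dl, phil]
    · obtain ⟨n, hn⟩ : ∃ n, (l' ++ [b]).length = n + 1 := ⟨l'.length, by simp⟩
      have e : l' ++ [b] = List.ofFn fun i : Fin (n + 1) => (l' ++ [b]).get (i.cast hn.symm) := by
        refine List.ext_getElem (by simp at hn ⊢; exact hn) fun k h1 h2 => ?_
        rw [List.getElem_ofFn]; rfl
      rw [e, phi_dl_ofFn, phil_ofFn, dS_single]
  exact LinearMap.congr_fun this x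

lemma phi_mapL (f : C(K', E)) (a : C(K, K')) (ha : IsAff a) (x : LC F K) :
    phi f (mapL a x) = phi (f.comp a) x := by
  have : phi f ∘ₗ mapL a = (phi (f.comp a) : LC F K →ₗ[F] _) := LC_ext fun l => by
    rw [LinearMap.comp_apply, mapL_single, phi_single, phi_single]
    cases l with
    | nil => rfl
    | cons v l =>
      rw [phil_of_length f _ l.length (by simp), phil_of_length (f.comp a) _ l.length (by simp)]
      congr 2
      ext t
      refine congrArg f (Eq.trans ?_ (ha _ _ t).symm)
      congr 2
      funext i
      exact List.getElem_map _
  exact LinearMap.congr_fun this x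

lemma mapS_phi (f : C(K, E)) (g : C(E, E')) (x : LC F K) :
    mapS g (phi f x) = phi (g.comp f) x := by
  have : mapS g ∘ₗ phi f = (phi (g.comp f) : LC F K →ₗ[F] _) := LC_ext fun l => by
    rw [LinearMap.comp_apply, phi_single, phi_single]
    cases l with
    | nil => exact map_zero _
    | cons v l => exact mapS_single _ _ _
  exact LinearMap.congr_fun this x

end phi

/-- The list of vertices of the standard simplex. -/
noncomputable def vl (n : ℕ) : List (stdSimplex ℝ (Fin (n + 1))) :=
  List.ofFn fun i => stdSimplex.vertex i

lemma phil_vl (σ : Sx E) : phil σ.2 (vl σ.1) = Finsupp.single σ (1 : F) := by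
  rw [vl, phil_ofFn]
  congr 2
  ext t
  exact congrArg σ.2 (aff_id t)

lemma phi_vl (σ : Sx E) : phi σ.2 (Finsupp.single (vl σ.1) 1) = Finsupp.single σ (1 : F) := by
  rw [phi_single, phil_vl]

lemma map_aff_vl {K : Set V} [hK : Fact (Convex ℝ K)] {n : ℕ} (g : Fin (n + 1) → K) :
    (vl n).map (aff g) = List.ofFn g := by
  rw [vl, List.map_ofFn]
  congr 1
  funext i
  exact aff_vertex g i

lemma dS_dS (x : Sx E →₀ F) : dS F (dS F x) = 0 := by
  have : dS F ∘ₗ dS F = (0 : (Sx E →₀ F) →ₗ[F] _) := Sx_ext fun σ => by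
    rw [LinearMap.comp_apply, ← phi_vl σ, ← phi_dL, ← phi_dL, dL_dL, map_zero, LinearMap.zero_apply]
  exact LinearMap.congr_fun this x

/-- The singular chains of dimension `j`. -/
def grS (F : Type) [Field F] (E : Type) [TopologicalSpace E] (j : ℤ) : Submodule F (Sx E →₀ F) :=
  Finsupp.supported F F {σ | (σ.1 : ℤ) = j}

lemma dS_gr (j : ℤ) (x : Sx E →₀ F) (hx : x ∈ grS F E j) : dS F x ∈ grS F E (j - 1) := by
  refine mem_supported_of_forall (dS F) (fun ⟨n, σ⟩ h => ?_) hx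
  rw [dS_single]
  cases n with
  | zero => exact zero_mem _
  | succ n =>
    refine sum_mem fun i _ => Submodule.smul_mem _ _ (Finsupp.single_mem_supported F _ ?_)
    simp at h ⊢
    omega

variable (F) in
/-- The functor of singular chains with coefficients in `F`. -/
noncomputable def CS : TopCat.{0} ⥤ Cx F where
  obj E :=
    { X := Sx E →₀ F
      d := dS F
      gr := grS F E
      dd := dS_dS
      d_gr := dS_gr }
  map {E E'} f :=
    { f := mapS f.hom
      comm := mapS_dS f.hom
      gr := fun j x hx => mem_supported_of_forall (P := fun σ : Sx E => (σ.1 : ℤ) = j)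
        (Q := fun σ : Sx E' => (σ.1 : ℤ) = j) (mapS f.hom)
        (fun σ h => by rw [mapS_single]; exact Finsupp.single_mem_supported F _ h) hx }
  map_id E := by
    refine Cx.hom_ext fun x => ?_
    exact LinearMap.congr_fun (Finsupp.lmapDomain_id F F) x
  map_comp f g := by
    refine Cx.hom_ext fun x => ?_
    exact LinearMap.congr_fun (Finsupp.lmapDomain_comp F F (Sx.comp f.hom) (Sx.comp g.hom)) x

end singular

/-! ### Homotopy invariance -/

section homotopy

open Cx

variable {F : Type} [Field F] {E E' : Type} [TopologicalSpace E'] [TopologicalSpace E]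

/-- The singular simplices that `phil` can produce, in terms of vertex lists. -/
lemma phi_mem {V : Type} [NormedAddCommGroup V] [NormedSpace ℝ V] {K : Set V}
    [hK : Fact (Convex ℝ K)] (f : C(K, E)) {P : List K → Prop} {Q : Sx E → Prop}
    (h : ∀ (n : ℕ) (g : Fin (n + 1) → K), P (List.ofFn g) → Q ⟨n, f.comp (aff g)⟩) {x : LC F K}
    (hx : x ∈ Finsupp.supported F F {l | P l}) : phi f x ∈ Finsupp.supported F F {s | Q s} := by
  refine mem_supported_of_forall (phi f) (fun l hl => ?_) hx
  rw [phi_single]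
  cases l with
  | nil => exact zero_mem _
  | cons v l =>
    rw [← List.ofFn_get (v :: l)] at hl
    exact Finsupp.single_mem_supported F _ (h l.length (fun i => (v :: l).get i) hl)

lemma exists_ofFn {α : Type} (l : List α) (h : l ≠ []) :
    ∃ (n : ℕ) (g : Fin (n + 1) → α), l = List.ofFn g := by
  cases l with
  | nil => exact absurd rfl h
  | cons v l => exact ⟨l.length, fun i => (v :: l).get i, (List.ofFn_get (v :: l)).symm⟩

variable {V : Type} [NormedAddCommGroup V] [NormedSpace ℝ V] {K : Set V} [hK : Fact (Convex ℝ K)]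

/-- The inclusion of `K` at height `s` into the cylinder. -/
def cyl (s : unitInterval) : C(K, K ×ˢ unitInterval) :=
  ⟨fun v => ⟨(v.1, s.1), v.2, s.2⟩, by fun_prop⟩

lemma isAff_cyl (s : unitInterval) : IsAff (cyl s : K → K ×ˢ unitInterval) := by
  intro n g t
  apply Subtype.ext
  rw [aff_coe]
  refine Prod.ext ?_ ?_
  · rw [Prod.fst_sum]; rfl
  · rw [Prod.snd_sum]
    change (s : ℝ) = ∑ i, t i • (s : ℝ)
    rw [← Finset.sum_smul, stdSimplex.sum_eq_one, one_smul]

/-- The map on cylinders determined by a homotopy and a map `K → E`. -/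
def hmap (H : C(unitInterval × E, E')) (f : C(K, E)) : C(K ×ˢ unitInterval, E') :=
  ⟨fun x => H (⟨x.1.2, x.2.2⟩, f ⟨x.1.1, x.2.1⟩), by fun_prop⟩

variable (F) in
/-- The chain homotopy induced by a homotopy. -/
noncomputable def hop (H : C(unitInterval × E, E')) : (Sx E →₀ F) →ₗ[F] (Sx E' →₀ F) :=
  Finsupp.linearCombination F fun σ => phi (hmap H σ.2) (prism (cyl 0) (cyl 1) (vl σ.1))

lemma hop_phi (H : C(unitInterval × E, E')) (f : C(K, E)) (x : LC F K) :
    hop F H (phi f x) = phi (hmap H f) (prismL (cyl 0) (cyl 1) x) := by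
  have : hop F H ∘ₗ phi f = (phi (hmap H f) ∘ₗ prismL (cyl 0) (cyl 1) : LC F K →ₗ[F] _) := by
    refine LC_ext fun l => ?_
    simp only [LinearMap.comp_apply, phi_single, prismL_single]
    by_cases hl : l = []
    · subst hl; simp [phil, prism]
    · obtain ⟨n, g, rfl⟩ := exists_ofFn l hl
      rw [phil_ofFn, hop, Finsupp.linearCombination_single, one_smul]
      let a : C(stdSimplex ℝ (Fin (n + 1)) ×ˢ unitInterval, K ×ˢ unitInterval) :=
        ⟨fun x => ⟨((aff g ⟨x.1.1, x.2.1⟩ : K).1, x.1.2), (aff g ⟨x.1.1, x.2.1⟩).2, x.2.2⟩,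
          Continuous.subtype_mk (Continuous.prodMk (continuous_subtype_val.comp
            ((aff g).continuous.comp (Continuous.subtype_mk
              (continuous_fst.comp continuous_subtype_val) _)))
            (continuous_snd.comp continuous_subtype_val)) _⟩
      have ha : IsAff a := (isAff_aff g).prod
      have e : hmap H (f.comp (aff g)) = (hmap H f).comp a := rfl
      simp only [e]
      rw [← phi_mapL _ a ha, prism_map (aff g) a (p' := cyl 0) (q' := cyl 1) (fun x => rfl)
        (fun x => rfl), map_aff_vl]
  exact LinearMap.congr_fun this x

lemma hop_boundary (H : C(unitInterval × E, E')) (f g : C(E, E')) (hf : ∀ x, H (0, x) = f x)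
    (hg : ∀ x, H (1, x) = g x) (x : Sx E →₀ F) :
    dS F (hop F H x) + hop F H (dS F x) = mapS g x - mapS f x := by
  have : dS F ∘ₗ hop F H + hop F H ∘ₗ dS F = mapS g - mapS f := by
    refine Sx_ext fun σ => ?_
    simp only [LinearMap.add_apply, LinearMap.sub_apply, LinearMap.comp_apply]
    rw [← phi_vl σ, hop_phi, ← phi_dL, ← phi_dL, hop_phi, ← map_add, dL_single, prismL_single,
      prism_boundary, map_sub, ← mapL_single, ← mapL_single, phi_mapL _ _ (isAff_cyl 1),
      phi_mapL _ _ (isAff_cyl 0), mapS_phi, mapS_phi]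
    congr 3
    · ext t; exact hg _
    · ext t; exact hf _
  exact LinearMap.congr_fun this x

lemma hop_gr (H : C(unitInterval × E, E')) (j : ℤ) (x : Sx E →₀ F) (hx : x ∈ grS F E j) :
    hop F H x ∈ grS F E' (j + 1) := by
  refine mem_supported_of_forall (hop F H) (fun σ h => ?_) hx
  rw [hop, Finsupp.linearCombination_single, one_smul]
  refine phi_mem _ (fun n g hg => ?_) (prism_length _ _ _)
  simp [vl] at hg h ⊢
  omega

/-- A homotopy equivalence induces a quasi-isomorphism on singular chains. -/
lemma acyclic_of_homotopyEquiv {X Y : TopCat.{0}} (f : X ⟶ Y) (g : Y ⟶ X)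
    (h₁ : (g.hom.comp f.hom).Homotopic (ContinuousMap.id X))
    (h₂ : (f.hom.comp g.hom).Homotopic (ContinuousMap.id Y)) (m : ℤ) :
    (cone ((CS F).map f)).Van m := by
  obtain ⟨P⟩ := h₁.symm
  obtain ⟨Q⟩ := h₂.symm
  have hP : ∀ a : Sx X →₀ F, dS F (hop F P.toContinuousMap a) + hop F P.toContinuousMap (dS F a) =
      mapS g.hom (mapS f.hom a) - a := fun a => by
    rw [hop_boundary P.toContinuousMap (.id X) (g.hom.comp f.hom) (by simp) (by simp)]
    congr 1
    · exact LinearMap.congr_fun (Finsupp.lmapDomain_comp F F (Sx.comp f.hom) (Sx.comp g.hom)) a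
    · exact LinearMap.congr_fun (Finsupp.lmapDomain_id F F) a
  have hQ : ∀ a : Sx Y →₀ F, dS F (hop F Q.toContinuousMap a) + hop F Q.toContinuousMap (dS F a) =
      mapS f.hom (mapS g.hom a) - a := fun a => by
    rw [hop_boundary Q.toContinuousMap (.id Y) (f.hom.comp g.hom) (by simp) (by simp)]
    congr 1
    · exact LinearMap.congr_fun (Finsupp.lmapDomain_comp F F (Sx.comp g.hom) (Sx.comp f.hom)) a
    · exact LinearMap.congr_fun (Finsupp.lmapDomain_id F F) a
  refine van_cone_intro fun j hj (a : Sx X →₀ F) ha (b : Sx Y →₀ F) hb (da : dS F a = 0)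
    (db : mapS f.hom a + dS F b = 0) => ?_
  have gb : ∀ x : Sx Y →₀ F, dS F (mapS g.hom x) = mapS g.hom (dS F x) :=
    fun x => (mapS_dS g.hom x).symm
  have gf : ∀ x : Sx X →₀ F, dS F (mapS f.hom x) = mapS f.hom (dS F x) :=
    fun x => (mapS_dS f.hom x).symm
  have eb : dS F b = -mapS f.hom a := eq_neg_of_add_eq_zero_right db
  have g1 := ((CS F).map g).gr
  have pa : dS F (hop F P.toContinuousMap a) = mapS g.hom (mapS f.hom a) - a := by
    simpa [da] using hP a
  -- `β` is the cycle measuring the failure of the first approximation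
  let a₀ : Sx X →₀ F := mapS g.hom b + hop F P.toContinuousMap a
  have ha₀ : a₀ ∈ grS F X j :=
    add_mem (((CS F).map g).gr j b hb) (by simpa using hop_gr P.toContinuousMap _ a ha)
  have da₀ : dS F a₀ = -a := by
    rw [map_add, pa, gb, eb, map_neg]; abel
  let β : Sx Y →₀ F := b - mapS f.hom a₀
  have hβ : β ∈ grS F Y j := sub_mem hb (((CS F).map f).gr j a₀ ha₀)
  have dβ : dS F β = 0 := by rw [map_sub, gf, da₀, eb, map_neg]; abel
  have qβ : dS F (hop F Q.toContinuousMap β) = mapS f.hom (mapS g.hom β) - β := by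
    simpa [dβ] using hQ β
  refine ⟨a₀ + mapS g.hom β, add_mem ha₀ (((CS F).map g).gr j β hβ), -hop F Q.toContinuousMap β,
    neg_mem (hop_gr Q.toContinuousMap _ β hβ), ?_, ?_⟩
  · change dS F _ = -a
    rw [map_add, da₀, gb, dβ, map_zero, add_zero]
  · change mapS f.hom _ + dS F _ = b
    rw [map_add, map_neg, qβ]
    simp only [β]
    abel

end homotopy

/-! ### Barycentric subdivision -/

section subdivision

open Cx

variable {V V' : Type} [NormedAddCommGroup V] [NormedSpace ℝ V] [NormedAddCommGroup V']
  [NormedSpace ℝ V'] {K : Set V} {K' : Set V'} [hK' : Fact (Convex ℝ K')] [hK : Fact (Convex ℝ K)]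
  {F : Type} [Field F] {E E' : Type} [TopologicalSpace E'] [TopologicalSpace E]

/-- The barycenter of the standard simplex. -/
noncomputable def unif (n : ℕ) : stdSimplex ℝ (Fin (n + 1)) :=
  ⟨fun _ => (n + 1 : ℝ)⁻¹, fun _ => by positivity, by
    simp only [Finset.sum_const, Finset.card_univ, Fintype.card_fin, nsmul_eq_mul]
    push_cast
    exact mul_inv_cancel₀ (by positivity)⟩

/-- The barycenter of the list `v :: l`. -/
noncomputable def bary (v : K) (l : List K) : K :=
  aff (fun i : Fin (l.length + 1) => (v :: l).get i) (unif l.length)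

lemma bary_map (a : K → K') (ha : IsAff a) (v : K) (l : List K) :
    a (bary v l) = bary (a v) (l.map a) := by
  have key : ∀ (n : ℕ) (h : l.length = n) (l' : List K') (h' : l'.length = n), l' = l.map a →
      a (bary v l) = aff (fun i : Fin (n + 1) => (a v :: l').get (i.cast (by simp [h']))) (unif n) := by
    rintro n rfl l' h' rfl
    rw [bary, ha]
    congr 2
    funext i
    exact (List.getElem_map (f := a) (l := v :: l) (h := by simpa using Nat.le_of_lt_succ i.2)).symm
  have h2 : ∀ (n : ℕ) (l' : List K') (h' : l'.length = n),
      aff (fun i : Fin (n + 1) => (a v :: l').get (i.cast (by simp [h']))) (unif n) =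
        bary (a v) l' := by
    rintro n l' rfl
    rfl
  exact (key _ rfl (l.map a) (List.length_map a) rfl).trans (h2 _ _ (List.length_map a))

/-- The recursion of barycentric subdivision: the subdivided boundary `x` is coned off from the
barycentre. -/
noncomputable def gb : List K → LC F K → LC F K
  | [], _ => 0
  | v :: l, x => consL (bary v l) x

/-- The recursion of the chain homotopy between barycentric subdivision and the identity. -/
noncomputable def gh : List K → LC F K → LC F K
  | [], _ => 0
  | v :: l, x => consL (bary v l) (Finsupp.single (v :: l) 1 - x)

/-- Barycentric subdivision of formal simplices in a convex set. -/
noncomputable def sdL : LC F K →ₗ[F] LC F K := opL (Finsupp.single [] 1) gb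

/-- The chain homotopy between the identity and barycentric subdivision. -/
noncomputable def shL : LC F K →ₗ[F] LC F K := opL 0 gh

lemma sdL_cons (v : K) (l : List K) :
    sdL (Finsupp.single (v :: l) (1 : F)) = consL (bary v l) (sdL (dl F (v :: l))) :=
  opL_single _ _ _ (by simp)

lemma shL_cons (v : K) (l : List K) :
    shL (Finsupp.single (v :: l) (1 : F)) =
      consL (bary v l) (Finsupp.single (v :: l) 1 - shL (dl F (v :: l))) :=
  opL_single _ _ _ (by simp)

lemma sdL_map (a : K → K') (ha : IsAff a) (x : LC F K) : mapL a (sdL x) = sdL (mapL a x) := by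
  refine opL_map a (by simp) (fun l hl x => ?_) x
  cases l with
  | nil => exact absurd rfl hl
  | cons v l => simp only [gb, mapL_consL, bary_map a ha, List.map_cons]

lemma shL_map (a : K → K') (ha : IsAff a) (x : LC F K) : mapL a (shL x) = shL (mapL a x) := by
  refine opL_map a (by simp) (fun l hl x => ?_) x
  cases l with
  | nil => exact absurd rfl hl
  | cons v l => simp only [gh, mapL_consL, bary_map a ha, List.map_cons, map_sub, mapL_single]

lemma sdL_dL (x : LC F K) : dL (sdL x) = sdL (dL x) := by
  suffices h : ∀ n, ∀ l : List K, l.length = n →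
      dL (sdL (Finsupp.single l (1 : F))) = sdL (dl F l) by
    have : dL ∘ₗ sdL = (sdL ∘ₗ dL : LC F K →ₗ[F] LC F K) := LC_ext fun l => by
      simpa using h _ l rfl
    exact LinearMap.congr_fun this x
  intro n
  induction n with
  | zero =>
    intro l hl
    obtain rfl := List.length_eq_zero_iff.1 hl
    simp [sdL, opL_nil, dl]
  | succ n ih =>
    intro l hl
    have e : dL (sdL (dl F l)) = 0 := by
      have := eq_on_supported (P := fun l' : List K => l'.length = n) (dL ∘ₗ sdL)
        (sdL ∘ₗ dL) (fun l' h => by simpa using ih l' h) (dl_length (F := F) _ l hl)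
      simpa [dl_dl] using this
    cases l with
    | nil => simp at hl
    | cons v l => rw [sdL_cons, dL_consL, e, map_zero, sub_zero]

lemma shL_dL (x : LC F K) : dL (shL x) + shL (dL x) = x - sdL x := by
  suffices h : ∀ n, ∀ l : List K, l.length = n →
      dL (shL (Finsupp.single l (1 : F))) + shL (dl F l) =
        Finsupp.single l 1 - sdL (Finsupp.single l (1 : F)) by
    have : dL ∘ₗ shL + shL ∘ₗ dL = (LinearMap.id - sdL : LC F K →ₗ[F] LC F K) :=
      LC_ext fun l => by simpa using h _ l rfl
    exact LinearMap.congr_fun this x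
  intro n
  induction n with
  | zero =>
    intro l hl
    obtain rfl := List.length_eq_zero_iff.1 hl
    simp [sdL, shL, opL_nil, dl]
  | succ n ih =>
    intro l hl
    have e : dL (shL (dl F l)) = dl F l - sdL (dl F l) := by
      have := eq_on_supported (P := fun l' : List K => l'.length = n) (dL ∘ₗ shL + shL ∘ₗ dL)
        (LinearMap.id - sdL) (fun l' h => by simpa using ih l' h) (dl_length (F := F) _ l hl)
      simpa [dl_dl] using this
    cases l with
    | nil => simp at hl
    | cons v l =>
      rw [sdL_cons, shL_cons, dL_consL, map_sub, dL_single, e, sub_sub_cancel]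
      abel

lemma shL_length (l : List K) :
    shL (Finsupp.single l (1 : F)) ∈ Finsupp.supported F F {l' : List K | l'.length = l.length + 1} := by
  suffices h : ∀ n, ∀ l : List K, l.length = n →
      shL (Finsupp.single l (1 : F)) ∈ Finsupp.supported F F {l' : List K | l'.length = n + 1} from
    h _ l rfl
  intro n
  induction n with
  | zero =>
    intro l hl
    obtain rfl := List.length_eq_zero_iff.1 hl
    simp [shL, opL_nil]
  | succ n ih =>
    intro l hl
    cases l with
    | nil => simp at hl
    | cons v l =>
      rw [shL_cons]
      refine mem_supported_of_forall (P := fun l' : List K => l'.length = n + 1) _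
        (fun l' h => ?_) (sub_mem (Finsupp.single_mem_supported F _ hl) ?_)
      · rw [consL_single]
        exact Finsupp.single_mem_supported F _ (by simpa using h)
      · exact mem_supported_of_forall (P := fun l' : List K => l'.length = n) _ ih
          (dl_length _ _ hl)

/-- The list `l'` has `n` vertices, all in the convex hull of `l`, at mutual distance `≤ r`. -/
def Fine (n : ℕ) (l : List K) (r : ℝ) (l' : List K) : Prop :=
  l'.length = n ∧ (∀ x ∈ l', (x : V) ∈ convexHull ℝ {y : V | ∃ v ∈ l, (v : V) = y}) ∧
    ∀ x ∈ l', ∀ y ∈ l', dist (x : V) y ≤ r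

lemma bary_coe (v : K) (l : List K) : (bary v l : V) =
    ∑ i : Fin (l.length + 1), ((l.length : ℝ) + 1)⁻¹ • ((v :: l).get i : V) := rfl

lemma bary_mem (v : K) (l : List K) :
    (bary v l : V) ∈ convexHull ℝ {y : V | ∃ w ∈ v :: l, (w : V) = y} := by
  rw [bary_coe]
  refine (convex_convexHull ℝ _).sum_mem (fun i _ => by positivity) (unif l.length).2.2
    fun i _ => subset_convexHull ℝ _ ⟨_, List.get_mem _ _, rfl⟩

/-- The barycenter is close to all points of the simplex. -/
lemma dist_bary (v : K) (l : List K) {N : ℕ} (hl : l.length ≤ N) {r : ℝ} (hr : 0 ≤ r)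
    (h : ∀ x ∈ v :: l, ∀ y ∈ v :: l, dist (x : V) y ≤ r) {z : V}
    (hz : z ∈ convexHull ℝ {y : V | ∃ w ∈ v :: l, (w : V) = y}) :
    dist z (bary v l : V) ≤ N / (N + 1) * r := by
  suffices hs : convexHull ℝ {y : V | ∃ w ∈ v :: l, (w : V) = y} ⊆
      Metric.closedBall (bary v l : V) (N / (N + 1) * r) from hs hz
  refine convexHull_min ?_ (convex_closedBall _ _)
  rintro _ ⟨w, hw, rfl⟩
  rw [Metric.mem_closedBall, dist_eq_norm, bary_coe]
  set n : ℝ := (l.length : ℝ) with hn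
  have hn0 : 0 ≤ n := by positivity
  obtain ⟨k, rfl⟩ := List.get_of_mem hw
  have e : ((v :: l).get k : V) - ∑ i : Fin (l.length + 1), (n + 1)⁻¹ • ((v :: l).get i : V) =
      (n + 1)⁻¹ • ∑ i : Fin (l.length + 1), (((v :: l).get k : V) - ((v :: l).get i : V)) := by
    rw [Finset.sum_sub_distrib, smul_sub, Finset.smul_sum (N := V), Finset.sum_const,
      Finset.card_univ, Fintype.card_fin, ← Nat.cast_smul_eq_nsmul ℝ, smul_smul]
    push_cast
    rw [← hn, mul_inv_cancel₀ (by positivity), one_smul, Finset.smul_sum]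
  rw [e, norm_smul, Real.norm_of_nonneg (by positivity)]
  have e2 : ‖∑ i : Fin (l.length + 1), (((v :: l).get k : V) - ((v :: l).get i : V))‖ ≤ n * r := by
    rw [← Finset.sum_erase (Finset.univ : Finset (Fin (l.length + 1))) (a := k) (by simp)]
    refine (norm_sum_le _ _).trans ((Finset.sum_le_card_nsmul _ _ r fun i _ => ?_).trans ?_)
    · rw [← dist_eq_norm]; exact h _ (List.get_mem _ _) _ (List.get_mem _ _)
    · rw [nsmul_eq_mul, Finset.card_erase_of_mem (Finset.mem_univ _), Finset.card_univ,
        Fintype.card_fin]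
      simp [hn]
  have e3 : n ≤ N := by rw [hn]; exact_mod_cast hl
  calc (n + 1)⁻¹ * _ ≤ (n + 1)⁻¹ * (n * r) := by gcongr
    _ = n / (n + 1) * r := by field_simp
    _ ≤ _ := by
      gcongr ?_ * r
      rw [div_le_div_iff₀ (by positivity) (by positivity)]
      nlinarith

lemma sdL_fine (N : ℕ) {r : ℝ} (hr : 0 ≤ r) (n : ℕ) : ∀ l : List K, l.length = n → n ≤ N + 1 →
    (∀ x ∈ l, ∀ y ∈ l, dist (x : V) y ≤ r) →
    sdL (Finsupp.single l (1 : F)) ∈ Finsupp.supported F F {l' | Fine n l (N / (N + 1) * r) l'} := by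
  induction n with
  | zero =>
    intro l hl _ _
    obtain rfl := List.length_eq_zero_iff.1 hl
    rw [sdL, opL_nil]
    exact Finsupp.single_mem_supported F _ ⟨rfl, by simp, by simp⟩
  | succ n ih =>
    intro l hl hN h
    cases l with
    | nil => simp at hl
    | cons v l =>
      rw [sdL_cons]
      have hl2 : l.length = n := by simpa using hl
      refine mem_supported_of_forall (P := Fine n (v :: l) (N / (N + 1) * r)) _ (fun l' h' => ?_)
        (mem_supported_of_forall (P := fun l' : List K => l'.length = n ∧ ∀ x ∈ l', x ∈ v :: l)
          sdL (fun l' h' => ?_) (dl_mem _ _ fun i => ?_))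
      · rw [consL_single]
        refine Finsupp.single_mem_supported F _ ⟨by simp [h'.1], ?_, ?_⟩
        · intro x hx
          rcases List.mem_cons.1 hx with rfl | hx
          · exact bary_mem v l
          · exact h'.2.1 x hx
        · intro x hx y hy
          rcases List.mem_cons.1 hx with rfl | hx <;> rcases List.mem_cons.1 hy with rfl | hy
          · rw [dist_self]; positivity
          · rw [dist_comm]; exact dist_bary v l (by omega) hr h (h'.2.1 _ hy)
          · exact dist_bary v l (by omega) hr h (h'.2.1 _ hx)
          · exact h'.2.2 x hx y hy
      · refine Finsupp.supported_mono ?_ (ih l' h'.1 (by omega) fun x hx y hy =>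
          h x (h'.2 x hx) y (h'.2 y hy))
        rintro l'' ⟨h1, h2, h3⟩
        refine ⟨h1, fun x hx => convexHull_mono ?_ (h2 x hx), h3⟩
        rintro _ ⟨w, hw, rfl⟩
        exact ⟨w, h'.2 w hw, rfl⟩
      · refine ⟨?_, fun x hx => List.mem_of_mem_eraseIdx hx⟩
        rw [List.length_eraseIdx_of_lt i.2, hl]; rfl

lemma sdL_iter_fine (N : ℕ) {r : ℝ} (hr : 0 ≤ r) (l : List K) (hl : l.length = N + 1)
    (h : ∀ x ∈ l, ∀ y ∈ l, dist (x : V) y ≤ r) (m : ℕ) :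
    (sdL^[m]) (Finsupp.single l (1 : F)) ∈ Finsupp.supported F F
      {l' : List K | l'.length = N + 1 ∧
        ∀ x ∈ l', ∀ y ∈ l', dist (x : V) y ≤ (N / (N + 1) : ℝ) ^ m * r} := by
  induction m with
  | zero => exact Finsupp.single_mem_supported F _ ⟨hl, by simpa using h⟩
  | succ m ih =>
    rw [Function.iterate_succ_apply']
    refine mem_supported_of_forall (P := fun l' : List K => l'.length = N + 1 ∧
        ∀ x ∈ l', ∀ y ∈ l', dist (x : V) y ≤ (N / (N + 1) : ℝ) ^ m * r) sdL (fun l' h' => ?_) ih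
    refine Finsupp.supported_mono ?_ (sdL_fine N (r := (N / (N + 1) : ℝ) ^ m * r) (by positivity)
      _ l' h'.1 le_rfl h'.2)
    rintro l'' ⟨h1, h2, h3⟩
    refine ⟨h1, fun x hx y hy => (h3 x hx y hy).trans (le_of_eq ?_)⟩
    ring

/-- Barycentric subdivision of singular chains. -/
noncomputable def sdS : (Sx E →₀ F) →ₗ[F] (Sx E →₀ F) :=
  Finsupp.linearCombination F fun σ => phi σ.2 (sdL (Finsupp.single (vl σ.1) 1))

/-- The chain homotopy between the identity and subdivision, on singular chains. -/
noncomputable def shS : (Sx E →₀ F) →ₗ[F] (Sx E →₀ F) :=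
  Finsupp.linearCombination F fun σ => phi σ.2 (shL (Finsupp.single (vl σ.1) 1))

/-- An operator on singular chains defined by its values on the standard simplices is given by
the corresponding formal operator, provided the latter is natural under affine maps. -/
lemma natural_phi (S : ∀ n, LC F (stdSimplex ℝ (Fin (n + 1))) →ₗ[F] LC F (stdSimplex ℝ (Fin (n + 1))))
    (S' : LC F K →ₗ[F] LC F K)
    (hS : ∀ n (g : Fin (n + 1) → K) x, mapL (aff g) (S n x) = S' (mapL (aff g) x))
    (f : C(K, E)) (h0 : phi f (S' (Finsupp.single [] 1)) = 0) (x : LC F K) :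
    Finsupp.linearCombination F (fun σ : Sx E => phi σ.2 (S σ.1 (Finsupp.single (vl σ.1) 1)))
      (phi f x) = phi f (S' x) := by
  have : Finsupp.linearCombination F (fun σ : Sx E => phi σ.2 (S σ.1 (Finsupp.single (vl σ.1) 1)))
      ∘ₗ phi f = phi f ∘ₗ S' := by
    refine LC_ext fun l => ?_
    rw [LinearMap.comp_apply, LinearMap.comp_apply, phi_single]
    by_cases hl : l = []
    · subst hl; rw [h0]; exact map_zero _
    · obtain ⟨n, g, rfl⟩ := exists_ofFn l hl
      rw [phil_ofFn, Finsupp.linearCombination_single, one_smul, ← phi_mapL f _ (isAff_aff g), hS,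
        mapL_single, map_aff_vl]
  exact LinearMap.congr_fun this x

lemma sdS_phi (f : C(K, E)) (x : LC F K) : sdS (phi f x) = phi f (sdL x) :=
  natural_phi (fun _ => sdL) sdL (fun _ g x => sdL_map _ (isAff_aff g) x) f
    (by rw [sdL, opL_nil, phi_single]; rfl) x

lemma shS_phi (f : C(K, E)) (x : LC F K) : shS (phi f x) = phi f (shL x) :=
  natural_phi (fun _ => shL) shL (fun _ g x => shL_map _ (isAff_aff g) x) f
    (by rw [shL, opL_nil, map_zero]) x

lemma sdS_iter_phi (f : C(K, E)) (x : LC F K) (m : ℕ) :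
    (sdS^[m]) (phi f x) = phi f ((sdL^[m]) x) := by
  induction m generalizing x with
  | zero => rfl
  | succ m ih => rw [Function.iterate_succ_apply, sdS_phi, ih, ← Function.iterate_succ_apply]

lemma shS_dS (x : Sx E →₀ F) : dS F (shS x) + shS (dS F x) = x - sdS x := by
  have : dS F ∘ₗ shS + shS ∘ₗ dS F = (LinearMap.id - sdS : (Sx E →₀ F) →ₗ[F] _) := by
    refine Sx_ext fun σ => ?_
    simp only [LinearMap.add_apply, LinearMap.sub_apply, LinearMap.comp_apply, LinearMap.id_apply]
    rw [← phi_vl σ, shS_phi, ← phi_dL, ← phi_dL, shS_phi, ← map_add, shL_dL, map_sub, sdS_phi]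
  exact LinearMap.congr_fun this x

lemma shS_gr (j : ℤ) (x : Sx E →₀ F) (hx : x ∈ grS F E j) : shS x ∈ grS F E (j + 1) := by
  refine mem_supported_of_forall shS (fun σ h => ?_) hx
  rw [shS, Finsupp.linearCombination_single, one_smul]
  refine phi_mem _ (fun n g hg => ?_) (shL_length _)
  simp [vl] at hg h ⊢
  omega

/-- The chains on the simplices contained in one of two subsets. -/
def small (F : Type) [Field F] (U₁ U₂ : Set E) : Submodule F (Sx E →₀ F) :=
  Finsupp.supported F F {σ | Set.range σ.2 ⊆ U₁ ∨ Set.range σ.2 ⊆ U₂}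

lemma shS_small {U₁ U₂ : Set E} {x : Sx E →₀ F} (hx : x ∈ small F U₁ U₂) :
    shS x ∈ small F U₁ U₂ := by
  refine mem_supported_of_forall shS (fun σ h => ?_) hx
  rw [shS, Finsupp.linearCombination_single, one_smul]
  refine phi_mem (P := fun _ => True) _ (fun n g _ => ?_) (by simp)
  exact h.imp (fun h => (Set.range_comp_subset_range (aff g) σ.2).trans h)
    fun h => (Set.range_comp_subset_range (aff g) σ.2).trans h

lemma sdS_small {U₁ U₂ : Set E} {x : Sx E →₀ F} (hx : x ∈ small F U₁ U₂) :
    sdS x ∈ small F U₁ U₂ := by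
  refine mem_supported_of_forall sdS (fun σ h => ?_) hx
  rw [sdS, Finsupp.linearCombination_single, one_smul]
  refine phi_mem (P := fun _ => True) _ (fun n g _ => ?_) (by simp)
  exact h.imp (fun h => (Set.range_comp_subset_range (aff g) σ.2).trans h)
    fun h => (Set.range_comp_subset_range (aff g) σ.2).trans h

lemma sdS_dS (x : Sx E →₀ F) : dS F (sdS x) = sdS (dS F x) := by
  have h1 := shS_dS x
  have h2 := shS_dS (dS F x)
  rw [dS_dS, map_zero, add_zero] at h2
  have h3 := congrArg (dS F) h1
  rw [map_add, dS_dS, zero_add, h2, map_sub] at h3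
  exact (sub_right_injective h3).symm

lemma sdS_gr (j : ℤ) (x : Sx E →₀ F) (hx : x ∈ grS F E j) : sdS x ∈ grS F E j := by
  have h1 : sdS x = x - (dS F (shS x) + shS (dS F x)) := by rw [shS_dS]; abel
  rw [h1]
  refine sub_mem hx (add_mem ?_ ?_)
  · simpa using dS_gr _ _ (shS_gr j x hx)
  · simpa using shS_gr _ _ (dS_gr j x hx)

/-- Sufficiently fine subdivisions of a simplex are small with respect to an open cover. -/
lemma exists_small_single {U₁ U₂ : Set E} (h₁ : IsOpen U₁) (h₂ : IsOpen U₂) (h : U₁ ∪ U₂ = Set.univ)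
    (σ : Sx E) : ∃ m, (sdS^[m]) (Finsupp.single σ (1 : F)) ∈ small F U₁ U₂ := by
  obtain ⟨N, σ⟩ := σ
  obtain ⟨δ, hδ, hcov⟩ := lebesgue_number_lemma_of_metric (s := Set.univ)
    (c := fun b : Bool => σ ⁻¹' (if b then U₁ else U₂)) (isCompact_univ (X := stdSimplex ℝ (Fin (N + 1))))
    (fun b => by cases b <;> exact IsOpen.preimage σ.continuous (by simpa))
    (fun x _ => by
      rcases (h ▸ Set.mem_univ (σ x) : σ x ∈ U₁ ∪ U₂) with hx | hx
      · exact Set.mem_iUnion.2 ⟨true, by simpa using hx⟩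
      · exact Set.mem_iUnion.2 ⟨false, by simpa using hx⟩)
  obtain ⟨r, hr, hdiam⟩ : ∃ r : ℝ, 0 ≤ r ∧ ∀ x ∈ vl N, ∀ y ∈ vl N,
      dist x.1 y.1 ≤ r := by
    refine ⟨Metric.diam (Set.univ : Set (stdSimplex ℝ (Fin (N + 1)))), Metric.diam_nonneg,
      fun x _ y _ => ?_⟩
    exact Metric.dist_le_diam_of_mem isCompact_univ.isBounded (Set.mem_univ x) (Set.mem_univ y)
  obtain ⟨m, hm⟩ : ∃ m : ℕ, (N / (N + 1) : ℝ) ^ m * r < δ := by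
    have hlt : (N / (N + 1) : ℝ) < 1 := by rw [div_lt_one (by positivity)]; linarith
    have := (tendsto_pow_atTop_nhds_zero_of_lt_one (by positivity) hlt).mul_const r
    rw [zero_mul] at this
    exact (this.eventually_lt_const hδ).exists
  refine ⟨m, ?_⟩
  rw [← phi_vl (⟨N, σ⟩ : Sx E), sdS_iter_phi]
  refine phi_mem σ (fun n g hg => ?_) (sdL_iter_fine N hr (vl N) (by simp [vl]) hdiam m)
  obtain ⟨b, hb⟩ := hcov (g 0) (Set.mem_univ _)
  have hsub : Set.range (σ.comp (aff g)) ⊆ if b then U₁ else U₂ := by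
    rintro _ ⟨t, rfl⟩
    refine hb ?_
    have hball : (aff g t).1 ∈ Metric.closedBall (g 0).1 ((N / (N + 1) : ℝ) ^ m * r) := by
      rw [aff_coe]
      refine (convex_closedBall _ _).sum_mem (fun i _ => t.2.1 i) t.2.2 fun i _ => ?_
      exact hg.2 (g i) (List.mem_ofFn.2 ⟨i, rfl⟩) (g 0) (List.mem_ofFn.2 ⟨0, rfl⟩)
    exact lt_of_le_of_lt hball hm
  cases b
  · exact Or.inr hsub
  · exact Or.inl hsub

/-- The iterated subdivision operator is chain homotopic to the identity. -/
lemma exists_homotopy (U₁ U₂ : Set E) (m : ℕ) : ∃ H : (Sx E →₀ F) →ₗ[F] (Sx E →₀ F),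
    (∀ x, dS F (H x) + H (dS F x) = x - (sdS^[m]) x) ∧
    (∀ j, ∀ x ∈ grS F E j, H x ∈ grS F E (j + 1)) ∧
    ∀ x ∈ small F U₁ U₂, H x ∈ small F U₁ U₂ := by
  induction m with
  | zero => exact ⟨0, by simp, fun _ _ _ => zero_mem _, fun _ _ => zero_mem _⟩
  | succ m ih =>
    obtain ⟨H, h1, h2, h3⟩ := ih
    refine ⟨shS + H ∘ₗ sdS, fun x => ?_, fun j x hx => add_mem (shS_gr j x hx)
      (h2 _ _ (sdS_gr j x hx)), fun x hx => add_mem (shS_small hx) (h3 _ (sdS_small hx))⟩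
    have e1 := h1 (sdS x)
    rw [sdS_dS] at e1
    have e2 := shS_dS x
    simp only [LinearMap.add_apply, LinearMap.comp_apply, map_add]
    rw [Function.iterate_succ_apply]
    calc _ = (dS F (shS x) + shS (dS F x)) + (dS F (H (sdS x)) + H (sdS (dS F x))) := by abel
      _ = _ := by rw [e1, e2]; abel

lemma exists_small {U₁ U₂ : Set E} (h₁ : IsOpen U₁) (h₂ : IsOpen U₂) (h : U₁ ∪ U₂ = Set.univ)
    (x : Sx E →₀ F) : ∃ m, (sdS^[m]) x ∈ small F U₁ U₂ := by
  have hmono : ∀ m k (y : Sx E →₀ F), (sdS^[m]) y ∈ small F U₁ U₂ →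
      (sdS^[k + m]) y ∈ small F U₁ U₂ := by
    intro m k y hy
    induction k with
    | zero => simpa using hy
    | succ k ih =>
      rw [show k + 1 + m = (k + m) + 1 by ring, Function.iterate_succ_apply']
      exact sdS_small ih
  have hpow : ∀ m (y : Sx E →₀ F), (sdS^[m]) y = (sdS ^ m : Module.End F (Sx E →₀ F)) y :=
    fun m y => (Module.End.pow_apply _ _ _).symm
  induction x using Finsupp.induction_linear with
  | zero => exact ⟨0, zero_mem _⟩
  | add x y hx hy =>
    obtain ⟨a, ha⟩ := hx
    obtain ⟨b, hb⟩ := hy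
    refine ⟨a + b, ?_⟩
    rw [hpow, map_add, ← hpow, ← hpow]
    exact add_mem (by rw [add_comm]; exact hmono _ _ _ ha) (hmono _ _ _ hb)
  | single σ c =>
    obtain ⟨m, hm⟩ := exists_small_single (F := F) h₁ h₂ h σ
    refine ⟨m, ?_⟩
    rw [← mul_one c, ← smul_eq_mul, ← Finsupp.smul_single, hpow, map_smul, ← hpow]
    exact Submodule.smul_mem _ _ hm

end subdivision

/-! ### Excision and directed unions -/

section excision

open Cx

variable {F : Type} [Field F]

lemma mapS_injective {E E' : Type} [TopologicalSpace E] [TopologicalSpace E'] (f : C(E, E'))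
    (hf : Function.Injective f) : Function.Injective (mapS f : (Sx E →₀ F) →ₗ[F] _) := by
  refine Finsupp.mapDomain_injective ?_
  rintro ⟨n, σ⟩ ⟨n', σ'⟩ h
  obtain rfl : n = n' := congrArg Sigma.fst h
  have h2 := eq_of_heq (Sigma.mk.inj h).2
  congr 1
  ext t
  exact hf (DFunLike.congr_fun h2 t)

/-- Chains supported on simplices which factor through `f` come from chains. -/
lemma exists_mapS {E E' : Type} [TopologicalSpace E] [TopologicalSpace E'] (f : C(E, E')) (j : ℤ)
    {x : Sx E' →₀ F} (hx : x ∈ grS F E' j) (h : ∀ σ ∈ x.support, ∃ τ, Sx.comp f τ = σ) :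
    ∃ y ∈ grS F E j, mapS f y = x := by
  have : x ∈ Finsupp.supported F F (Sx.comp f '' {τ : Sx E | (τ.1 : ℤ) = j}) := by
    intro σ hσ
    obtain ⟨τ, rfl⟩ := h σ hσ
    exact ⟨τ, hx hσ, rfl⟩
  rw [← Finsupp.lmapDomain_supported] at this
  obtain ⟨y, hy, rfl⟩ := this
  exact ⟨y, hy, rfl⟩

lemma lift_of_range {E E' : Type} [TopologicalSpace E] [TopologicalSpace E'] (f : C(E, E'))
    (hf : Topology.IsEmbedding f) (σ : Sx E') (h : Set.range σ.2 ⊆ Set.range f) :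
    ∃ τ, Sx.comp f τ = σ := by
  choose g hg using fun t => h (Set.mem_range_self t)
  refine ⟨⟨σ.1, g, ?_⟩, ?_⟩
  · rw [hf.continuous_iff]
    have : f ∘ g = σ.2 := funext hg
    rw [this]; exact σ.2.continuous
  · obtain ⟨n, σ⟩ := σ
    exact congrArg (Sigma.mk n) (ContinuousMap.ext hg)

lemma support_mapS {E E' : Type} [TopologicalSpace E] [TopologicalSpace E'] (f : C(E, E'))
    (hf : Function.Injective f) (x : Sx E →₀ F) {σ : Sx E} (hσ : σ ∈ x.support) :
    Sx.comp f σ ∈ (mapS f x).support := by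
  have hi : Function.Injective (Sx.comp f) := by
    rintro ⟨n, σ⟩ ⟨n', σ'⟩ h
    obtain rfl : n = n' := congrArg Sigma.fst h
    have h2 := eq_of_heq (Sigma.mk.inj h).2
    congr 1
    ext t
    exact hf (DFunLike.congr_fun h2 t)
  rw [Finsupp.mem_support_iff]
  change Finsupp.mapDomain _ x _ ≠ 0
  rw [Finsupp.mapDomain_apply hi]
  exact Finsupp.mem_support_iff.1 hσ

lemma mem_support_mapS {E E' : Type} [TopologicalSpace E] [TopologicalSpace E'] (f : C(E, E'))
    (x : Sx E →₀ F) {σ : Sx E'} (hσ : σ ∈ (mapS f x).support) :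
    ∃ τ ∈ x.support, Sx.comp f τ = σ := by
  classical
  simpa using Finsupp.mapDomain_support hσ

/-- Excision: a pullback square of open embeddings covering `X₃` has acyclic total cone. -/
lemma excision {X₀ X₁ X₂ X₃ : TopCat.{0}} {i₁ : X₀ ⟶ X₁} {i₂ : X₀ ⟶ X₂} {k₁ : X₁ ⟶ X₃}
    {k₂ : X₂ ⟶ X₃} (hi₁ : Topology.IsEmbedding i₁)
    (hk₁ : Topology.IsOpenEmbedding k₁) (hk₂ : Topology.IsOpenEmbedding k₂)
    (hcov : ∀ x, (∃ y, k₁ y = x) ∨ ∃ y, k₂ y = x)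
    (hpb : ∀ y₁ y₂, k₁ y₁ = k₂ y₂ → ∃ y₀, i₁ y₀ = y₁) (m : ℤ)
    (h' : (CS F).map i₁ ≫ (CS F).map k₁ = (CS F).map i₂ ≫ (CS F).map k₂) :
    (cone (coneMap ((CS F).map i₂) ((CS F).map k₁) h')).Van m := by
  -- chains of the pullback
  have pb : ∀ j, ∀ y₁ ∈ grS F X₁ j, ∀ y₂ : Sx X₂ →₀ F, mapS k₁.hom y₁ = mapS k₂.hom y₂ →
      ∃ y₀ ∈ grS F X₀ j, mapS i₁.hom y₀ = y₁ ∧ mapS i₂.hom y₀ = y₂ := by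
    intro j y₁ hy₁ y₂ e
    obtain ⟨y₀, hy₀, e₀⟩ := exists_mapS i₁.hom j hy₁ (fun σ hσ => by
      have h1 := support_mapS k₁.hom hk₁.injective y₁ hσ
      rw [e] at h1
      obtain ⟨τ, -, hτ⟩ := mem_support_mapS k₂.hom y₂ h1
      refine lift_of_range i₁.hom hi₁ σ ?_
      rintro _ ⟨t, rfl⟩
      obtain ⟨n, σ⟩ := σ
      obtain ⟨n', τ⟩ := τ
      obtain rfl : n' = n := congrArg Sigma.fst hτ
      have h2 := eq_of_heq (Sigma.mk.inj hτ).2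
      exact hpb _ _ (DFunLike.congr_fun h2 t).symm)
    refine ⟨y₀, hy₀, e₀, mapS_injective k₂.hom hk₂.injective ?_⟩
    rw [← e, ← e₀]
    exact (LinearMap.congr_fun (congrArg Hom.f h') y₀).symm
  -- small chains
  have sm : ∀ j, ∀ x ∈ grS F X₃ j, x ∈ small F (Set.range k₁) (Set.range k₂) →
      ∃ y₁ ∈ grS F X₁ j, ∃ y₂ ∈ grS F X₂ j, mapS k₁.hom y₁ + mapS k₂.hom y₂ = x := by
    intro j x hx hs
    have : x ∈ Finsupp.supported F F ({σ : Sx X₃ | (σ.1 : ℤ) = j ∧ Set.range σ.2 ⊆ Set.range k₁} ∪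
        {σ : Sx X₃ | (σ.1 : ℤ) = j ∧ Set.range σ.2 ⊆ Set.range k₂}) := by
      intro σ hσ
      exact (hs hσ).imp (fun h => ⟨hx hσ, h⟩) fun h => ⟨hx hσ, h⟩
    rw [Finsupp.supported_union] at this
    obtain ⟨x₁, h₁, x₂, h₂, rfl⟩ := Submodule.mem_sup.1 this
    obtain ⟨y₁, hy₁, e₁⟩ := exists_mapS k₁.hom j (x := x₁) (fun σ hσ => (h₁ hσ).1)
      fun σ hσ => lift_of_range _ hk₁.isEmbedding σ (h₁ hσ).2
    obtain ⟨y₂, hy₂, e₂⟩ := exists_mapS k₂.hom j (x := x₂) (fun σ hσ => (h₂ hσ).1)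
      fun σ hσ => lift_of_range _ hk₂.isEmbedding σ (h₂ hσ).2
    exact ⟨y₁, hy₁, y₂, hy₂, by rw [e₁, e₂]⟩
  have range_small : ∀ y₁ : Sx X₁ →₀ F, ∀ y₂ : Sx X₂ →₀ F,
      mapS k₁.hom y₁ + mapS k₂.hom y₂ ∈ small F (Set.range k₁) (Set.range k₂) := by
    intro y₁ y₂
    refine add_mem (fun σ hσ => ?_) fun σ hσ => ?_
    · obtain ⟨τ, -, rfl⟩ := mem_support_mapS k₁.hom y₁ hσ
      exact Or.inl (Set.range_comp_subset_range τ.2 k₁)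
    · obtain ⟨τ, -, rfl⟩ := mem_support_mapS k₂.hom y₂ hσ
      exact Or.inr (Set.range_comp_subset_range τ.2 k₂)
  have core : ∀ (j : ℤ) (x₀ : Sx X₀ →₀ F) (x₁ : Sx X₁ →₀ F) (x₂ : Sx X₂ →₀ F) (x₃ : Sx X₃ →₀ F),
      x₁ ∈ grS F X₁ (j - 1) → x₂ ∈ grS F X₂ (j - 1) → x₃ ∈ grS F X₃ j →
      mapS i₁.hom x₀ + dS F x₁ = 0 → mapS k₁.hom x₁ + (mapS k₂.hom x₂ + dS F x₃) = 0 →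
      ∃ y₀ ∈ grS F X₀ (j - 1), ∃ y₁ ∈ grS F X₁ j, ∃ y₂ ∈ grS F X₂ j, ∃ y₃ ∈ grS F X₃ (j + 1),
        dS F y₀ = x₀ ∧ mapS i₁.hom y₀ + dS F y₁ = -x₁ ∧ mapS i₂.hom y₀ + -dS F y₂ = x₂ ∧
        mapS k₁.hom y₁ + (mapS k₂.hom y₂ + dS F y₃) = x₃ := by
    intro j x₀ x₁ x₂ x₃ hx₁ hx₂ hx₃ d1b d2b
    have dx₃ : dS F x₃ = mapS k₁.hom (-x₁) + mapS k₂.hom (-x₂) := by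
      rw [map_neg, map_neg]
      rw [← add_assoc] at d2b
      rw [eq_neg_of_add_eq_zero_right d2b]; abel
    obtain ⟨n, hn⟩ := exists_small hk₁.isOpen_range hk₂.isOpen_range (by
      ext x
      simpa using hcov x) x₃
    obtain ⟨H, H1, H2, H3⟩ := exists_homotopy (F := F) (Set.range k₁) (Set.range k₂) n
    have hH := H1 x₃
    have hgr : x₃ - dS F (H x₃) ∈ grS F X₃ j :=
      sub_mem hx₃ (by simpa using dS_gr _ _ (H2 j x₃ hx₃))
    obtain ⟨y₁, hy₁, y₂, hy₂, e⟩ := sm j _ hgr (by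
      have : x₃ - dS F (H x₃) = (sdS^[n]) x₃ + H (dS F x₃) := by
        rw [sub_eq_iff_eq_add, add_assoc, add_comm (H _), hH]; abel
      rw [this]
      exact add_mem hn (H3 _ (by rw [dx₃]; exact range_small _ _)))
    have de : mapS k₁.hom (dS F y₁) + mapS k₂.hom (dS F y₂) =
        mapS k₁.hom (-x₁) + mapS k₂.hom (-x₂) := by
      rw [mapS_dS, mapS_dS, ← map_add, e, map_sub, dS_dS, sub_zero, dx₃]
    obtain ⟨y₀, hy₀, f₁, f₂⟩ := pb (j - 1) (-x₁ - dS F y₁) (sub_mem (neg_mem hx₁) (dS_gr _ _ hy₁))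
      (x₂ + dS F y₂) (by
        rw [map_sub, map_add, eq_sub_of_add_eq de, map_neg _ x₂]; abel)
    have d0 : dS F y₀ = x₀ := by
      refine mapS_injective i₁.hom hi₁.injective ?_
      rw [mapS_dS, f₁, map_sub, map_neg, dS_dS, sub_zero]
      exact neg_eq_of_add_eq_zero_left d1b
    refine ⟨y₀, hy₀, y₁, hy₁, y₂, hy₂, H x₃, H2 j x₃ hx₃, d0, ?_, ?_, ?_⟩
    · rw [f₁]; abel
    · rw [f₂]; abel
    · rw [← add_assoc, e]; abel
  refine van_cone_intro fun j _ => ?_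
  rintro ⟨x₀, x₁⟩ ⟨hx₀, hx₁⟩ ⟨x₂, x₃⟩ ⟨hx₂, hx₃⟩ d1 d2
  obtain ⟨y₀, hy₀, y₁, hy₁, y₂, hy₂, y₃, hy₃, e₀, e₁, e₂, e₃⟩ := core j x₀ x₁ x₂ x₃ hx₁ hx₂ hx₃
    (Prod.ext_iff.1 d1).2 (Prod.ext_iff.1 d2).2
  refine ⟨(y₀, y₁), ⟨hy₀, hy₁⟩, (y₂, y₃), ⟨?_, hy₃⟩, ?_, ?_⟩
  · rw [add_sub_cancel_right]; exact hy₂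
  · exact Prod.ext (congrArg Neg.neg e₀) e₁
  · exact Prod.ext e₂ e₃

/-- Singular chains of a directed union of open subspaces. -/
lemma DU_CS {ι : Type} [Preorder ι] [IsDirectedOrder ι] [Nonempty ι] {X : ι → TopCat.{0}}
    {Y : TopCat.{0}} (k : ∀ i, X i ⟶ Y) (hk : ∀ i, Topology.IsOpenEmbedding (k i))
    (hm : ∀ i i', i ≤ i' → Set.range (k i) ⊆ Set.range (k i'))
    (hcov : ∀ y, ∃ i, y ∈ Set.range (k i)) : DU fun i => (CS F).map (k i) where
  inj i := mapS_injective _ (hk i).injective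
  mono i i' h j x hx := exists_mapS (k i').hom j (((CS F).map (k i)).gr j x hx) fun σ hσ => by
    obtain ⟨τ, -, rfl⟩ := mem_support_mapS (k i).hom x hσ
    exact lift_of_range _ (hk i').isEmbedding _
      ((Set.range_comp_subset_range τ.2 (k i)).trans (hm i i' h))
  surj j x hx := by
    have key : ∀ s : Finset (Sx Y), ∃ i, ∀ σ ∈ s, Set.range σ.2 ⊆ Set.range (k i) := by
      classical
      intro s
      induction s using Finset.induction with
      | empty => exact ⟨Classical.arbitrary ι, by simp⟩
      | insert σ s _ ih =>
        obtain ⟨i, hi⟩ := ih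
        obtain ⟨i', hi'⟩ := (isCompact_range σ.2.continuous).elim_directed_cover
          (fun i => Set.range (k i)) (fun i => (hk i).isOpen_range)
          (fun y _ => Set.mem_iUnion.2 (hcov y)) (directed_of_isDirected_le hm)
        obtain ⟨l, h1, h2⟩ := exists_ge_ge i i'
        refine ⟨l, fun τ hτ => ?_⟩
        rcases Finset.mem_insert.1 hτ with rfl | hτ
        · exact hi'.trans (hm _ _ h2)
        · exact (hi τ hτ).trans (hm _ _ h1)
    obtain ⟨i, hi⟩ := key x.support
    obtain ⟨y, hy, e⟩ := exists_mapS (k i).hom j hx fun σ hσ =>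
      lift_of_range _ (hk i).isEmbedding σ (hi σ hσ)
    exact ⟨i, y, hy, e⟩

end excision

/-! ### Mayer–Vietoris for diagrams of spaces -/

section mayerVietoris

open Cx

variable (F : Type) [Field F] {J : Type 1} [Category.{0} J] (j₀ : J) (w : List (Shift J))

/-- Iterated derivatives of the chains of a diagram of spaces. -/
noncomputable def TS : (J ⥤ TopCat.{0}) ⥤ Cx F :=
  (Functor.whiskeringRight J TopCat.{0} (Cx F)).obj (CS F) ⋙ T j₀ w

/-- The iterated derivative of the chains of a diagram of spaces vanishes below `m / 2`. -/
def VS (E : J ⥤ TopCat.{0}) (m : ℤ) : Prop := ((TS F j₀ w).obj E).Van m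

/-- The relative version of `VS`, for a map of diagrams of spaces. -/
def VP {E E' : J ⥤ TopCat.{0}} (α : E ⟶ E') (m : ℤ) : Prop :=
  (cone ((TS F j₀ w).map α)).Van m

variable {F j₀ w}

lemma VP.comp {E E' E'' : J ⥤ TopCat.{0}} {α : E ⟶ E'} {β : E' ⟶ E''} {m : ℤ}
    (h : VP F j₀ w α m) (h' : VP F j₀ w β m) : VP F j₀ w (α ≫ β) m := by
  have := van_cone1 h h'
  rwa [← Functor.map_comp] at this

lemma VP.of_comp_left {E E' E'' : J ⥤ TopCat.{0}} {α : E ⟶ E'} {β : E' ⟶ E''} {m m' : ℤ}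
    (h : VP F j₀ w (α ≫ β) m) (h' : VP F j₀ w α m') (hm : m - 2 ≤ m') : VP F j₀ w β m := by
  refine van_cone2 (u := (TS F j₀ w).map α) ?_ h' hm
  rw [← Functor.map_comp]; exact h

lemma VP.of_comp_right {E E' E'' : J ⥤ TopCat.{0}} {α : E ⟶ E'} {β : E' ⟶ E''} {m m' : ℤ}
    (h : VP F j₀ w (α ≫ β) m) (h' : VP F j₀ w β m') (hm : m + 2 ≤ m') : VP F j₀ w α m := by
  refine van_cone3 (v := (TS F j₀ w).map β) ?_ h' hm
  rw [← Functor.map_comp]; exact h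

lemma VP.mono {E E' : J ⥤ TopCat.{0}} {α : E ⟶ E'} {m m' : ℤ} (h : VP F j₀ w α m) (hm : m' ≤ m) :
    VP F j₀ w α m' := Van.mono h hm

lemma VP_of_forall {E E' : J ⥤ TopCat.{0}} (α : E ⟶ E') (m : ℤ)
    (h : ∀ j, (cone ((CS F).map (α.app j))).Van m) : VP F j₀ w α m :=
  T_cone_van w _ h

lemma VP_iso {E E' : J ⥤ TopCat.{0}} (α : E ⟶ E') [IsIso α] (m : ℤ) : VP F j₀ w α m :=
  van_cone_of_iso _ m

lemma VS.of_VP {E E' : J ⥤ TopCat.{0}} {α : E ⟶ E'} {m : ℤ} (h : VS F j₀ w E m)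
    (h' : VP F j₀ w α m) : VS F j₀ w E' m := van_cone_v2 h h'

lemma CS_van_of_isEmpty (X : TopCat.{0}) [IsEmpty X] (m : ℤ) : ((CS F).obj X).Van m := by
  have : IsEmpty (Sx X) := ⟨fun σ => IsEmpty.false (σ.2 (stdSimplex.vertex 0))⟩
  have h : ∀ x : Sx X →₀ F, x = 0 := fun x => Subsingleton.elim _ _
  exact fun j _ z _ _ => ⟨0, zero_mem _, (map_zero _).trans (h z).symm⟩

lemma VS_of_isEmpty (E : J ⥤ TopCat.{0}) (h : ∀ j, IsEmpty (E.obj j)) (m : ℤ) :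
    VS F j₀ w E m := T_van' w fun j => have := h j; CS_van_of_isEmpty _ m

lemma VP_of_isEmpty {E E' : J ⥤ TopCat.{0}} (α : E ⟶ E') (h : ∀ j, IsEmpty (E.obj j)) {m : ℤ} :
    VP F j₀ w α m ↔ VS F j₀ w E' m :=
  ⟨fun h' => (VS_of_isEmpty E h m).of_VP h', fun h' => van_cone_v1 (VS_of_isEmpty E h m) h' (by omega)⟩

/-- A diagram of spaces over a fixed space `L`. -/
structure SpO (J : Type 1) [Category.{0} J] (L : Type) [TopologicalSpace L] where
  E : J ⥤ TopCat.{0}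
  p : ∀ j, C(E.obj j, L)
  nat : ∀ {j j' : J} (f : j ⟶ j') (x : E.obj j), p j' (E.map f x) = p j x

variable {L : Type} [TopologicalSpace L]

/-- The part of a diagram of spaces over `L` lying over a subset. -/
def SpO.res (A : SpO J L) (W : Set L) : J ⥤ TopCat.{0} where
  obj j := TopCat.of {x : A.E.obj j // A.p j x ∈ W}
  map {j j'} f := TopCat.ofHom ⟨fun x => ⟨A.E.map f x.1, by rw [A.nat]; exact x.2⟩, by fun_prop⟩
  map_id j := by
    refine TopCat.hom_ext (ContinuousMap.ext fun x => Subtype.ext ?_)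
    exact congrArg (fun u : A.E.obj j ⟶ A.E.obj j => u x.1) (A.E.map_id j)
  map_comp {i j k} f g := by
    refine TopCat.hom_ext (ContinuousMap.ext fun x => Subtype.ext ?_)
    exact congrArg (fun u : A.E.obj i ⟶ A.E.obj k => u x.1) (A.E.map_comp f g)

/-- The inclusion of the parts over nested subsets. -/
def SpO.incl (A : SpO J L) {W W' : Set L} (h : W ⊆ W') : A.res W ⟶ A.res W' where
  app j := TopCat.ofHom ⟨fun x => ⟨x.1, h x.2⟩, by fun_prop⟩

/-- The part over the whole of `L` is everything. -/
def SpO.univIso (A : SpO J L) : A.res Set.univ ≅ A.E :=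
  NatIso.ofComponents fun j => TopCat.isoOfHomeo (Homeomorph.Set.univ (A.E.obj j))

variable {A B : SpO J L} (f : A.E ⟶ B.E) (hf : ∀ j x, B.p j (f.app j x) = A.p j x)

/-- The restriction of a map over `L`. -/
def resMap (W : Set L) : A.res W ⟶ B.res W where
  app j := TopCat.ofHom ⟨fun x => ⟨f.app j x.1, by rw [hf]; exact x.2⟩, by fun_prop⟩
  naturality j j' g := by
    refine TopCat.hom_ext (ContinuousMap.ext fun x => Subtype.ext ?_)
    exact congrArg (fun u : A.E.obj j ⟶ B.E.obj j' => u x.1) (f.naturality g)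

lemma isOpenEmbedding_incl (A : SpO J L) {W W' : Set L} (h : W ⊆ W') (hW : IsOpen W) (j : J) :
    Topology.IsOpenEmbedding ((A.incl h).app j) := by
  have h1 : IsOpen {x : A.E.obj j | A.p j x ∈ W} := hW.preimage (A.p j).continuous
  have h2 : IsOpen {x : A.E.obj j | A.p j x ∈ W'} → True := fun _ => trivial
  refine Topology.IsOpenEmbedding.of_continuous_injective_isOpenMap
    ((A.incl h).app j).hom.continuous (fun x y e => Subtype.ext (congrArg (fun z => z.1) e)) ?_
  intro U hU
  obtain ⟨V, hV, rfl⟩ := isOpen_induced_iff.1 hU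
  refine isOpen_induced_iff.2 ⟨V ∩ {x | A.p j x ∈ W}, hV.inter h1, ?_⟩
  ext x
  constructor
  · rintro ⟨hx, hx'⟩; exact ⟨⟨x.1, hx'⟩, hx, rfl⟩
  · rintro ⟨y, hy, rfl⟩; exact ⟨hy, y.2⟩

lemma TS_sq {E₀ E₁ E₂ E₃ : J ⥤ TopCat.{0}} {i₁ : E₀ ⟶ E₁} {k₁ : E₁ ⟶ E₃} {i₂ : E₀ ⟶ E₂}
    {k₂ : E₂ ⟶ E₃} (h : i₁ ≫ k₁ = i₂ ≫ k₂) :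
    (TS F j₀ w).map i₁ ≫ (TS F j₀ w).map k₁ = (TS F j₀ w).map i₂ ≫ (TS F j₀ w).map k₂ := by
  rw [← Functor.map_comp, h, Functor.map_comp]

/-- Excision squares of diagrams of spaces. -/
lemma exc_square {E₀ E₁ E₂ E₃ : J ⥤ TopCat.{0}} {i₁ : E₀ ⟶ E₁} {k₁ : E₁ ⟶ E₃} {i₂ : E₀ ⟶ E₂}
    {k₂ : E₂ ⟶ E₃} (h : i₁ ≫ k₁ = i₂ ≫ k₂)
    (hi₁ : ∀ j, Topology.IsEmbedding (i₁.app j)) (hk₁ : ∀ j, Topology.IsOpenEmbedding (k₁.app j))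
    (hk₂ : ∀ j, Topology.IsOpenEmbedding (k₂.app j))
    (hcov : ∀ j x, (∃ y, k₁.app j y = x) ∨ ∃ y, k₂.app j y = x)
    (hpb : ∀ j y₁ y₂, k₁.app j y₁ = k₂.app j y₂ → ∃ y₀, i₁.app j y₀ = y₁) (m : ℤ) :
    (cone (coneMap ((TS F j₀ w).map i₂) ((TS F j₀ w).map k₁) (TS_sq h))).Van m := by
  have h' : Functor.whiskerRight i₁ (CS F) ≫ Functor.whiskerRight k₁ (CS F) =
      Functor.whiskerRight i₂ (CS F) ≫ Functor.whiskerRight k₂ (CS F) := by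
    rw [← Functor.whiskerRight_comp, ← Functor.whiskerRight_comp, h]
  exact T_sq w h' fun j => excision (hi₁ j) (hk₁ j) (hk₂ j) (hcov j) (hpb j) m _

/-- In an excision square, opposite sides are equally connected. -/
lemma VP_exc {E₀ E₁ E₂ E₃ : J ⥤ TopCat.{0}} {i₁ : E₀ ⟶ E₁} {k₁ : E₁ ⟶ E₃} {i₂ : E₀ ⟶ E₂}
    {k₂ : E₂ ⟶ E₃} (h : i₁ ≫ k₁ = i₂ ≫ k₂)
    (hi₁ : ∀ j, Topology.IsEmbedding (i₁.app j)) (hk₁ : ∀ j, Topology.IsOpenEmbedding (k₁.app j))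
    (hk₂ : ∀ j, Topology.IsOpenEmbedding (k₂.app j))
    (hcov : ∀ j x, (∃ y, k₁.app j y = x) ∨ ∃ y, k₂.app j y = x)
    (hpb : ∀ j y₁ y₂, k₁.app j y₁ = k₂.app j y₂ → ∃ y₀, i₁.app j y₀ = y₁) {m : ℤ} :
    VP F j₀ w i₁ m ↔ VP F j₀ w k₂ m :=
  ⟨fun H => van_cone_v2 H (exc_square h hi₁ hk₁ hk₂ hcov hpb m), fun H =>
    van_cone_v3 H (exc_square h hi₁ hk₁ hk₂ hcov hpb (m + 2)) le_rfl⟩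

lemma incl_sq (A : SpO J L) {W₀ W₁ W₂ W₃ : Set L} (h₁ : W₀ ⊆ W₁) (h₂ : W₁ ⊆ W₃)
    (h₃ : W₀ ⊆ W₂) (h₄ : W₂ ⊆ W₃) : A.incl h₁ ≫ A.incl h₂ = A.incl h₃ ≫ A.incl h₄ := rfl

lemma res_sq {W W' : Set L} (h : W ⊆ W') :
    A.incl h ≫ resMap f hf W' = resMap f hf W ≫ B.incl h := rfl

lemma res_sq' {W W' : Set L} (h : W ⊆ W') :
    resMap f hf W ≫ B.incl h = A.incl h ≫ resMap f hf W' := rfl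

lemma mv_square (A : SpO J L) {W₁ W₂ : Set L} (h₁ : IsOpen W₁) (h₂ : IsOpen W₂) (m : ℤ) :
    (cone (coneMap ((TS F j₀ w).map (A.incl Set.inter_subset_right))
      ((TS F j₀ w).map (A.incl Set.subset_union_left))
      (TS_sq (incl_sq A (Set.inter_subset_left (s := W₁) (t := W₂)) Set.subset_union_left
        Set.inter_subset_right Set.subset_union_right)))).Van m :=
  exc_square (incl_sq A _ _ _ _) (fun j => (isOpenEmbedding_incl A _ (h₁.inter h₂) j).isEmbedding)
    (fun j => isOpenEmbedding_incl A _ h₁ j) (fun j => isOpenEmbedding_incl A _ h₂ j)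
    (fun j x => x.2.imp (fun h => ⟨⟨x.1, h⟩, rfl⟩) fun h => ⟨⟨x.1, h⟩, rfl⟩)
    (fun j y₁ y₂ e => by
      have e' : y₁.1 = y₂.1 := congrArg (fun z => z.1) e
      exact ⟨⟨y₁.1, y₁.2, by rw [e']; exact y₂.2⟩, rfl⟩) m

lemma VP_union {W₁ W₂ : Set L} (h₁ : IsOpen W₁) (h₂ : IsOpen W₂) {m : ℤ}
    (hi : VP F j₀ w (resMap f hf (W₁ ∩ W₂)) m) (hv₁ : VP F j₀ w (resMap f hf W₁) m)
    (hv₂ : VP F j₀ w (resMap f hf W₂) m) : VP F j₀ w (resMap f hf (W₁ ∪ W₂)) m :=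
  mv_step _ _ (TS_sq (res_sq' f hf _)) (TS_sq (res_sq' f hf _)) (TS_sq (res_sq' f hf _))
    (TS_sq (res_sq' f hf _)) (fun m => mv_square A h₁ h₂ m) (fun m => mv_square B h₁ h₂ m)
    hi hv₁ hv₂

/-- The Mayer–Vietoris principle: if a map of diagrams over `L` is highly connected over each
member of a family of open sets closed under intersections, then it is so over each union of
members of the family. -/
theorem VP_sUnion {ℬ : Set (Set L)} (ho : ∀ W ∈ ℬ, IsOpen W)
    (hi : ∀ W ∈ ℬ, ∀ W' ∈ ℬ, W ∩ W' ∈ ℬ) {m : ℤ} (h : ∀ W ∈ ℬ, VP F j₀ w (resMap f hf W) m)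
    {S : Set (Set L)} (hS : S ⊆ ℬ) : VP F j₀ w (resMap f hf (⋃₀ S)) m := by
  have key : ∀ n : ℕ, ∀ l : List (Set L), l.length = n → (∀ W ∈ l, W ∈ ℬ) →
      VP F j₀ w (resMap f hf (⋃₀ {W | W ∈ l})) m := by
    intro n
    induction n with
    | zero =>
      intro l hl _
      obtain rfl := List.length_eq_zero_iff.1 hl
      exact (VP_of_isEmpty _ fun j => ⟨fun x => by simpa using x.2⟩).2
        (VS_of_isEmpty _ (fun j => ⟨fun x => by simpa using x.2⟩) m)
    | succ n ih =>
      intro l hl hB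
      cases l with
      | nil => simp at hl
      | cons W l =>
        have e : ⋃₀ {W' | W' ∈ W :: l} = W ∪ ⋃₀ {W' | W' ∈ l} := by
          ext x; simp
        have e2 : W ∩ ⋃₀ {W' | W' ∈ l} = ⋃₀ {W' | W' ∈ l.map fun W' => W ∩ W'} := by
          ext x
          simp only [Set.mem_inter_iff, Set.mem_sUnion, Set.mem_ofPred_eq, List.mem_map]
          constructor
          · rintro ⟨h1, W', h2, h3⟩; exact ⟨_, ⟨W', h2, rfl⟩, h1, h3⟩
          · rintro ⟨_, ⟨W', h2, rfl⟩, h1, h3⟩; exact ⟨h1, W', h2, h3⟩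
        have hB' : ∀ W' ∈ l, W' ∈ ℬ := fun W' h => hB W' (List.mem_cons_of_mem _ h)
        rw [e]
        refine VP_union f hf (W₂ := ⋃₀ {W' | W' ∈ l}) (ho W (hB W List.mem_cons_self)) (isOpen_sUnion fun W' h => ho _ (hB' _ h))
          ?_ (h W (hB W List.mem_cons_self)) (ih l (by simpa using hl) hB')
        rw [e2]
        refine ih _ (by simpa using hl) fun W' h => ?_
        obtain ⟨W'', h2, rfl⟩ := List.mem_map.1 h
        exact hi _ (hB W List.mem_cons_self) _ (hB' _ h2)
  -- the whole union is the directed union of the finite ones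
  have hsub : ∀ t : Finset S, ⋃₀ {W | ∃ i ∈ t, i.1 = W} ⊆ ⋃₀ S := fun t => by
    refine Set.sUnion_subset_sUnion ?_
    rintro _ ⟨i, -, rfl⟩; exact i.2
  have du : ∀ C : SpO J L, DU fun t : Finset S =>
      (TS F j₀ w).map (C.incl (hsub t)) := fun C =>
    DU.iterate w fun j => DU_CS _ (fun t => isOpenEmbedding_incl C _ (isOpen_sUnion (by
        rintro _ ⟨i, -, rfl⟩; exact ho _ (hS i.2))) j)
      (fun t t' htt => by
        rintro _ ⟨x, rfl⟩
        obtain ⟨_, ⟨i, hi, rfl⟩, hx⟩ := x.2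
        exact ⟨⟨x.1, _, ⟨i, htt hi, rfl⟩, hx⟩, rfl⟩)
      (fun y => by
        obtain ⟨W, hW, hy⟩ := y.2
        exact ⟨{⟨W, hW⟩}, ⟨y.1, W, ⟨⟨W, hW⟩, by simp, rfl⟩, hy⟩, rfl⟩)
  refine ((du A).cone (du B) (f := fun t => (TS F j₀ w).map (resMap f hf _))
    (g := (TS F j₀ w).map (resMap f hf _)) fun t =>
      TS_sq (res_sq' f hf _)).van fun t => ?_
  · have e : ({W | ∃ i ∈ t, i.1 = W} : Set (Set L)) = {W | W ∈ t.toList.map Subtype.val} := by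
      ext W; simp
    have := key _ (t.toList.map Subtype.val) rfl (by
      simp only [List.mem_map]
      rintro _ ⟨i, -, rfl⟩
      exact hS i.2)
    rw [← e] at this
    exact this

/-- The absolute version of `VP_sUnion`. -/
theorem VS_sUnion (A : SpO J L) {ℬ : Set (Set L)} (ho : ∀ W ∈ ℬ, IsOpen W)
    (hi : ∀ W ∈ ℬ, ∀ W' ∈ ℬ, W ∩ W' ∈ ℬ) {m : ℤ} (h : ∀ W ∈ ℬ, VS F j₀ w (A.res W) m)
    {S : Set (Set L)} (hS : S ⊆ ℬ) : VS F j₀ w (A.res (⋃₀ S)) m := by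
  -- compare with the empty subdiagram
  let A₀ : SpO J L :=
    { E := A.res ∅
      p := fun j => (A.p j).comp ⟨Subtype.val, continuous_subtype_val⟩
      nat := fun f x => A.nat f x.1 }
  let f : A₀.E ⟶ A.E := A.incl (Set.subset_univ _) ≫ A.univIso.hom
  have hf : ∀ j x, A.p j (f.app j x) = A₀.p j x := fun j x => rfl
  have he : ∀ W j, IsEmpty ((A₀.res W).obj j) := fun W j => ⟨fun x => x.1.2.elim⟩
  exact (VP_of_isEmpty _ (he _)).1 (VP_sUnion f hf ho hi
    (fun W hW => (VP_of_isEmpty (resMap f hf W) (he _)).2 (h W hW)) hS)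

end mayerVietoris

/-! ### Finite sets, injections and shifts -/

section shifts

open Cx

/-- Compatibility of shifts on two indexing categories with a functor between them. -/
structure ShMap {J K : Type 1} [Category.{0} J] [Category.{0} K] (Φ : J ⥤ K) (s : Shift J)
    (t : Shift K) where
  θ : ∀ j, Φ.obj (s.s.obj j) ≅ t.s.obj (Φ.obj j)
  nat : ∀ {j j' : J} (f : j ⟶ j'),
    Φ.map (s.s.map f) ≫ (θ j').hom = (θ j).hom ≫ t.s.map (Φ.map f)
  eta : ∀ j, Φ.map (s.η.app j) = (θ j).hom ≫ t.η.app (Φ.obj j)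

section

variable {F : Type} [Field F] {J K : Type 1} [Category.{0} J] [Category.{0} K] {Φ : J ⥤ K}

/-- Derivatives commute with restriction along compatible functors. -/
def ShMap.iso {s : Shift J} {t : Shift K} (h : ShMap Φ s t) (A : K ⥤ Cx F) :
    s.D.obj (Φ ⋙ A) ≅ Φ ⋙ t.D.obj A :=
  NatIso.ofComponents
    (fun j => coneIso (A.mapIso (h.θ j)) (Iso.refl _) (by
      have := congrArg A.map (h.eta j)
      rw [A.map_comp] at this
      exact (Category.comp_id _).trans this))
    (fun {j j'} f => by
      refine hom_ext fun ⟨x, y⟩ => Prod.ext ?_ rfl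
      have := congrArg A.map (h.nat f)
      rw [A.map_comp, A.map_comp] at this
      exact LinearMap.congr_fun (congrArg Hom.f this) x)

lemma T_restrict (j₀ : J) {w : List (Shift J)} {w' : List (Shift K)}
    (h : List.Forall₂ (fun s t => Nonempty (ShMap Φ s t)) w w') {m : ℤ} :
    ∀ A : K ⥤ Cx F, ((T j₀ w).obj (Φ ⋙ A)).Van m ↔ ((T (Φ.obj j₀) w').obj A).Van m := by
  induction h with
  | nil => exact fun A => Iff.rfl
  | cons h _ ih =>
    intro A
    obtain ⟨h⟩ := h
    exact (van_iff_of_iso ((T j₀ _).mapIso (h.iso A))).trans (ih _)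

/-- Derivatives along commuting shifts commute. -/
def ShMap.comm {s t : Shift J} (h : ShMap t.s s s) (hη : ∀ j, (h.θ j).hom ≫ s.s.map (t.η.app j) =
      t.η.app (s.s.obj j)) (A : J ⥤ Cx F) :
    s.D.obj (t.D.obj A) ≅ t.D.obj (s.D.obj A) :=
  s.transpD (t.eta A) ≪≫ coneNIso (h.iso A) (Iso.refl _) (by
    refine NatTrans.ext (funext fun j => ?_)
    refine hom_ext fun ⟨x, y⟩ => Prod.ext ?_ rfl
    have := congrArg A.map (hη j)
    rw [A.map_comp] at this
    exact (LinearMap.congr_fun (congrArg Hom.f this) x).symm)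

end

/-- Finite sets, with the opposites of injections as morphisms. -/
structure FIo : Type 1 where
  α : Type
  fin : Finite α

instance : Category.{0} FIo where
  Hom S T := T.α ↪ S.α
  id S := Function.Embedding.refl _
  comp f g := g.trans f

/-- The underlying map of a morphism of `FIo`. -/
def FIo.fn {S T : FIo} (f : S ⟶ T) : T.α ↪ S.α := f

lemma FIo.hom_ext {S T : FIo} {f g : S ⟶ T} (h : ∀ x : T.α, FIo.fn f x = FIo.fn g x) : f = g :=
  DFunLike.ext (F := T.α ↪ S.α) f g h

/-- Adding a point to a finite set. -/
def FIo.sh : Shift FIo where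
  s := { obj := fun S => ⟨Option S.α, have := S.fin; inferInstance⟩
         map := fun {S T} (f : T.α ↪ S.α) => (f.optionMap : Option T.α ↪ Option S.α)
         map_id := fun S => by
           refine DFunLike.ext (F := Option _ ↪ Option _) _ _ fun x => ?_
           cases x <;> rfl
         map_comp := fun f g => by
           refine DFunLike.ext (F := Option _ ↪ Option _) _ _ fun x => ?_
           cases x <;> rfl }
  η := { app := fun S => (Function.Embedding.some : S.α ↪ Option S.α)
         naturality := fun S T f => FIo.hom_ext fun x => rfl }

/-- The empty set. -/
def FIo.zero : FIo := ⟨Empty, inferInstance⟩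

/-- Pairs of finite sets, with the opposites of pairs of injections as morphisms. -/
structure FIt : Type 1 where
  α : Type
  β : Type
  fin : Finite α
  fin' : Finite β

instance : Category.{0} FIt where
  Hom S T := (T.α ↪ S.α) × (T.β ↪ S.β)
  id S := (Function.Embedding.refl _, Function.Embedding.refl _)
  comp f g := (g.1.trans f.1, g.2.trans f.2)

lemma FIt.hom_ext {S T : FIt} {f g : S ⟶ T} (h : ∀ x, f.1 x = g.1 x) (h₂ : ∀ x, f.2 x = g.2 x) :
    f = g := Prod.ext (DFunLike.ext _ _ h) (DFunLike.ext _ _ h₂)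

/-- Adding a point to the first set. -/
def FIt.sh₁ : Shift FIt where
  s := { obj := fun S => ⟨Option S.α, S.β, have := S.fin; inferInstance, S.fin'⟩
         map := fun {S T} f => ((f.1.optionMap : Option T.α ↪ Option S.α), f.2)
         map_id := fun S => FIt.hom_ext (fun x => by cases x <;> rfl) fun x => rfl
         map_comp := fun f g => FIt.hom_ext (fun x => by cases x <;> rfl) fun x => rfl }
  η := { app := fun S => ((Function.Embedding.some : S.α ↪ Option S.α), Function.Embedding.refl _)
         naturality := fun S T f => rfl }

/-- Adding a point to the second set. -/
def FIt.sh₂ : Shift FIt where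
  s := { obj := fun S => ⟨S.α, Option S.β, S.fin, have := S.fin'; inferInstance⟩
         map := fun {S T} f => (f.1, (f.2.optionMap : Option T.β ↪ Option S.β))
         map_id := fun S => FIt.hom_ext (fun x => rfl) fun x => by cases x <;> rfl
         map_comp := fun f g => FIt.hom_ext (fun x => rfl) fun x => by cases x <;> rfl }
  η := { app := fun S => (Function.Embedding.refl _, (Function.Embedding.some : S.β ↪ Option S.β))
         naturality := fun S T f => rfl }

/-- The pair of empty sets. -/
def FIt.zero : FIt := ⟨Empty, Empty, inferInstance, inferInstance⟩

/-- An equivalence as an isomorphism. -/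
def FIo.isoOf {S T : FIo} (e : S.α ≃ T.α) : S ≅ T where
  hom := e.symm.toEmbedding
  inv := e.toEmbedding
  hom_inv_id := FIo.hom_ext fun x => e.symm_apply_apply x
  inv_hom_id := FIo.hom_ext fun x => e.apply_symm_apply x

/-- Disjoint union. -/
def FIt.sum : FIt ⥤ FIo where
  obj S := ⟨S.α ⊕ S.β, have := S.fin; have := S.fin'; inferInstance⟩
  map {S T} f := (f.1.sumMap f.2 : T.α ⊕ T.β ↪ S.α ⊕ S.β)
  map_id S := by
    refine DFunLike.ext (F := S.α ⊕ S.β ↪ S.α ⊕ S.β) _ _ fun x => ?_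
    cases x <;> rfl
  map_comp {X _ Z} f g := by
    refine DFunLike.ext (F := Z.α ⊕ Z.β ↪ X.α ⊕ X.β) _ _ fun x => ?_
    cases x <;> rfl

/-- The pair consisting of a finite set and the empty set. -/
def FIo.inl : FIo ⥤ FIt where
  obj S := ⟨S.α, Empty, S.fin, inferInstance⟩
  map {S T} f := ((f : T.α ↪ S.α), Function.Embedding.refl _)
  map_id _ := rfl
  map_comp _ _ := rfl

/-- A point added to the first summand is a point added to the disjoint union. -/
def sumOption₁ (α β : Type) : Option α ⊕ β ≃ Option (α ⊕ β) where
  toFun x := x.elim (fun x => x.map Sum.inl) fun y => some (Sum.inr y)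
  invFun x := x.elim (Sum.inl none) fun y => y.elim (fun a => Sum.inl (some a)) Sum.inr
  left_inv := by rintro ((_ | x) | x) <;> rfl
  right_inv := by rintro (_ | x | x) <;> rfl

/-- A point added to the second summand is a point added to the disjoint union. -/
def sumOption₂ (α β : Type) : α ⊕ Option β ≃ Option (α ⊕ β) where
  toFun x := x.elim (fun x => some (Sum.inl x)) fun y => y.map Sum.inr
  invFun x := x.elim (Sum.inr none) fun y => y.elim Sum.inl fun a => Sum.inr (some a)
  left_inv := by rintro (x | (_ | x)) <;> rfl
  right_inv := by rintro (_ | x | x) <;> rfl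

/-- Under disjoint union, adding a point to the first set is adding a point. -/
def shSum₁ : ShMap FIt.sum FIt.sh₁ FIo.sh where
  θ S := FIo.isoOf (sumOption₁ S.α S.β)
  nat {_ j'} f := by
    apply FIo.hom_ext; intro (x : Option (j'.α ⊕ j'.β))
    rcases x with _ | x | x <;> rfl
  eta j := by
    apply FIo.hom_ext; intro (x : j.α ⊕ j.β)
    rcases x with x | x <;> rfl

/-- Under disjoint union, adding a point to the second set is adding a point. -/
def shSum₂ : ShMap FIt.sum FIt.sh₂ FIo.sh where
  θ S := FIo.isoOf (sumOption₂ S.α S.β)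
  nat {_ j'} f := by
    apply FIo.hom_ext; intro (x : Option (j'.α ⊕ j'.β))
    rcases x with _ | x | x <;> rfl
  eta j := by
    apply FIo.hom_ext; intro (x : j.α ⊕ j.β)
    rcases x with x | x <;> rfl

/-- Adding a point commutes with the inclusion of finite sets as pairs with empty second set. -/
def shInl : ShMap FIo.inl FIo.sh FIt.sh₁ where
  θ _ := Iso.refl _
  nat _ := rfl
  eta _ := rfl

/-- Adding points to the two members of a pair commutes. -/
def shComm : ShMap FIt.sh₂.s FIt.sh₁ FIt.sh₁ where
  θ _ := Iso.refl _
  nat _ := rfl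
  eta _ := FIt.hom_ext (fun x => rfl) fun x => by cases x <;> rfl

/-- The word with `n` letters `sh₁` and `b` letters `sh₂`. -/
def wd (n b : ℕ) : List (Shift FIt) := List.replicate n FIt.sh₁ ++ List.replicate b FIt.sh₂

variable {F : Type} [Field F]

lemma T_wd_swap (n b : ℕ) {m : ℤ} : ∀ Q : FIt ⥤ Cx F,
    ((T FIt.zero (wd n (b + 1))).obj Q).Van m ↔ ((T FIt.zero (FIt.sh₂ :: wd n b)).obj Q).Van m := by
  induction n with
  | zero => exact fun Q => Iff.rfl
  | succ n ih =>
    intro Q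
    refine (ih (FIt.sh₁.D.obj Q)).trans ?_
    exact van_iff_of_iso ((T FIt.zero (wd n b)).mapIso (shComm.comm (fun j => FIt.hom_ext (fun x => by cases x <;> rfl) fun x => rfl) Q).symm)

lemma T_sum (n b : ℕ) {m : ℤ} (A : FIo ⥤ Cx F) :
    ((T FIt.zero (wd n b)).obj (FIt.sum ⋙ A)).Van m ↔
      ((T FIo.zero (List.replicate (n + b) FIo.sh)).obj A).Van m := by
  have h : List.Forall₂ (fun s t => Nonempty (ShMap FIt.sum s t)) (wd n b)
      (List.replicate (n + b) FIo.sh) := by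
    rw [List.replicate_add]
    refine List.rel_append ?_ ?_
    · induction n with
      | zero => exact List.Forall₂.nil
      | succ n ih => exact List.Forall₂.cons ⟨shSum₁⟩ ih
    · induction b with
      | zero => exact List.Forall₂.nil
      | succ n ih => exact List.Forall₂.cons ⟨shSum₂⟩ ih
  refine (T_restrict FIt.zero h A).trans ?_
  have e : FIt.sum.obj FIt.zero ≅ FIo.zero := FIo.isoOf (Equiv.sumEmpty Empty Empty)
  clear h
  have key : ∀ (w : List (Shift FIo)) (A : FIo ⥤ Cx F),
      ((T (FIt.sum.obj FIt.zero) w).obj A).Van m ↔ ((T FIo.zero w).obj A).Van m := by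
    intro w
    induction w with
    | nil => exact fun A => van_iff_of_iso (A.mapIso e)
    | cons s w ih => exact fun A => ih (s.D.obj A)
  exact key _ A

lemma T_inl (n : ℕ) {m : ℤ} (A : FIt ⥤ Cx F) :
    ((T FIt.zero (wd n 0)).obj A).Van m ↔
      ((T FIo.zero (List.replicate n FIo.sh)).obj (FIo.inl ⋙ A)).Van m := by
  refine (T_restrict (Φ := FIo.inl) FIo.zero ?_ A).symm
  rw [wd, List.replicate_zero, List.append_nil]
  induction n with
  | zero => exact List.Forall₂.nil
  | succ n ih => exact List.Forall₂.cons ⟨shInl⟩ ih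

end shifts

/-! ### Products with locally Euclidean spaces -/

section products

open Cx

variable {F : Type} [Field F] {J : Type 1} [Category.{0} J] {j₀ : J} {w : List (Shift J)}

/-- The product of a fixed space with a diagram of spaces. -/
def prodTop (L : Type) [TopologicalSpace L] (B : J ⥤ TopCat.{0}) : J ⥤ TopCat.{0} where
  obj j := TopCat.of (L × B.obj j)
  map {j j'} f := TopCat.ofHom ⟨fun x => (x.1, B.map f x.2), by fun_prop⟩
  map_id j := TopCat.hom_ext (ContinuousMap.ext fun x => Prod.ext rfl
    (congrArg (fun u : B.obj j ⟶ B.obj j => u x.2) (B.map_id j)))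
  map_comp {i j k} f g := TopCat.hom_ext (ContinuousMap.ext fun x => Prod.ext rfl
    (congrArg (fun u : B.obj i ⟶ B.obj k => u x.2) (B.map_comp f g)))

/-- The projection of `prodTop` to the second factor. -/
def prodTopSnd (L : Type) [TopologicalSpace L] (B : J ⥤ TopCat.{0}) : prodTop L B ⟶ B where
  app j := TopCat.ofHom ⟨Prod.snd, continuous_snd⟩

/-- The section of `prodTopSnd` given by a point. -/
def prodTopPt {L : Type} [TopologicalSpace L] (x₀ : L) (B : J ⥤ TopCat.{0}) : B ⟶ prodTop L B where
  app j := TopCat.ofHom ⟨fun b => (x₀, b), by fun_prop⟩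

/-- Functoriality of `prodTop` in the first factor. -/
def prodTopMap {L L' : Type} [TopologicalSpace L] [TopologicalSpace L'] (u : C(L, L'))
    (B : J ⥤ TopCat.{0}) : prodTop L B ⟶ prodTop L' B where
  app j := TopCat.ofHom ⟨fun x => (u x.1, x.2), by fun_prop⟩

lemma VP_snd_of_homotopic {L : Type} [TopologicalSpace L] (x₀ : L)
    (h : (ContinuousMap.id L).Homotopic (ContinuousMap.const L x₀)) (B : J ⥤ TopCat.{0}) (m : ℤ) :
    VP F j₀ w (prodTopSnd L B) m := by
  refine VP_of_forall _ m fun j => acyclic_of_homotopyEquiv _ ((prodTopPt x₀ B).app j) ?_ ?_ m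
  · obtain ⟨H⟩ := h.symm
    exact ⟨{
      toFun := fun x => (H (x.1, x.2.1), x.2.2)
      continuous_toFun := by fun_prop
      map_zero_left := fun x => Prod.ext (H.map_zero_left _) rfl
      map_one_left := fun x => Prod.ext (H.map_one_left _) rfl }⟩
  · exact ContinuousMap.Homotopic.refl _

lemma VP_pt {L : Type} [TopologicalSpace L] (x₀ : L) {B : J ⥤ TopCat.{0}} {m : ℤ}
    (h : VP F j₀ w (prodTopSnd L B) (m + 2)) : VP F j₀ w (prodTopPt x₀ B) m :=
  have e : prodTopPt x₀ B ≫ prodTopSnd L B = 𝟙 B := rfl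
  VP.of_comp_right (β := prodTopSnd L B) (e ▸ VP_iso (𝟙 B) m) h le_rfl

/-- The product with the unit interval. -/
lemma VP_unitInterval (x₀ : unitInterval) (B : J ⥤ TopCat.{0}) (m : ℤ) :
    VP F j₀ w (prodTopPt x₀ B) m := by
  refine VP_pt x₀ (VP_snd_of_homotopic 0 ⟨?_⟩ B _)
  exact {
    toFun := fun x => unitInterval.symm x.1 * x.2
    continuous_toFun := by fun_prop
    map_zero_left := fun x => by simp
    map_one_left := fun x => by simp }

/-- Naturally homotopic maps of diagrams are equally connected. -/
lemma VP_of_homotopy {E E' : J ⥤ TopCat.{0}} (H : prodTop unitInterval E ⟶ E') {m : ℤ}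
    (h : VP F j₀ w (prodTopPt 0 E ≫ H) m) : VP F j₀ w (prodTopPt 1 E ≫ H) m :=
  (VP_unitInterval 1 E m).comp (h.of_comp_left (VP_unitInterval 0 E m) (by omega))

/-- A discrete copy of a type. -/
def Dis (L : Type) : Type := L

instance (L : Type) : TopologicalSpace (Dis L) := ⊥
instance (L : Type) : DiscreteTopology (Dis L) := ⟨rfl⟩

/-- The continuous identity from the discrete copy. -/
def Dis.out (L : Type) [TopologicalSpace L] : C(Dis L, L) :=
  ⟨fun x => x, continuous_of_discreteTopology⟩

/-- The product with `L`, as a diagram over `L`. -/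
def prodOver (L : Type) [TopologicalSpace L] (B : J ⥤ TopCat.{0}) : SpO J L where
  E := prodTop L B
  p _ := ⟨Prod.fst, continuous_fst⟩
  nat _ _ := rfl

/-- The product with the discrete copy of `L`, as a diagram over `L`. -/
def prodOverDis (L : Type) [TopologicalSpace L] (B : J ⥤ TopCat.{0}) : SpO J L where
  E := prodTop (Dis L) B
  p _ := (Dis.out L).comp ⟨Prod.fst, continuous_fst⟩
  nat _ _ := rfl

/-- The map from the product with the discrete copy of `L` to the product with `L`. -/
def prodDisMap (L : Type) [TopologicalSpace L] (B : J ⥤ TopCat.{0}) :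
    (prodOverDis L B).E ⟶ (prodOver L B).E := prodTopMap (Dis.out L) B

/-- The part of a product over a subset, as a product. -/
def resProdIso (L : Type) [TopologicalSpace L] (B : J ⥤ TopCat.{0}) (W : Set L) :
    (prodOver L B).res W ≅ prodTop W B where
  hom := { app := fun j => TopCat.ofHom
            ⟨fun x => (⟨x.1.1, x.2⟩, x.1.2), by
              refine Continuous.prodMk (Continuous.subtype_mk ?_ _) ?_
              · exact continuous_fst.comp continuous_subtype_val
              · exact continuous_snd.comp continuous_subtype_val⟩ }
  inv := { app := fun j => TopCat.ofHom ⟨fun x => ⟨(x.1.1, x.2), x.1.2⟩, by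
              refine Continuous.subtype_mk ?_ _
              exact (continuous_subtype_val.comp continuous_fst).prodMk continuous_snd⟩ }

lemma VS_iso {E E' : J ⥤ TopCat.{0}} (e : E ≅ E') {m : ℤ} : VS F j₀ w E m ↔ VS F j₀ w E' m :=
  van_iff_of_iso ((TS F j₀ w).mapIso e)

lemma VS_dis {L : Type} [TopologicalSpace L] {B : J ⥤ TopCat.{0}} {m : ℤ} (hB : VS F j₀ w B m)
    (W : Set L) : VS F j₀ w ((prodOverDis L B).res W) m := by
  have h := VS_sUnion (F := F) (j₀ := j₀) (w := w) (m := m) (prodOver (Dis L) B)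
    (ℬ := {W : Set (Dis L) | W.Subsingleton})
    (fun W _ => isOpen_discrete W) (fun W hW W' _ => hW.anti Set.inter_subset_left) ?_
    (S := {V | ∃ x ∈ W, V = {x}}) (by rintro _ ⟨x, -, rfl⟩; exact Set.subsingleton_singleton)
  · have e : ⋃₀ {V : Set (Dis L) | ∃ x ∈ W, V = {x}} = W := by
      ext x
      constructor
      · rintro ⟨_, ⟨y, hy, rfl⟩, rfl⟩; exact hy
      · exact fun hx => ⟨{x}, ⟨x, hx, rfl⟩, rfl⟩
    rw [e] at h
    exact h
  · intro V hV
    rcases hV.eq_empty_or_singleton with rfl | ⟨x, rfl⟩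
    · exact VS_of_isEmpty _ (fun j => ⟨by rintro ⟨x, hx⟩; exact hx⟩) m
    · rw [VS_iso (resProdIso _ _ _)]
      refine hB.of_VP (α := prodTopPt ⟨x, rfl⟩ B) (VP_pt _ (VP_snd_of_homotopic ⟨x, rfl⟩ ?_ _ _))
      have : ContinuousMap.id ({x} : Set (Dis L)) = ContinuousMap.const _ ⟨x, rfl⟩ :=
        ContinuousMap.ext fun y => Subtype.ext y.2
      rw [this]

/-- Every point has an open neighbourhood homeomorphic to an open subset of `E`. -/
def LocE (E L : Type) [TopologicalSpace E] [TopologicalSpace L] : Prop :=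
  ∀ x : L, ∃ (V : Set E) (ψ : V → L), IsOpen V ∧ Topology.IsOpenEmbedding ψ ∧ x ∈ Set.range ψ

variable {E L : Type} [NormedAddCommGroup E] [NormedSpace ℝ E] [TopologicalSpace L]

lemma VP_dis_contractible {B : J ⥤ TopCat.{0}} {m : ℤ} (hB : VS F j₀ w B m) (W : Set L)
    [ContractibleSpace W] :
    VP F j₀ w (resMap (prodDisMap L B) (fun _ _ => rfl) W) (m + 2) := by
  obtain ⟨x₀, hx₀⟩ := id_nullhomotopic W
  let α : B ⟶ (prodOverDis L B).res W :=
    { app := fun j => TopCat.ofHom ⟨fun b => ⟨(x₀.1, b), x₀.2⟩, by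
        refine Continuous.subtype_mk ?_ _
        have : Continuous fun b : B.obj j => ((x₀.1, b) : Dis L × B.obj j) :=
          Continuous.prodMk continuous_const continuous_id
        exact this⟩ }
  refine VP.of_comp_left (α := α) ?_ (m' := m) (van_cone_v1 (m' := m) hB (VS_dis hB W) (by omega)) (by omega)
  have h : VP F j₀ w (prodTopPt x₀ B) (m + 2) := VP_pt _ (VP_snd_of_homotopic x₀ hx₀ _ _)
  have e : α ≫ resMap (prodDisMap L B) (fun _ _ => rfl) W =
      prodTopPt x₀ B ≫ (resProdIso L B W).inv :=
    NatTrans.ext (funext fun j => TopCat.hom_ext (ContinuousMap.ext fun x => rfl))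
  rw [e]
  exact h.comp (VP_iso (resProdIso L B W).inv _)

lemma VP_dis {B : J ⥤ TopCat.{0}} {m : ℤ} (hB : VS F j₀ w B m) (hL : LocE E L) {W : Set L}
    (hW : IsOpen W) : VP F j₀ w (resMap (prodDisMap L B) (fun _ _ => rfl) W) (m + 2) := by
  -- open subsets of charts are covered by convex ones
  have h1 : ∀ (V : Set E) (ψ : V → L), IsOpen V → Topology.IsOpenEmbedding ψ → ∀ U : Set L, IsOpen U →
      U ⊆ Set.range ψ → VP F j₀ w (resMap (prodDisMap L B) (fun _ _ => rfl) U) (m + 2) := by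
    intro V ψ hV hψ U hU hUψ
    let ℬ : Set (Set L) := {U' | ∃ C : Set E, IsOpen C ∧ Convex ℝ C ∧ C ⊆ V ∧
      U' = ψ '' (Subtype.val ⁻¹' C)}
    have hU2 : U = ⋃₀ {U' | U' ∈ ℬ ∧ U' ⊆ U} := by
      refine Set.Subset.antisymm (fun x hx => ?_) (Set.sUnion_subset fun U' h => h.2)
      obtain ⟨y, rfl⟩ := hUψ hx
      have hO : IsOpen (Subtype.val '' (ψ ⁻¹' U)) :=
        hV.isOpenMap_subtype_val _ (hU.preimage hψ.continuous)
      obtain ⟨ε, hε, hb⟩ := Metric.isOpen_iff.1 hO y ⟨y, hx, rfl⟩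
      refine ⟨ψ '' (Subtype.val ⁻¹' Metric.ball y.1 ε), ⟨⟨_, Metric.isOpen_ball, convex_ball _ _, ?_,
        rfl⟩, ?_⟩, ⟨y, Metric.mem_ball_self hε, rfl⟩⟩
      · intro z hz
        obtain ⟨z', -, rfl⟩ := hb hz
        exact z'.2
      · rintro _ ⟨z, hz, rfl⟩
        obtain ⟨z', h, e⟩ := hb hz
        rw [← Subtype.ext e]; exact h
    rw [hU2]
    refine VP_sUnion (ℬ := ℬ) _ (fun _ _ => rfl) ?_ ?_ ?_ fun U' h => h.1
    · rintro _ ⟨C, hC, -, -, rfl⟩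
      exact hψ.isOpenMap _ (hC.preimage continuous_subtype_val)
    · rintro _ ⟨C, hC, hc, hs, rfl⟩ _ ⟨C', hC', hc', hs', rfl⟩
      exact ⟨C ∩ C', hC.inter hC', hc.inter hc', Set.inter_subset_left.trans hs, by
        rw [Set.preimage_inter, Set.image_inter hψ.injective]⟩
    · rintro _ ⟨C, hC, hc, hs, rfl⟩
      rcases C.eq_empty_or_nonempty with rfl | hne
      · refine (VP_of_isEmpty _ fun j => ⟨?_⟩).2 (VS_of_isEmpty _ (fun j => ⟨?_⟩) _) <;>
        · rintro ⟨x, y, hy, -⟩; exact hy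
      · have : ContractibleSpace C := hc.contractibleSpace hne
        have emb : Topology.IsEmbedding (ψ ∘ Set.inclusion hs) :=
          hψ.isEmbedding.comp (Topology.IsEmbedding.inclusion hs)
        have : ContractibleSpace (Set.range (ψ ∘ Set.inclusion hs)) :=
          emb.toHomeomorph.symm.contractibleSpace
        have e : Set.range (ψ ∘ Set.inclusion hs) = ψ '' (Subtype.val ⁻¹' C) := by
          rw [Set.range_comp, Set.range_inclusion]; rfl
        rw [e] at this
        exact VP_dis_contractible hB _
  let ℬ : Set (Set L) := {U | IsOpen U ∧ ∃ (V : Set E) (ψ : V → L), IsOpen V ∧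
    Topology.IsOpenEmbedding ψ ∧ U ⊆ Set.range ψ}
  have hW2 : W = ⋃₀ {U | U ∈ ℬ ∧ U ⊆ W} := by
    refine Set.Subset.antisymm (fun x hx => ?_) (Set.sUnion_subset fun U' h => h.2)
    obtain ⟨V, ψ, hV, hψ, hx'⟩ := hL x
    exact ⟨W ∩ Set.range ψ, ⟨⟨hW.inter hψ.isOpen_range, V, ψ, hV, hψ, Set.inter_subset_right⟩,
      Set.inter_subset_left⟩, hx, hx'⟩
  rw [hW2]
  refine VP_sUnion (ℬ := ℬ) _ (fun _ _ => rfl) (fun U hU => hU.1) ?_ ?_ fun U' h => h.1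
  · rintro U ⟨hU, V, ψ, hV, hψ, hs⟩ U' ⟨hU', -⟩
    exact ⟨hU.inter hU', V, ψ, hV, hψ, Set.inter_subset_left.trans hs⟩
  · rintro U ⟨hU, V, ψ, hV, hψ, hs⟩
    exact h1 V ψ hV hψ U hU hs

/-- Taking the product with a locally Euclidean space preserves vanishing. -/
theorem VS_prod {B : J ⥤ TopCat.{0}} {m : ℤ} (hB : VS F j₀ w B m) (hL : LocE E L) {W : Set L}
    (hW : IsOpen W) : VS F j₀ w (prodTop W B) m :=
  (VS_iso (resProdIso L B W)).1 ((VS_dis hB W).of_VP ((VP_dis hB hL hW).mono (by omega)))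

/-- If `L` is path connected and locally Euclidean, the projection `L × B → B` is two steps more
connected than `B`: the inclusion `L^δ × B → L × B` of the discrete fibres is homotopic to a map
that factors through `{x₀} × B`. -/
theorem VP_prod_snd {B : J ⥤ TopCat.{0}} {m : ℤ} (hB : VS F j₀ w B m) (hL : LocE E L)
    [PathConnectedSpace L] : VP F j₀ w (prodTopSnd L B) (m + 4) := by
  obtain ⟨x₀⟩ := PathConnectedSpace.nonempty (X := L)
  have hI : VP F j₀ w (prodTopMap (Dis.out L) B) (m + 2) :=
by
    have h := ((VP_iso (prodOverDis L B).univIso.inv _).comp (VP_dis hB hL isOpen_univ)).comp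
      (VP_iso (prodOver L B).univIso.hom _)
    have e : ((prodOverDis L B).univIso.inv ≫
        resMap (prodDisMap L B) (fun _ _ => rfl) Set.univ) ≫ (prodOver L B).univIso.hom =
        prodTopMap (Dis.out L) B :=
      NatTrans.ext (funext fun j => TopCat.hom_ext (ContinuousMap.ext fun x => rfl))
    rw [e] at h
    exact h
  have hD : VS F j₀ w (prodTop (Dis L) B) m := (VS_iso (prodOverDis L B).univIso).1 (VS_dis hB _)
  let γ : ∀ x : Dis L, Path (Dis.out L x) x₀ := fun x => PathConnectedSpace.somePath _ _
  let H : prodTop unitInterval (prodTop (Dis L) B) ⟶ prodTop L B :=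
    { app := fun j => TopCat.ofHom ⟨fun x => (γ x.2.1 x.1, x.2.2), by
        refine Continuous.prodMk ?_ (by fun_prop)
        have : Continuous fun y : unitInterval × Dis L => γ y.2 y.1 :=
          continuous_prod_of_discrete_right.2 fun x => (γ x).continuous
        exact this.comp (continuous_fst.prodMk (continuous_fst.comp continuous_snd))⟩ }
  have h0 : VP F j₀ w (prodTopPt 0 _ ≫ H) (m + 2) := by
    have e : prodTopPt 0 _ ≫ H = prodTopMap (Dis.out L) B :=
      NatTrans.ext (funext fun j => TopCat.hom_ext (ContinuousMap.ext fun x =>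
        Prod.ext (γ x.1).source rfl))
    rw [e]; exact hI
  have h1 : VP F j₀ w (prodTopSnd (Dis L) B ≫ prodTopPt x₀ B) (m + 2) := by
    have e : prodTopPt 1 _ ≫ H = prodTopSnd (Dis L) B ≫ prodTopPt x₀ B :=
      NatTrans.ext (funext fun j => TopCat.hom_ext (ContinuousMap.ext fun x =>
        Prod.ext (γ x.1).target rfl))
    rw [← e]; exact VP_of_homotopy H h0
  have h2 : VP F j₀ w (prodTopPt x₀ B) (m + 2) :=
    h1.of_comp_left (van_cone_v1 (m' := m) hD hB (by omega)) (by omega : m + 2 - 2 ≤ m)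
  have e : prodTopPt x₀ B ≫ prodTopSnd L B = 𝟙 B :=
    NatTrans.ext (funext fun j => TopCat.hom_ext (ContinuousMap.ext fun x => rfl))
  refine VP.of_comp_left (α := prodTopPt x₀ B) (m := m + 4) ?_ h2 (by omega)
  rw [e]
  exact VP_iso (𝟙 B) (m + 4)

end products

/-! ### Diagrams of configuration spaces -/

section confs

open Cx

variable {F : Type} [Field F] (M : Type) [TopologicalSpace M]

/-- The configuration spaces of finite subsets of `M`, with the maps that forget points. -/
def Conf : FIo ⥤ TopCat.{0} where
  obj S := TopCat.of {c : S.α → M // Function.Injective c}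
  map f := TopCat.ofHom ⟨fun c => ⟨c.1 ∘ FIo.fn f, c.2.comp (FIo.fn f).injective⟩, by
    refine Continuous.subtype_mk (continuous_pi fun i => ?_) _
    exact (continuous_apply _).comp continuous_subtype_val⟩

variable {J : Type 1} [Category.{0} J]

/-- A diagram of spaces of functions `G j → M` with a parameter in `K`, cut out by conditions `R`. -/
def subT (K : Type) [TopologicalSpace K] (G : J ⥤ FIo)
    (R : ∀ j, K → ((G.obj j).α → M) → Prop)
    (hR : ∀ {j j'} (f : j ⟶ j') k c, R j k c → R j' k (c ∘ FIo.fn (G.map f))) :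
    J ⥤ TopCat.{0} where
  obj j := TopCat.of {x : K × ((G.obj j).α → M) // R j x.1 x.2}
  map f := TopCat.ofHom ⟨fun x => ⟨(x.1.1, x.1.2 ∘ FIo.fn (G.map f)), hR f _ _ x.2⟩, by
    refine Continuous.subtype_mk (Continuous.prodMk ?_ (continuous_pi fun i => ?_)) _
    · exact continuous_fst.comp continuous_subtype_val
    · exact (continuous_apply _).comp (continuous_snd.comp continuous_subtype_val)⟩
  map_id j := by
    refine TopCat.hom_ext (ContinuousMap.ext fun x => Subtype.ext (Prod.ext rfl (funext fun i => ?_)))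
    change x.1.2 (FIo.fn (G.map (𝟙 j)) i) = x.1.2 i
    rw [G.map_id]; rfl
  map_comp {i j k} f g := by
    refine TopCat.hom_ext (ContinuousMap.ext fun x => Subtype.ext (Prod.ext rfl (funext fun a => ?_)))
    change x.1.2 (FIo.fn (G.map (f ≫ g)) a) = x.1.2 (FIo.fn (G.map f) (FIo.fn (G.map g) a))
    rw [G.map_comp]; rfl

/-- A configuration indexed by `S ⊔ T` together with a point `y` of `M` distinct from the points
indexed by `S`. -/
def XM : SpO FIt M where
  E := subT M M FIt.sum (fun S y c => Function.Injective c ∧ ∀ i : S.α, c (Sum.inl i) ≠ y)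
    (fun f _ _ h => ⟨h.1.comp (FIo.fn (FIt.sum.map f)).injective, fun i => h.2 (f.1 i)⟩)
  p _ := ⟨fun x => x.1.1, continuous_fst.comp continuous_subtype_val⟩
  nat _ _ := rfl

/-- A configuration indexed by `S ⊔ T` together with an arbitrary point of `M`. -/
def YM : SpO FIt M where
  E := subT M M FIt.sum (fun _ _ c => Function.Injective c)
    (fun f _ _ h => h.comp (FIo.fn (FIt.sum.map f)).injective)
  p _ := ⟨fun x => x.1.1, continuous_fst.comp continuous_subtype_val⟩
  nat _ _ := rfl

/-- A configuration indexed by `S` together with a further point. -/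
def PM : SpO FIo M where
  E := subT M M (𝟭 FIo) (fun _ y c => Function.Injective c ∧ ∀ i, c i ≠ y)
    (fun f _ _ h => ⟨h.1.comp (FIo.fn f).injective, fun _ => h.2 _⟩)
  p _ := ⟨fun x => x.1.1, continuous_fst.comp continuous_subtype_val⟩
  nat _ _ := rfl

/-- The inclusion of `XM` into `YM`. -/
def XY : (XM M).E ⟶ (YM M).E where
  app S := TopCat.ofHom ⟨fun x => ⟨x.1, x.2.1⟩, by fun_prop⟩

variable {M} in
/-- A configuration indexed by `S ⊔ T` together with two points of `W`, each distinct from the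
points of the configuration. -/
def Nb (W : Set M) : FIt ⥤ TopCat.{0} :=
  subT M (M × M) FIt.sum (fun _ k c => (k.1 ∈ W ∧ k.2 ∈ W) ∧ Function.Injective c ∧
    ∀ i, c i ≠ k.1 ∧ c i ≠ k.2)
    (fun f _ _ h => ⟨h.1, h.2.1.comp (FIo.fn (FIt.sum.map f)).injective, fun _ => h.2.2 _⟩)

variable {M} in
/-- The part of `Nb` where the two points are distinct. -/
def Nb₀ (W : Set M) : FIt ⥤ TopCat.{0} :=
  subT M (M × M) FIt.sum (fun _ k c => k.1 ≠ k.2 ∧ (k.1 ∈ W ∧ k.2 ∈ W) ∧ Function.Injective c ∧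
    ∀ i, c i ≠ k.1 ∧ c i ≠ k.2)
    (fun f _ _ h => ⟨h.1, h.2.1, h.2.2.1.comp (FIo.fn (FIt.sum.map f)).injective,
      fun _ => h.2.2.2 _⟩)

/-- The bijection that exchanges the two added points. -/
def exch (α β : Type) : α ⊕ Option β ≃ Option α ⊕ β :=
  (sumOption₂ α β).trans (sumOption₁ α β).symm

variable {M} (W : Set M)

lemma XM_fst (S : FIt) : Continuous fun x : ((XM M).res W).obj S => (x.1.1.1 : M) :=
  Continuous.comp (Y := (XM M).E.obj S) (g := fun x => (x.1.1 : M))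
    (continuous_fst.comp continuous_subtype_val) continuous_subtype_val

lemma XM_snd (S : FIt) (i : S.α ⊕ S.β) :
    Continuous fun x : ((XM M).res W).obj S => (x.1.1.2 i : M) :=
  Continuous.comp (Y := (XM M).E.obj S) (g := fun x => (x.1.2 i : M))
    ((continuous_apply i).comp (continuous_snd.comp continuous_subtype_val)) continuous_subtype_val

lemma XM_emb (S : FIt) : Topology.IsEmbedding
    fun x : ((XM M).res W).obj S => (x.1.1 : M × (S.α ⊕ S.β → M)) :=
  Topology.IsEmbedding.comp (Y := (XM M).E.obj S) (g := fun x => (x.1 : M × (S.α ⊕ S.β → M)))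
    .subtypeVal .subtypeVal

lemma YM_fst (S : FIt) : Continuous fun x : ((YM M).res W).obj S => (x.1.1.1 : M) :=
  Continuous.comp (Y := (YM M).E.obj S) (g := fun x => (x.1.1 : M))
    (continuous_fst.comp continuous_subtype_val) continuous_subtype_val

lemma YM_snd (S : FIt) (i : S.α ⊕ S.β) :
    Continuous fun x : ((YM M).res W).obj S => (x.1.1.2 i : M) :=
  Continuous.comp (Y := (YM M).E.obj S) (g := fun x => (x.1.2 i : M))
    ((continuous_apply i).comp (continuous_snd.comp continuous_subtype_val)) continuous_subtype_val

/-- Forgetting that `y` is distinct from the added point. -/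
def ax : FIt.sh₁.s ⋙ (XM M).res W ⟶ FIt.sh₂.s ⋙ (XM M).res W where
  app S := TopCat.ofHom ⟨fun x => ⟨⟨(x.1.1.1, x.1.1.2 ∘ exch S.α S.β),
      x.1.2.1.comp (exch S.α S.β).injective, fun i => x.1.2.2 (some i)⟩, x.2⟩, by
    refine Continuous.subtype_mk (Continuous.subtype_mk (Continuous.prodMk ?_
      (continuous_pi fun i => ?_)) _) _
    · exact XM_fst W (FIt.sh₁.s.obj S)
    · exact XM_snd W (FIt.sh₁.s.obj S) _⟩
  naturality S T f := by
    refine TopCat.hom_ext (ContinuousMap.ext fun x => Subtype.ext (Subtype.ext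
      (Prod.ext rfl (funext fun i => ?_))))
    rcases i with i | (_ | i) <;> rfl

/-- The analogue of `ax` for `YM`. -/
def ay : FIt.sh₁.s ⋙ (YM M).res W ⟶ FIt.sh₂.s ⋙ (YM M).res W where
  app S := TopCat.ofHom ⟨fun x => ⟨⟨(x.1.1.1, x.1.1.2 ∘ exch S.α S.β),
      x.1.2.comp (exch S.α S.β).injective⟩, x.2⟩, by
    refine Continuous.subtype_mk (Continuous.subtype_mk (Continuous.prodMk ?_
      (continuous_pi fun i => ?_)) _) _
    · exact YM_fst W (FIt.sh₁.s.obj S)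
    · exact YM_snd W (FIt.sh₁.s.obj S) _⟩
  naturality S T f := by
    refine TopCat.hom_ext (ContinuousMap.ext fun x => Subtype.ext (Subtype.ext
      (Prod.ext rfl (funext fun i => ?_))))
    rcases i with i | (_ | i) <;> rfl

lemma VP_ay (j₀ : FIt) (w : List (Shift FIt)) (m : ℤ) : VP F j₀ w (ay W) m := by
  refine VP_of_forall _ m fun S => acyclic_of_homotopyEquiv _ (TopCat.ofHom
    ⟨fun x => ⟨⟨(x.1.1.1, x.1.1.2 ∘ (exch S.α S.β).symm),
      x.1.2.comp (exch S.α S.β).symm.injective⟩, x.2⟩, ?_⟩) ?_ ?_ m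
  · refine Continuous.subtype_mk (Continuous.subtype_mk (Continuous.prodMk ?_
      (continuous_pi fun i => ?_)) _) _
    · exact YM_fst W (FIt.sh₂.s.obj S)
    · exact YM_snd W (FIt.sh₂.s.obj S) _
  · convert ContinuousMap.Homotopic.refl _ using 1
    refine ContinuousMap.ext fun x => Subtype.ext (Subtype.ext (Prod.ext rfl (funext fun i => ?_)))
    exact congrArg x.1.1.2 ((exch S.α S.β).apply_symm_apply i).symm
  · convert ContinuousMap.Homotopic.refl _ using 1
    refine ContinuousMap.ext fun x => Subtype.ext (Subtype.ext (Prod.ext rfl (funext fun i => ?_)))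
    exact congrArg x.1.1.2 ((exch S.α S.β).symm_apply_apply i).symm

/-- The inclusion of `Nb₀` into `Nb`. -/
def nbIncl : Nb₀ W ⟶ Nb W where
  app S := TopCat.ofHom ⟨fun x => ⟨x.1, x.2.2⟩, by fun_prop⟩

/-- The second of the two points, viewed as an added point of the configuration. -/
def nbX : Nb W ⟶ FIt.sh₂.s ⋙ (XM M).res W where
  app S := TopCat.ofHom ⟨fun x => ⟨⟨(x.1.1.1, fun i => (sumOption₂ S.α S.β i).elim x.1.1.2 x.1.2), by
      refine ⟨fun i i' h => (sumOption₂ S.α S.β).injective ?_, fun i => (x.2.2.2 _).1⟩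
      dsimp only at h
      generalize sumOption₂ S.α S.β i = a at h ⊢
      generalize sumOption₂ S.α S.β i' = a' at h ⊢
      rcases a with _ | a <;> rcases a' with _ | a'
      · rfl
      · exact ((x.2.2.2 _).2 h.symm).elim
      · exact ((x.2.2.2 _).2 h).elim
      · exact congrArg some (x.2.2.1 h)⟩, x.2.1.1⟩, by
    refine Continuous.subtype_mk (Continuous.subtype_mk (Continuous.prodMk ?_
      (continuous_pi fun i => ?_)) _) _
    · exact continuous_fst.comp (continuous_fst.comp continuous_subtype_val)
    · rcases sumOption₂ S.α S.β i with _ | a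
      · exact continuous_snd.comp (continuous_fst.comp continuous_subtype_val)
      · exact (continuous_apply _).comp (continuous_snd.comp continuous_subtype_val)⟩
  naturality S T f := by
    refine TopCat.hom_ext (ContinuousMap.ext fun x => Subtype.ext (Subtype.ext
      (Prod.ext rfl (funext fun i => ?_))))
    rcases i with i | (_ | i) <;> rfl

/-- The analogue of `nbX` for distinct points. -/
def nbX₀ : Nb₀ W ⟶ FIt.sh₁.s ⋙ (XM M).res W where
  app S := TopCat.ofHom ⟨fun x => ⟨⟨(x.1.1.1, fun i => (sumOption₁ S.α S.β i).elim x.1.1.2 x.1.2), by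
      refine ⟨fun i i' h => (sumOption₁ S.α S.β).injective ?_, fun i => ?_⟩
      · dsimp only at h
        generalize sumOption₁ S.α S.β i = a at h ⊢
        generalize sumOption₁ S.α S.β i' = a' at h ⊢
        rcases a with _ | a <;> rcases a' with _ | a'
        · rfl
        · exact ((x.2.2.2.2 _).2 h.symm).elim
        · exact ((x.2.2.2.2 _).2 h).elim
        · exact congrArg some (x.2.2.2.1 h)
      · rcases i with _ | i
        · exact x.2.1.symm
        · exact (x.2.2.2.2 _).1⟩, x.2.2.1.1⟩, by
    refine Continuous.subtype_mk (Continuous.subtype_mk (Continuous.prodMk ?_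
      (continuous_pi fun i => ?_)) _) _
    · exact continuous_fst.comp (continuous_fst.comp continuous_subtype_val)
    · rcases sumOption₁ S.α S.β i with _ | a
      · exact continuous_snd.comp (continuous_fst.comp continuous_subtype_val)
      · exact (continuous_apply _).comp (continuous_snd.comp continuous_subtype_val)⟩
  naturality S T f := by
    refine TopCat.hom_ext (ContinuousMap.ext fun x => Subtype.ext (Subtype.ext
      (Prod.ext rfl (funext fun i => ?_))))
    rcases i with (_ | i) | i <;> rfl

lemma nb_sq : nbIncl W ≫ nbX W = nbX₀ W ≫ ax W := by
  refine NatTrans.ext (funext fun j => TopCat.hom_ext (ContinuousMap.ext fun x => Subtype.ext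
    (Subtype.ext (Prod.ext rfl (funext fun i => ?_)))))
  rcases i with i | (_ | i) <;> rfl

lemma isEmbedding_nbIncl (S : FIt) : Topology.IsEmbedding ((nbIncl W).app S) :=
  .of_comp ((nbIncl W).app S).hom.continuous continuous_subtype_val .subtypeVal

variable [T2Space M] {W}

lemma isOpenEmbedding_ax (S : FIt) : Topology.IsOpenEmbedding ((ax W).app S) := by
  have c1 := XM_fst W (FIt.sh₂.s.obj S)
  have c2 := XM_snd W (FIt.sh₂.s.obj S)
  refine ⟨?_, ?_⟩
  · let g : ((XM M).res W).obj (FIt.sh₂.s.obj S) → M × (Option S.α ⊕ S.β → M) :=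
      fun x => (x.1.1.1, fun i => x.1.1.2 ((exch S.α S.β).symm i))
    have hg : Continuous g := c1.prodMk (continuous_pi fun i => c2 _)
    refine .of_comp ((ax W).app S).hom.continuous hg ?_
    have e : g ∘ ((ax W).app S) = fun x => x.1.1 := by
      funext x
      exact Prod.ext rfl (funext fun i => congrArg x.1.1.2 ((exch S.α S.β).apply_symm_apply i))
    exact e ▸ XM_emb W (FIt.sh₁.s.obj S)
  · have e : Set.range ((ax W).app S) = {x | x.1.1.2 (Sum.inr none) ≠ x.1.1.1} := by
      ext x
      constructor
      · rintro ⟨y, rfl⟩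
        exact y.1.2.2 none
      · intro hx
        refine ⟨⟨⟨(x.1.1.1, x.1.1.2 ∘ (exch S.α S.β).symm),
          x.1.2.1.comp (exch S.α S.β).symm.injective, ?_⟩, x.2⟩, ?_⟩
        · rintro (_ | i)
          · exact hx
          · exact x.1.2.2 i
        · refine Subtype.ext (Subtype.ext (Prod.ext rfl (funext fun i => ?_)))
          exact congrArg x.1.1.2 ((exch S.α S.β).symm_apply_apply i)
    rw [e]
    exact isOpen_ne_fun (c2 _) c1

lemma isOpenEmbedding_nbX (hW : IsOpen W) (S : FIt) : Topology.IsOpenEmbedding ((nbX W).app S) := by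
  have c1 := XM_fst W (FIt.sh₂.s.obj S)
  have c2 := XM_snd W (FIt.sh₂.s.obj S)
  refine ⟨?_, ?_⟩
  · let g : ((XM M).res W).obj (FIt.sh₂.s.obj S) → (M × M) × (S.α ⊕ S.β → M) :=
      fun x => ((x.1.1.1, x.1.1.2 (Sum.inr none)),
        fun i => x.1.1.2 ((sumOption₂ S.α S.β).symm (some i)))
    have hg : Continuous g := (c1.prodMk (c2 _)).prodMk (continuous_pi fun i => c2 _)
    refine .of_comp ((nbX W).app S).hom.continuous hg ?_
    have e : g ∘ ((nbX W).app S) = Subtype.val := by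
      funext x
      refine Prod.ext rfl (funext fun i => ?_)
      rcases i with i | i <;> rfl
    exact e ▸ .subtypeVal
  · have := S.fin
    have := S.fin'
    have e : Set.range ((nbX W).app S) = {x | x.1.1.2 (Sum.inr none) ∈ W} ∩
        ⋂ b : S.β, {x | x.1.1.2 (Sum.inr (some b)) ≠ x.1.1.1} := by
      ext x
      simp only [Set.mem_inter_iff, Set.mem_iInter]
      constructor
      · rintro ⟨y, rfl⟩
        exact ⟨y.2.1.2, fun b => (y.2.2.2 (Sum.inr b)).1⟩
      · rintro ⟨hx, hx'⟩
        refine ⟨⟨((x.1.1.1, x.1.1.2 (Sum.inr none)),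
          fun i => x.1.1.2 ((sumOption₂ S.α S.β).symm (some i))), ⟨x.2, hx⟩, ?_, ?_⟩, ?_⟩
        · exact fun i i' h => Option.some_injective _
            ((sumOption₂ S.α S.β).symm.injective (x.1.2.1 h))
        · rintro (i | i)
          · refine ⟨x.1.2.2 i, fun h => ?_⟩
            cases x.1.2.1 h
          · refine ⟨hx' i, fun h => ?_⟩
            cases x.1.2.1 h
        · refine Subtype.ext (Subtype.ext (Prod.ext rfl (funext fun i => ?_)))
          rcases i with i | (_ | i) <;> rfl
    rw [e]
    exact (hW.preimage (c2 _)).inter (isOpen_iInter_of_finite fun b => isOpen_ne_fun (c2 _) c1)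

/-- Excision around the locus where `y` equals the added point. -/
lemma VP_ax_iff (hW : IsOpen W) (j₀ : FIt) (w : List (Shift FIt)) (m : ℤ) :
    VP F j₀ w (nbIncl W) m ↔ VP F j₀ w (ax W) m := by
  refine VP_exc (nb_sq W) (isEmbedding_nbIncl W) (isOpenEmbedding_nbX hW) isOpenEmbedding_ax ?_ ?_
  · intro S x
    by_cases h : x.1.1.2 (Sum.inr none) = x.1.1.1
    · have hin := fun i : S.α ⊕ S.β => (x.1.2.1.ne (a₁ := (sumOption₂ S.α S.β).symm (some i))
        (a₂ := Sum.inr none) (by rcases i with i | i <;> exact fun h => by cases h))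
      refine .inl ⟨⟨((x.1.1.1, x.1.1.2 (Sum.inr none)),
          fun i => x.1.1.2 ((sumOption₂ S.α S.β).symm (some i))), ⟨x.2, ?_⟩, ?_, ?_⟩, ?_⟩
      · rw [h]; exact x.2
      · exact fun i i' h => Option.some_injective _
            ((sumOption₂ S.α S.β).symm.injective (x.1.2.1 h))
      · exact fun i => ⟨by rw [← h]; exact hin i, hin i⟩
      · refine Subtype.ext (Subtype.ext (Prod.ext rfl (funext fun i => ?_)))
        rcases i with i | (_ | i) <;> rfl
    · refine .inr ⟨⟨⟨(x.1.1.1, x.1.1.2 ∘ (exch S.α S.β).symm),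
          x.1.2.1.comp (exch S.α S.β).symm.injective, ?_⟩, x.2⟩, ?_⟩
      · rintro (_ | i)
        · exact h
        · exact x.1.2.2 i
      · refine Subtype.ext (Subtype.ext (Prod.ext rfl (funext fun i => ?_)))
        exact congrArg x.1.1.2 ((exch S.α S.β).symm_apply_apply i)
  · intro S y₁ y₂ h
    refine ⟨⟨y₁.1, fun e => ?_, y₁.2⟩, rfl⟩
    have h1 : y₁.1.1.1 = y₂.1.1.1 := congrArg (fun x => x.1.1.1) h
    have h2 : y₁.1.1.2 = y₂.1.1.2 (Sum.inl none) := congrArg (fun x => x.1.1.2 (Sum.inr none)) h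
    exact y₂.1.2.2 none (by rw [← h1, ← h2, e])

end confs

/-! ### Linking spheres -/

section linking

open Cx

variable {F : Type} [Field F] {M : Type} [TopologicalSpace M] {W : Set M}
variable {E : Type} [NormedAddCommGroup E] [NormedSpace ℝ E]

lemma Nb_pt (W : Set M) (S : FIt) : Continuous fun x : (Nb W).obj S => (x.1.1 : M × M) :=
  continuous_fst.comp continuous_subtype_val

lemma Nb_snd (W : Set M) (S : FIt) : Continuous fun x : (Nb W).obj S => (x.1.2 : S.α ⊕ S.β → M) :=
  continuous_snd.comp continuous_subtype_val

lemma PM_val (W : Set M) (S : FIo) : Topology.IsEmbedding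
    fun x : ((PM M).res W).obj S => (x.1.1 : M × (S.α → M)) :=
  Topology.IsEmbedding.comp (Y := (PM M).E.obj S) (g := fun x => (x.1 : M × (S.α → M)))
    .subtypeVal .subtypeVal

lemma PM_fst (W : Set M) (S : FIo) : Continuous fun x : ((PM M).res W).obj S => (x.1.1.1 : M) :=
  continuous_fst.comp (PM_val W S).continuous

lemma PM_snd (W : Set M) (S : FIo) :
    Continuous fun x : ((PM M).res W).obj S => (x.1.1.2 : S.α → M) :=
  continuous_snd.comp (PM_val W S).continuous

variable (φ : C(W, E))

/-- In a chart `φ`, the difference of the two points. -/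
def nbE : Nb W ⟶ prodTop E (FIt.sum ⋙ (PM M).res W) where
  app S := TopCat.ofHom ⟨fun x => (φ ⟨x.1.1.2, x.2.1.2⟩ - φ ⟨x.1.1.1, x.2.1.1⟩,
      ⟨⟨(x.1.1.1, x.1.2), x.2.2.1, fun i => (x.2.2.2 i).1⟩, x.2.1.1⟩), by
    have h1 : Continuous fun x : (Nb W).obj S => (⟨x.1.1.1, x.2.1.1⟩ : W) :=
      (continuous_fst.comp (Nb_pt W S)).subtype_mk _
    have h2 : Continuous fun x : (Nb W).obj S => (⟨x.1.1.2, x.2.1.2⟩ : W) :=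
      (continuous_snd.comp (Nb_pt W S)).subtype_mk _
    refine ((φ.continuous.comp h2).sub (φ.continuous.comp h1)).prodMk ?_
    exact (((continuous_fst.comp (Nb_pt W S)).prodMk (Nb_snd W S)).subtype_mk _).subtype_mk _⟩

/-- The inclusion of the punctured vector space. -/
def puncIncl (E : Type) [NormedAddCommGroup E] : C({e : E // e ≠ 0}, E) :=
  ⟨Subtype.val, continuous_subtype_val⟩

variable {φ}

/-- The restriction of `nbE` to distinct points. -/
def nbE₀ (hφ : Function.Injective φ) :
    Nb₀ W ⟶ prodTop {e : E // e ≠ 0} (FIt.sum ⋙ (PM M).res W) where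
  app S := TopCat.ofHom ⟨fun x => (⟨φ ⟨x.1.1.2, x.2.2.1.2⟩ - φ ⟨x.1.1.1, x.2.2.1.1⟩,
      fun h => x.2.1 (congrArg Subtype.val (hφ (sub_eq_zero.1 h))).symm⟩,
      ((nbE φ).app S ((nbIncl W).app S x)).2), by
    have h := ((nbE φ).app S).hom.continuous.comp ((nbIncl W).app S).hom.continuous
    exact (Continuous.subtype_mk (continuous_fst.comp h) _).prodMk (continuous_snd.comp h)⟩

lemma isOpenEmbedding_nbE [T2Space M] (hφ : Topology.IsOpenEmbedding φ) (S : FIt) :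
    Topology.IsOpenEmbedding ((nbE φ).app S) := by
  have := S.fin
  have := S.fin'
  let g : (prodTop E (FIt.sum ⋙ (PM M).res W)).obj S → E × (M × (S.α ⊕ S.β → M)) :=
    fun x => (x.1 + φ ⟨x.2.1.1.1, x.2.2⟩, x.2.1.1)
  have hg : Continuous g := by
    have h1 : Continuous fun x : (prodTop E (FIt.sum ⋙ (PM M).res W)).obj S => x.1 :=
      continuous_fst
    have h2 : Continuous fun x : (prodTop E (FIt.sum ⋙ (PM M).res W)).obj S => x.2 :=
      continuous_snd
    refine (h1.add (φ.continuous.comp ?_)).prodMk ?_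
    · exact Continuous.subtype_mk ((PM_fst W (FIt.sum.obj S)).comp h2) _
    · exact (PM_val W (FIt.sum.obj S)).continuous.comp h2
  let e : (Nb W).obj S → W × (M × (S.α ⊕ S.β → M)) :=
    fun x => (⟨x.1.1.2, x.2.1.2⟩, (x.1.1.1, x.1.2))
  have he : Continuous e :=
    ((continuous_snd.comp (Nb_pt W S)).subtype_mk _).prodMk
      ((continuous_fst.comp (Nb_pt W S)).prodMk (Nb_snd W S))
  have he' : Topology.IsEmbedding e := by
    let r : W × (M × (S.α ⊕ S.β → M)) → (M × M) × (S.α ⊕ S.β → M) :=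
      fun x => ((x.2.1, x.1), x.2.2)
    have hr : Continuous r := by fun_prop
    refine .of_comp he hr ?_
    exact Topology.IsEmbedding.subtypeVal
  have hge : g ∘ (nbE φ).app S = Prod.map φ id ∘ e := by
    funext x
    exact Prod.ext (sub_add_cancel _ _) rfl
  have hφ' : Topology.IsOpenEmbedding
      (Prod.map φ id : W × (M × (S.α ⊕ S.β → M)) → E × (M × (S.α ⊕ S.β → M))) :=
    hφ.prodMap .id
  refine ⟨.of_comp ((nbE φ).app S).hom.continuous hg (hge ▸ hφ'.isEmbedding.comp he'), ?_⟩
  have hr : Set.range ((nbE φ).app S) = g ⁻¹' (Prod.map φ id '' (⋂ i,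
      {x : W × (M × (S.α ⊕ S.β → M)) | x.2.2 i ≠ x.1})) := by
    ext x
    constructor
    · rintro ⟨y, rfl⟩
      exact ⟨e y, Set.mem_iInter.2 fun i => (y.2.2.2 i).2, (congrFun hge y).symm⟩
    · rintro ⟨z, hz, hzx⟩
      have h2 : z.2 = x.2.1.1 := (Prod.ext_iff.1 hzx).2
      have h1 : φ z.1 = x.1 + φ ⟨x.2.1.1.1, x.2.2⟩ := (Prod.ext_iff.1 hzx).1
      have hz' : ∀ i, z.2.2 i ≠ z.1 := fun i => Set.mem_iInter.1 hz i
      rw [h2] at hz'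
      refine ⟨⟨((x.2.1.1.1, z.1), x.2.1.1.2), ⟨x.2.2, z.1.2⟩, x.2.1.2.1,
        fun i => ⟨x.2.1.2.2 i, hz' i⟩⟩, ?_⟩
      exact Prod.ext (sub_eq_of_eq_add h1) rfl
  rw [hr]
  refine (hφ'.isOpenMap _ (isOpen_iInter_of_finite fun i => isOpen_ne_fun ?_ ?_)).preimage hg
  · fun_prop
  · fun_prop

/-- The locus where two points collide is linked by a sphere: forgetting that the two points are
distinct is as connected as the inclusion of a punctured vector space, relative to the space of
the remaining points. -/
lemma VP_nbIncl [T2Space M] (hφ : Topology.IsOpenEmbedding φ) (j₀ : FIt) (w : List (Shift FIt))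
    (m : ℤ) : VP F j₀ w (nbIncl W) m ↔
      VP F j₀ w (prodTopMap (puncIncl E) (FIt.sum ⋙ (PM M).res W)) m := by
  have h : nbIncl W ≫ nbE φ = nbE₀ hφ.injective ≫ prodTopMap (puncIncl E) _ :=
    NatTrans.ext (funext fun j => TopCat.hom_ext (ContinuousMap.ext fun x => rfl))
  refine VP_exc h (isEmbedding_nbIncl W) (isOpenEmbedding_nbE hφ) ?_ ?_ ?_
  · intro S
    exact (isOpen_ne.isOpenEmbedding_subtypeVal (X := E)).prodMap .id
  · intro S x
    by_cases h0 : x.1 = 0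
    · refine .inl ⟨⟨((x.2.1.1.1, x.2.1.1.1), x.2.1.1.2), ⟨x.2.2, x.2.2⟩, x.2.1.2.1,
        fun i => ⟨x.2.1.2.2 i, x.2.1.2.2 i⟩⟩, ?_⟩
      exact Prod.ext ((sub_self _).trans h0.symm) rfl
    · exact .inr ⟨(⟨x.1, h0⟩, x.2), rfl⟩
  · intro S y₁ y₂ h
    refine ⟨⟨y₁.1, fun e => ?_, y₁.2⟩, rfl⟩
    refine y₂.1.2 ((congrArg Prod.fst h).symm.trans ?_)
    have : (⟨y₁.1.1.2, y₁.2.1.2⟩ : W) = ⟨y₁.1.1.1, y₁.2.1.1⟩ := Subtype.ext e.symm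
    exact sub_eq_zero.2 (congrArg φ this)

lemma VP_punc (hE : 1 < Module.rank ℝ E) {J : Type 1} [Category.{0} J] {j₀ : J}
    {w : List (Shift J)} {B : J ⥤ TopCat.{0}} {m : ℤ} (hB : VS F j₀ w B m) :
    VP F j₀ w (prodTopMap (puncIncl E) B) (m + 4) := by
  have hp : PathConnectedSpace {e : E // e ≠ 0} :=
    isPathConnected_iff_pathConnectedSpace.1 (isPathConnected_compl_singleton_of_one_lt_rank hE 0)
  have hL : LocE E {e : E // e ≠ 0} := fun x =>
    ⟨{e | e ≠ 0}, id, isOpen_ne, .id, ⟨x, rfl⟩⟩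
  have h1 : VP F j₀ w (prodTopSnd {e : E // e ≠ 0} B) (m + 4) := VP_prod_snd hB hL
  have h2 : VP F j₀ w (prodTopSnd E B) (m + 6) := by
    refine VP_snd_of_homotopic (0 : E) ?_ B _
    exact ⟨{
      toFun := fun x => (1 - (x.1 : ℝ)) • x.2
      continuous_toFun := by fun_prop
      map_zero_left := fun x => by simp
      map_one_left := fun x => by simp }⟩
  refine VP.of_comp_right (β := prodTopSnd E B) (m := m + 4) (m' := m + 6) ?_ h2 (by omega)
  exact h1

/-- A chart `φ` with domain `W`: the map `ax` is four steps more connected than the configurations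
with a further point in `W`. -/
lemma VP_ax [T2Space M] (hφ : Topology.IsOpenEmbedding φ) (hW : IsOpen W)
    (hE : 1 < Module.rank ℝ E) {n b : ℕ} {m : ℤ}
    (h : VS F FIo.zero (List.replicate (n + b) FIo.sh) ((PM M).res W) m) :
    VP F FIt.zero (wd n b) (ax W) (m + 4) :=
  (VP_ax_iff hW _ _ _).1 ((VP_nbIncl hφ _ _ _).2 (VP_punc hE ((T_sum n b _).2 h)))

end linking

/-! ### Connectivity of the derivatives of configuration spaces -/

section induct

open Cx

variable {F : Type} [Field F] {M : Type} [TopologicalSpace M] {W : Set M}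
variable {E : Type} [NormedAddCommGroup E] [NormedSpace ℝ E]

lemma VP_iff_coneN {J : Type 1} [Category.{0} J] {j₀ : J} {w : List (Shift J)}
    {A B : J ⥤ TopCat.{0}} (α : A ⟶ B) {m : ℤ} : VP F j₀ w α m ↔
      ((T j₀ w).obj (coneN (Functor.whiskerRight α (CS F)))).Van m :=
  (T_coneN w _).symm

lemma XY_p (S : FIt) (x : (XM M).E.obj S) : (YM M).p S ((XY M).app S x) = (XM M).p S x := rfl

variable (W) in
/-- The inclusion of `XM` into `YM` over `W`. -/
def XYr : (XM M).res W ⟶ (YM M).res W := resMap (XY M) XY_p W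

lemma VP_XYr_zero (b : ℕ) (m : ℤ) : VP F FIt.zero (wd 0 b) (XYr W) m := by
  rw [VP_iff_coneN]
  refine T_van (fun S => IsEmpty S.α) _ (inferInstanceAs (IsEmpty Empty)) ?_ fun S hS => ?_
  · intro s hs S hS
    have : s = FIt.sh₂ := by
      rw [wd, List.replicate_zero, List.nil_append] at hs
      exact List.eq_of_mem_replicate hs
    rw [this]
    exact hS
  · let g : ((YM M).res W).obj S ⟶ ((XM M).res W).obj S := TopCat.ofHom
      ⟨fun x => ⟨⟨x.1.1, x.1.2, fun i => (hS.false i).elim⟩, x.2⟩, by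
        refine Continuous.subtype_mk (Continuous.subtype_mk ?_ _) _
        exact (YM_fst W S).prodMk (continuous_pi fun i => YM_snd W S i)⟩
    refine acyclic_of_homotopyEquiv ((XYr W).app S) g ?_ ?_ m
    · exact ContinuousMap.Homotopic.refl _
    · exact ContinuousMap.Homotopic.refl _

lemma axy_sq : Functor.whiskerLeft FIt.sh₁.s (XYr W) ≫ ay W =
    ax W ≫ Functor.whiskerLeft FIt.sh₂.s (XYr W) :=
  NatTrans.ext (funext fun _ => TopCat.hom_ext (ContinuousMap.ext fun _ => rfl))

lemma axy_sq' : Functor.whiskerLeft FIt.sh₁.s (Functor.whiskerRight (XYr W) (CS F)) ≫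
      Functor.whiskerRight (ay W) (CS F) =
    Functor.whiskerRight (ax W) (CS F) ≫
      Functor.whiskerLeft FIt.sh₂.s (Functor.whiskerRight (XYr W) (CS F)) :=
  NatTrans.ext (funext fun j => by
    have h := congrArg (fun u => (CS F).map (NatTrans.app u j)) (axy_sq (W := W))
    simp only [NatTrans.comp_app, Functor.map_comp] at h
    exact h)

lemma ax_eta (S : FIt) : ((XM M).res W).map (FIt.sh₁.η.app S) =
    (ax W).app S ≫ ((XM M).res W).map (FIt.sh₂.η.app S) := by
  refine TopCat.hom_ext (ContinuousMap.ext fun x => Subtype.ext (Subtype.ext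
    (Prod.ext rfl (funext fun i => ?_))))
  rcases i with i | i <;> rfl

lemma ay_eta (S : FIt) : ((YM M).res W).map (FIt.sh₁.η.app S) =
    (ay W).app S ≫ ((YM M).res W).map (FIt.sh₂.η.app S) := by
  refine TopCat.hom_ext (ContinuousMap.ext fun x => Subtype.ext (Subtype.ext
    (Prod.ext rfl (funext fun i => ?_))))
  rcases i with i | i <;> rfl

/-- The relative form of the statement that a configuration of `n + b` points may avoid a point
of `W` in its first `n` members. Adding a point to the first set factors through adding
a point to the second set, and the difference is controlled by `VP_ax`. -/
lemma VP_XYr [T2Space M] {φ : C(W, E)} (hφ : Topology.IsOpenEmbedding φ) (hW : IsOpen W)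
    (hE : 1 < Module.rank ℝ E) (n : ℕ) : ∀ b : ℕ, (∀ N : ℕ, N < n + b →
      VS F FIo.zero (List.replicate N FIo.sh) ((PM M).res W) (3 * N)) →
    VP F FIt.zero (wd n b) (XYr W) (3 * ((n + b : ℕ) : ℤ) + 3) := by
  induction n with
  | zero => exact fun b _ => VP_XYr_zero b _
  | succ n ih =>
    intro b hN
    rw [VP_iff_coneN]
    set Q := coneN (Functor.whiskerRight (XYr W) (CS F)) with hQ
    refine (T_cons FIt.sh₁ (wd n b)).2 ?_
    let u : FIt.sh₁.s ⋙ Q ⟶ FIt.sh₂.s ⋙ Q := coneNMap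
      (α := Functor.whiskerLeft FIt.sh₁.s (Functor.whiskerRight (XYr W) (CS F)))
      (α' := Functor.whiskerLeft FIt.sh₂.s (Functor.whiskerRight (XYr W) (CS F)))
      (Functor.whiskerRight (ax W) (CS F)) (Functor.whiskerRight (ay W) (CS F)) axy_sq'
    have hu : FIt.sh₁.eta Q = u ≫ FIt.sh₂.eta Q := by
      refine NatTrans.ext (funext fun S => Cx.hom_ext fun x => Prod.ext ?_ ?_)
      · change ((CS F).map (((XM M).res W).map (FIt.sh₁.η.app S))).f x.1 =
          ((CS F).map (((XM M).res W).map (FIt.sh₂.η.app S))).f (((CS F).map ((ax W).app S)).f x.1)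
        rw [ax_eta, Functor.map_comp]; rfl
      · change ((CS F).map (((YM M).res W).map (FIt.sh₁.η.app S))).f x.2 =
          ((CS F).map (((YM M).res W).map (FIt.sh₂.η.app S))).f (((CS F).map ((ay W).app S)).f x.2)
        rw [ay_eta, Functor.map_comp]; rfl
    rw [hu, Functor.map_comp]
    refine van_cone1 ?_ ?_
    · have e := coneIso (ccT FIt.zero (wd n b) _) (ccT FIt.zero (wd n b) _)
        (ccT_naturality (j₀ := FIt.zero) (wd n b)
          (α := Functor.whiskerLeft FIt.sh₁.s (Functor.whiskerRight (XYr W) (CS F)))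
          (α' := Functor.whiskerLeft FIt.sh₂.s (Functor.whiskerRight (XYr W) (CS F)))
          (Functor.whiskerRight (ax W) (CS F)) (Functor.whiskerRight (ay W) (CS F)) axy_sq')
      refine (van_iff_of_iso (e ≪≫ transpIso _)).2 ?_
      have h1 : VP F FIt.zero (wd n b) (ax W) (3 * ((n + b : ℕ) : ℤ) + 4) :=
        VP_ax hφ hW hE (hN (n + b) (by omega))
      have h2 := VP_ay (F := F) W FIt.zero (wd n b) (3 * ((n + 1 + b : ℕ) : ℤ) + 3)
      exact van_cone_v1 h1 h2 (by push_cast; omega)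
    · have h := ih (b + 1) (fun N h => hN N (by omega))
      rw [VP_iff_coneN] at h
      have h' := (T_cons FIt.sh₂ (wd n b)).1 ((T_wd_swap n b _).1 h)
      refine h'.mono ?_
      push_cast; omega

end induct

/-! ### Vanishing for derivatives of configuration spaces -/

section vanishing

open Cx

variable {F : Type} [Field F] {M : Type} [TopologicalSpace M] {W : Set M}
variable {E : Type} [NormedAddCommGroup E] [NormedSpace ℝ E]

/-- Over `W`, configurations with an arbitrary further point are a product. -/
def ymIso (W : Set M) : (YM M).res W ≅ prodTop W (FIt.sum ⋙ Conf M) where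
  hom := { app := fun S => TopCat.ofHom ⟨fun x => (⟨x.1.1.1, x.2⟩, ⟨x.1.1.2, x.1.2⟩), by
              refine Continuous.prodMk ((YM_fst W S).subtype_mk _) (Continuous.subtype_mk ?_ _)
              exact continuous_pi fun i => YM_snd W S i⟩ }
  inv := { app := fun S => TopCat.ofHom ⟨fun x => ⟨⟨(x.1.1, x.2.1), x.2.2⟩, x.1.2⟩, by
              refine Continuous.subtype_mk (Continuous.subtype_mk ?_ _) _
              exact (continuous_subtype_val.comp continuous_fst).prodMk
                (continuous_subtype_val.comp continuous_snd)⟩ }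

lemma injective_sumEmpty {M α : Type} {c : α → M} (h : Function.Injective c) :
    Function.Injective (fun i : α ⊕ Empty => i.elim c Empty.elim) := by
  rintro (i | i) (j | j) e
  · exact congrArg _ (h e)
  · exact j.elim
  · exact i.elim
  · exact i.elim

/-- If the second set is empty, `XM` is `PM`. -/
def xmIso (W : Set M) : FIo.inl ⋙ (XM M).res W ≅ (PM M).res W where
  hom := { app := fun S => TopCat.ofHom ⟨fun x => ⟨⟨(x.1.1.1, fun i => x.1.1.2 (Sum.inl i)),
              x.1.2.1.comp Sum.inl_injective, x.1.2.2⟩, x.2⟩, by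
              refine Continuous.subtype_mk (Continuous.subtype_mk ?_ _) _
              exact (XM_fst W (FIo.inl.obj S)).prodMk
                (continuous_pi fun i => XM_snd W (FIo.inl.obj S) (Sum.inl i))⟩ }
  inv := { app := fun S => TopCat.ofHom ⟨fun x => ⟨⟨(x.1.1.1, fun i => i.elim x.1.1.2 Empty.elim),
              injective_sumEmpty x.1.2.1, x.1.2.2⟩, x.2⟩, by
              refine Continuous.subtype_mk (Continuous.subtype_mk ?_ _) _
              refine (PM_fst W S).prodMk (continuous_pi fun i => ?_)
              rcases i with i | i
              · exact (continuous_apply i).comp (PM_snd W S)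
              · exact i.elim⟩
           naturality := fun S S' f => by
              refine TopCat.hom_ext (ContinuousMap.ext fun x => Subtype.ext (Subtype.ext
                (Prod.ext rfl (funext fun i => ?_))))
              rcases i with i | i
              · rfl
              · exact i.elim }
  hom_inv_id := by
    refine NatTrans.ext (funext fun S => TopCat.hom_ext (ContinuousMap.ext fun x => Subtype.ext
      (Subtype.ext (Prod.ext rfl (funext fun i => ?_)))))
    rcases i with i | i
    · rfl
    · exact i.elim

/-- Configurations indexed by `S ⊔ ∅`. -/
def sumInlIso (M : Type) [TopologicalSpace M] : FIo.inl ⋙ FIt.sum ⋙ Conf M ≅ Conf M where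
  hom := { app := fun S => TopCat.ofHom ⟨fun x => ⟨fun i => x.1 (Sum.inl i),
              x.2.comp Sum.inl_injective⟩, by
              refine Continuous.subtype_mk (continuous_pi fun i => ?_) _
              exact (continuous_apply (Sum.inl i)).comp continuous_subtype_val⟩ }
  inv := { app := fun S => TopCat.ofHom ⟨fun x => ⟨fun i => i.elim x.1 Empty.elim,
              injective_sumEmpty x.2⟩, by
              refine Continuous.subtype_mk (continuous_pi fun i => ?_) _
              rcases i with i | i
              · exact (continuous_apply i).comp continuous_subtype_val
              · exact i.elim⟩
           naturality := fun S S' f => by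
              refine TopCat.hom_ext (ContinuousMap.ext fun x => Subtype.ext (funext fun i => ?_))
              rcases i with i | i
              · rfl
              · exact i.elim }
  hom_inv_id := by
    refine NatTrans.ext (funext fun S => TopCat.hom_ext (ContinuousMap.ext fun x => Subtype.ext
      (funext fun i => ?_)))
    rcases i with i | i
    · rfl
    · exact i.elim

variable (F M) in
/-- The vanishing statement for the `n`-th derivative of the configuration spaces. -/
def CVan (n : ℕ) : Prop := VS F FIo.zero (List.replicate n FIo.sh) (Conf M) (3 * n)

/-- Over a chart, the configurations avoiding a point are as connected as configurations. -/
lemma VS_PM [T2Space M] (hL : LocE E M) {φ : C(W, E)} (hφ : Topology.IsOpenEmbedding φ)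
    (hW : IsOpen W) (hE : 1 < Module.rank ℝ E) (n : ℕ) : (∀ N : ℕ, N ≤ n → CVan F M N) →
      VS F FIo.zero (List.replicate n FIo.sh) ((PM M).res W) (3 * n) := by
  induction n using Nat.strong_induction_on with
  | _ n ih =>
    intro hC
    have h1 := VP_XYr (F := F) hφ hW hE n 0 fun N hN => ih N hN fun N' hN' => hC N' (by omega)
    have h2 : VS F FIt.zero (wd n 0) (FIt.sum ⋙ Conf M) (3 * n) :=
      (T_sum n 0 _).2 (hC n le_rfl)
    have h3 : VS F FIt.zero (wd n 0) ((YM M).res W) (3 * n) :=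
      (VS_iso (ymIso W)).2 (VS_prod h2 hL hW)
    have h4 : VS F FIt.zero (wd n 0) ((XM M).res W) (3 * n) :=
      van_cone_v3 h3 h1 (by push_cast; omega)
    exact (VS_iso (xmIso W)).1 ((T_inl n _).1 h4)

lemma VP_inl {A B : FIt ⥤ TopCat.{0}} (α : A ⟶ B) (n : ℕ) {m : ℤ} :
    VP F FIt.zero (wd n 0) α m ↔
      VP F FIo.zero (List.replicate n FIo.sh) (Functor.whiskerLeft FIo.inl α) m := by
  rw [VP_iff_coneN, VP_iff_coneN]
  exact T_inl n _

/-- The inclusion of the configurations with a further point avoiding them into a product. -/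
def pmIncl (M : Type) [TopologicalSpace M] : (PM M).E ⟶ prodTop M (Conf M) where
  app S := TopCat.ofHom ⟨fun x => (x.1.1, ⟨x.1.2, x.2.1⟩), by
    refine Continuous.prodMk ?_ (Continuous.subtype_mk ?_ _)
    · exact continuous_fst.comp continuous_subtype_val
    · exact continuous_snd.comp continuous_subtype_val⟩

lemma VP_pmIncl [T2Space M] (hL : LocE E M)
    (hch : ∀ x : M, ∃ W : Set M, IsOpen W ∧ x ∈ W ∧ ∃ φ : C(W, E), Topology.IsOpenEmbedding φ)
    (hE : 1 < Module.rank ℝ E) (n : ℕ) (hC : ∀ N : ℕ, N ≤ n → CVan F M N) :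
    VP F FIo.zero (List.replicate n FIo.sh) (pmIncl M) (3 * n + 3) := by
  let ℬ : Set (Set M) := {W | IsOpen W ∧ ∃ φ : C(W, E), Topology.IsOpenEmbedding φ}
  have h1 : VP F FIt.zero (wd n 0) (resMap (XY M) XY_p (⋃₀ ℬ)) (3 * n + 3) := by
    refine VP_sUnion (XY M) XY_p (ℬ := ℬ) (fun W h => h.1) ?_ ?_ subset_rfl
    · rintro W ⟨hW, φ, hφ⟩ W' ⟨hW', -⟩
      refine ⟨hW.inter hW', φ.comp ⟨Set.inclusion Set.inter_subset_left, by fun_prop⟩, ?_⟩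
      exact hφ.comp (Topology.IsOpenEmbedding.inclusion Set.inter_subset_left
        ((hW.inter hW').preimage continuous_subtype_val))
    · rintro W ⟨hW, φ, hφ⟩
      exact VP_XYr hφ hW hE n 0 fun N hN => VS_PM hL hφ hW hE N fun N' h => hC N' (by omega)
  have hU : ⋃₀ ℬ = Set.univ := Set.eq_univ_of_forall fun x => by
    obtain ⟨W, hW, hx, φ, hφ⟩ := hch x
    exact ⟨W, ⟨hW, φ, hφ⟩, hx⟩
  rw [hU, VP_inl] at h1
  let β : FIo.inl ⋙ (YM M).res Set.univ ⟶ prodTop M (Conf M) :=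
    Functor.whiskerLeft FIo.inl (YM M).univIso.hom ≫
    { app := fun S => TopCat.ofHom ⟨fun x => (x.1.1, ⟨fun i => x.1.2 (Sum.inl i),
        x.2.comp Sum.inl_injective⟩), by
        refine Continuous.prodMk ?_ (Continuous.subtype_mk (continuous_pi fun i => ?_) _)
        · exact continuous_fst.comp continuous_subtype_val
        · exact (continuous_apply _).comp (continuous_snd.comp continuous_subtype_val)⟩ }
  have hβ : ∀ m, VP F FIo.zero (List.replicate n FIo.sh) β m := by
    refine fun m => VP_of_forall _ m fun S => acyclic_of_homotopyEquiv _ (TopCat.ofHom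
      ⟨fun x => ⟨⟨(x.1, fun i => i.elim x.2.1 Empty.elim), injective_sumEmpty x.2.2⟩,
        trivial⟩, ?_⟩) ?_ ?_ m
    · refine Continuous.subtype_mk (Continuous.subtype_mk (Continuous.prodMk ?_
        (continuous_pi fun i => ?_)) _) _
      · exact continuous_fst
      · rcases i with i | i
        · exact Continuous.comp (Y := (Conf M).obj S) (g := fun c => (c.1 i : M))
            ((continuous_apply i).comp continuous_subtype_val) continuous_snd
        · exact i.elim
    · convert ContinuousMap.Homotopic.refl _ using 1
      refine ContinuousMap.ext fun x => Subtype.ext (Subtype.ext (Prod.ext rfl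
        (funext fun i => ?_)))
      rcases i with i | i
      · rfl
      · exact i.elim
    · exact ContinuousMap.Homotopic.refl _
  let γ : (PM M).E ⟶ FIo.inl ⋙ (XM M).res Set.univ := (PM M).univIso.inv ≫ (xmIso Set.univ).inv
  have e : pmIncl M = γ ≫ Functor.whiskerLeft FIo.inl (resMap (XY M) XY_p Set.univ) ≫ β :=
    NatTrans.ext (funext fun j => TopCat.hom_ext (ContinuousMap.ext fun x => rfl))
  rw [e]
  exact (VP_iso γ _).comp (h1.comp (hβ _))

lemma Conf_apply (S : FIo) (i : S.α) : Continuous fun x : (Conf M).obj S => (x.1 i : M) :=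
  (continuous_apply i).comp continuous_subtype_val

/-- Separating the added point from a configuration. -/
def confSh (M : Type) [TopologicalSpace M] : FIo.sh.s ⋙ Conf M ⟶ (PM M).E where
  app S := TopCat.ofHom ⟨fun x => ⟨(x.1 none, fun i => x.1 (some i)),
      x.2.comp (Option.some_injective _), fun i h => by cases x.2 h⟩, by
    refine Continuous.subtype_mk (Continuous.prodMk ?_ (continuous_pi fun i => ?_)) _
    · exact Conf_apply (FIo.sh.s.obj S) _
    · exact Conf_apply (FIo.sh.s.obj S) _⟩

lemma VP_confSh (j₀ : FIo) (w : List (Shift FIo)) (m : ℤ) : VP F j₀ w (confSh M) m := by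
  have inj : ∀ (S : FIo) (x : (PM M).E.obj S), Function.Injective
      fun i : Option S.α => i.elim x.1.1 x.1.2 := by
    intro S x
    rintro (_ | i) (_ | j) h
    · rfl
    · exact (x.2.2 j h.symm).elim
    · exact (x.2.2 i h).elim
    · exact congrArg some (x.2.1 h)
  refine VP_of_forall _ m fun S => acyclic_of_homotopyEquiv _ (TopCat.ofHom
    ⟨fun x => ⟨fun i => i.elim x.1.1 x.1.2, inj S x⟩, ?_⟩) ?_ ?_ m
  · refine Continuous.subtype_mk (continuous_pi fun i => ?_) _
    rcases i with _ | i
    · exact continuous_fst.comp continuous_subtype_val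
    · exact (continuous_apply _).comp (continuous_snd.comp continuous_subtype_val)
  · convert ContinuousMap.Homotopic.refl _ using 1
    refine ContinuousMap.ext fun x => Subtype.ext (funext fun i => ?_)
    rcases i with _ | i <;> rfl
  · exact ContinuousMap.Homotopic.refl _

/-- The `n`-th derivative of the chains on configuration spaces has no homology in degrees
below `3n/2`. -/
theorem conf_van [T2Space M] [PathConnectedSpace M] (hL : LocE E M)
    (hch : ∀ x : M, ∃ W : Set M, IsOpen W ∧ x ∈ W ∧ ∃ φ : C(W, E), Topology.IsOpenEmbedding φ)
    (hE : 1 < Module.rank ℝ E) (n : ℕ) : CVan F M n := by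
  induction n using Nat.strong_induction_on with
  | _ n ih =>
    rcases n with _ | n
    · intro j hj z hz dz
      refine ⟨0, zero_mem _, ?_⟩
      rw [map_zero]
      refine (Finsupp.ext fun σ => ?_ : z = 0).symm
      by_contra h
      have : (σ.1 : ℤ) = j := hz (Finsupp.mem_support_iff.2 h)
      omega
    · refine (T_cons FIo.sh (List.replicate n FIo.sh)).2 ?_
      have h1 := VP_pmIncl (F := F) hL hch hE n fun N hN => ih N (by omega)
      have h2 : VP F FIo.zero (List.replicate n FIo.sh) (prodTopSnd M (Conf M)) (3 * n + 4) :=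
        VP_prod_snd (ih n (by omega)) hL
      have h3 := (VP_confSh (F := F) (M := M) FIo.zero (List.replicate n FIo.sh) _).comp
        (h1.comp (h2.mono (by omega)))
      have h4 := h3.mono (m' := 3 * ((n + 1 : ℕ) : ℤ)) (by push_cast; omega)
      exact h4

end vanishing

/-! ### Polynomial growth from the vanishing of iterated derivatives -/

section endgame

open Cx

variable {F : Type} [Field F]

/-- Cardinality of an object of `FIo`. -/
noncomputable def FIo.card (S : FIo) : ℕ := Nat.card S.α

/-- Adding a point. -/
abbrev FIo.plus (S : FIo) : FIo := FIo.sh.s.obj S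

/-- Forgetting the added point. -/
def FIo.forget (S : FIo) : S.plus ⟶ S := FIo.sh.η.app S

lemma FIo.forget_naturality {S T : FIo} (f : S ⟶ T) :
    FIo.sh.s.map f ≫ T.forget = S.forget ≫ f := FIo.sh.η.naturality f

lemma FIo.card_plus (S : FIo) : S.plus.card = S.card + 1 := by
  have := S.fin
  exact Finite.card_option

lemma FIo.card_le {S T : FIo} (f : S ⟶ T) : T.card ≤ S.card := by
  have := S.fin
  exact Nat.card_le_card_of_injective _ (FIo.fn f).injective

/-- An injection missing exactly one point extends to the set with a point added. -/
lemma FIo.exists_lift {S T : FIo} (f : S ⟶ T) (h : T.card < S.card) :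
    ∃ e : S ⟶ T.plus, e ≫ T.forget = f := by
  have hx : ∃ x, x ∉ Set.range (FIo.fn f) := by
    by_contra! hx
    have := T.fin
    exact absurd (Nat.card_le_card_of_surjective _ fun x => hx x) (not_le.2 h)
  obtain ⟨x, hx⟩ := hx
  exact ⟨(FIo.fn f).optionElim x hx, FIo.hom_ext fun y => rfl⟩

lemma FIo.exists_iso_plus (S : FIo) {n : ℕ} (h : S.card = n + 1) :
    ∃ T : FIo, T.card = n ∧ Nonempty (T.plus ≅ S) := by
  refine ⟨⟨Fin n, inferInstance⟩, Nat.card_fin n, ?_⟩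
  have := S.fin
  exact ⟨FIo.isoOf (S := FIo.plus ⟨Fin n, inferInstance⟩) (T := S)
    ((finSuccEquiv n).symm.trans (Finite.equivFinOfCardEq h).symm)⟩

lemma FIo.iso_zero (S : FIo) (h : S.card = 0) : Nonempty (FIo.zero ≅ S) := by
  have := S.fin
  have h2 := Finite.card_eq_zero_iff.1 h
  exact ⟨FIo.isoOf (S := FIo.zero) (Equiv.equivOfIsEmpty Empty S.α)⟩

/-- All iterated derivatives of `A` at the empty set are as connected as those of the `i`-th
derivative of the chains on configuration spaces. -/
def HV (A : FIo ⥤ Cx F) (i : ℕ) : Prop :=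
  ∀ n : ℕ, ((T FIo.zero (List.replicate n FIo.sh)).obj A).Van (3 * (i + n))

lemma HV.D {A : FIo ⥤ Cx F} {i : ℕ} (h : HV A i) : HV (FIo.sh.D.obj A) (i + 1) := fun n => by
  have := h (n + 1)
  exact Van.mono (A := (T FIo.zero (List.replicate n FIo.sh)).obj (FIo.sh.D.obj A)) this
    (by push_cast; omega)

lemma HV.van (n : ℕ) : ∀ {A : FIo ⥤ Cx F} {i : ℕ}, HV A i → ∀ S : FIo, S.card = n →
    (A.obj S).Van (3 * i) := by
  induction n with
  | zero =>
    intro A i h S hS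
    obtain ⟨e⟩ := S.iso_zero hS
    exact Van.of_iso (A := A.obj FIo.zero) ((h 0).mono (by simp)) (A.mapIso e)
  | succ n ih =>
    intro A i h S hS
    obtain ⟨T, hT, ⟨e⟩⟩ := S.exists_iso_plus hS
    have h1 : (cone (A.map T.forget)).Van (3 * ((i + 1 : ℕ) : ℤ)) := ih h.D T hT
    exact (van_cone_v3 (ih h T hT) h1 (by push_cast; omega)).of_iso (A.mapIso e)

/-- Central stability: a cycle of degree `j` on a set with at least `m` points is a boundary as
soon as all its restrictions to subsets missing one point are. -/
def Cog (A : FIo ⥤ Cx F) (j : ℤ) (m : ℕ) : Prop :=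
  ∀ S : FIo, m ≤ S.card → ∀ z ∈ (A.obj S).gr j, (A.obj S).d z = 0 →
    (∀ (T : FIo) (f : S ⟶ T), T.card + 1 = S.card →
      ∃ w ∈ (A.obj T).gr (j + 1), (A.obj T).d w = (A.map f).f z) →
    ∃ w ∈ (A.obj S).gr (j + 1), (A.obj S).d w = z

/-- Cycles of degree `j` on sets with at least `m` points extend over an added point, up to
boundaries. -/
def Sur (A : FIo ⥤ Cx F) (j : ℤ) (m : ℕ) : Prop :=
  ∀ S : FIo, m ≤ S.card → ∀ v ∈ (A.obj S).gr j, (A.obj S).d v = 0 →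
    ∃ a ∈ (A.obj S.plus).gr j, ∃ b ∈ (A.obj S).gr (j + 1),
      (A.obj S.plus).d a = 0 ∧ (A.map S.forget).f a + (A.obj S).d b = v

lemma map_map_f (A : FIo ⥤ Cx F) {S T U : FIo} (f : S ⟶ T) (g : T ⟶ U) (x : (A.obj S).X) :
    (A.map g).f ((A.map f).f x) = (A.map (f ≫ g)).f x := by
  rw [A.map_comp]; rfl

/-- For a cycle `v`, the restrictions of the class of `(0, v)` in the derivative vanish, because
restriction along a map missing one point factors through adding a point. -/
lemma Cog.sur {A : FIo ⥤ Cx F} {j : ℤ} {m : ℕ} (h : Cog (FIo.sh.D.obj A) j m) : Sur A j m := by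
  intro S hS v hv dv
  obtain ⟨⟨a, b⟩, hw, hd⟩ := h S hS ((0, v) : _ × _) ⟨zero_mem _, hv⟩
    (by
      refine (cone_d _ _ _).trans (Prod.ext ?_ ?_)
      · change -(A.obj S.plus).d 0 = 0
        rw [map_zero, neg_zero]
      · change _ + (A.obj S).d v = 0
        rw [dv, add_zero, map_zero]) (by
      intro T f hT
      obtain ⟨e, he⟩ := FIo.exists_lift f (by omega)
      refine ⟨((A.map e).f v, 0), ⟨?_, zero_mem _⟩, ?_⟩
      · simpa using (A.map e).gr _ _ hv
      · refine (cone_d _ _ _).trans (Prod.ext ?_ ?_)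
        · change -(A.obj _).d ((A.map e).f v) = (A.map _).f 0
          rw [← (A.map e).comm, dv, map_zero, map_zero, neg_zero]
        · change (A.map T.forget).f ((A.map e).f v) + (A.obj T).d 0 = (A.map f).f v
          rw [map_map_f, he, map_zero, add_zero])
  have hd' := (cone_d (A.map S.forget) a b).symm.trans hd
  refine ⟨a, by simpa using hw.1, b, hw.2, ?_, congrArg Prod.snd hd'⟩
  exact neg_eq_zero.1 (congrArg Prod.fst hd')

/-- A cycle of the derivative whose first component is a boundary is a boundary, granted `Sur`. -/
lemma Sur.boundary {A : FIo ⥤ Cx F} {j : ℤ} {m : ℕ} (h : Sur A (j + 1) m) {S : FIo}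
    (hS : m ≤ S.card) {c : (A.obj S.plus).X} {b : (A.obj S).X}
    (hc : c ∈ (A.obj S.plus).gr (j + 1)) (hb : b ∈ (A.obj S).gr (j + 1))
    (e : (A.map S.forget).f ((A.obj S.plus).d c) + (A.obj S).d b = 0) :
    ∃ w ∈ (cone (A.map S.forget)).gr (j + 1 + 1),
      (cone (A.map S.forget)).d w = ((A.obj S.plus).d c, b) := by
  obtain ⟨a, ha, b', hb', da, e1⟩ := h S hS (b + (A.map S.forget).f c)
    (add_mem hb ((A.map _).gr _ _ hc)) (by rw [map_add, ← (A.map _).comm, add_comm, e])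
  refine ⟨(a - c, b'), ⟨by simpa using sub_mem ha hc, hb'⟩, ?_⟩
  rw [cone_d]
  refine Prod.ext ?_ ?_
  · change -(A.obj _).d (a - c) = _
    rw [map_sub, da]; simp
  · change (A.map S.forget).f (a - c) + (A.obj S).d b' = b
    rw [map_sub, sub_add_eq_add_sub, e1]; abel

lemma Cog.of_iso {A : FIo ⥤ Cx F} {j : ℤ} {S S' : FIo} (e : S' ≅ S)
    (h : ∀ z ∈ (A.obj S').gr j, (A.obj S').d z = 0 →
      (∀ (T : FIo) (f : S' ⟶ T), T.card + 1 = S'.card →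
        ∃ w ∈ (A.obj T).gr (j + 1), (A.obj T).d w = (A.map f).f z) →
      ∃ w ∈ (A.obj S').gr (j + 1), (A.obj S').d w = z) :
    ∀ z ∈ (A.obj S).gr j, (A.obj S).d z = 0 →
      (∀ (T : FIo) (f : S ⟶ T), T.card + 1 = S.card →
        ∃ w ∈ (A.obj T).gr (j + 1), (A.obj T).d w = (A.map f).f z) →
      ∃ w ∈ (A.obj S).gr (j + 1), (A.obj S).d w = z := by
  have hc : S'.card = S.card := le_antisymm (FIo.card_le e.inv) (FIo.card_le e.hom)
  intro z hz dz hT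
  obtain ⟨w, hw, dw⟩ := h ((A.map e.inv).f z) ((A.map e.inv).gr _ _ hz)
    (by rw [← (A.map e.inv).comm, dz, map_zero]) (fun T f hf => by
      rw [map_map_f]
      exact hT T _ (by omega))
  refine ⟨(A.map e.hom).f w, (A.map e.hom).gr _ _ hw, ?_⟩
  rw [← (A.map e.hom).comm, dw, map_map_f, e.inv_hom_id, A.map_id]
  rfl

/-- Central stability of the derivative yields central stability of the diagram, one degree
lower and with two more points. -/
lemma Cog.step {A : FIo ⥤ Cx F} {j : ℤ} {m : ℕ} (h : Cog (FIo.sh.D.obj A) (j + 1) m) :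
    Cog A j (m + 2) := by
  intro S' hS'
  obtain ⟨S, hS, ⟨e⟩⟩ := S'.exists_iso_plus (n := S'.card - 1) (by omega)
  refine Cog.of_iso e fun z hz dz hT => ?_
  obtain ⟨b, hb, db⟩ := hT S S.forget (FIo.card_plus S).symm
  have e0 : (A.map S.forget).f z + (A.obj S).d (-b) = 0 := by
    rw [map_neg, db, add_neg_cancel]
  obtain ⟨⟨c, c'⟩, hw, hd⟩ := h S (by omega) ((z, -b) : _ × _)
    ⟨by simpa using hz, neg_mem hb⟩ (by
      refine (cone_d _ _ _).trans (Prod.ext ?_ e0)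
      change -(A.obj _).d z = 0
      rw [dz, neg_zero]) (by
      intro T f hf
      obtain ⟨x, hx, dx⟩ := hT _ (FIo.sh.s.map f) (by rw [FIo.card_plus, FIo.card_plus, hf])
      obtain ⟨w, hw, dw⟩ := h.sur.boundary (S := T) (by omega) hx
        (b := (A.map f).f (-b)) ((A.map f).gr _ _ (neg_mem hb)) (by
          rw [dx, map_map_f, FIo.forget_naturality, ← (A.map f).comm]
          rw [← map_map_f, ← map_add, e0, map_zero])
      refine ⟨w, hw, dw.trans ?_⟩
      rw [dx]
      rfl)
  have hd' := (cone_d (A.map S.forget) c c').symm.trans hd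
  have hc : c ∈ (A.obj S.plus).gr (j + 1) := by
    have := hw.1
    rwa [add_sub_cancel_right] at this
  exact ⟨-c, neg_mem hc, (map_neg _ _).trans (congrArg Prod.fst hd')⟩

lemma HV.cog (t : ℕ) : ∀ {A : FIo ⥤ Cx F} {i : ℕ}, HV A i → ∀ k : ℤ, 2 * k + 1 ≤ i + t →
    Cog A (k + i) (2 * t) := by
  induction t with
  | zero =>
    intro A i h k hk S _ z hz dz _
    exact h.van _ S rfl _ (by push_cast at hk; omega) z hz dz
  | succ t ih =>
    intro A i h k hk
    have := ih h.D k (by push_cast at hk ⊢; omega)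
    refine Cog.step ?_
    rw [add_assoc]
    exact_mod_cast this

lemma HV.sur {A : FIo ⥤ Cx F} {i k : ℕ} (h : HV A i) (l : ℤ) (hl : l ≤ k + i + 1) :
    Sur A l (4 * k) := by
  have := (h.D.cog (2 * k) (l - i - 1) (by push_cast; omega)).sur
  rwa [← mul_assoc, show l - i - 1 + ((i + 1 : ℕ) : ℤ) = l by push_cast; ring] at this

end endgame

/-! ### Dimensions of homology groups -/

section dimensions

open Cx

variable {F : Type} [Field F]

/-- Cycles of degree `j`. -/
def Cx.Zc (A : Cx F) (j : ℤ) : Submodule F A.X := A.gr j ⊓ LinearMap.ker A.d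

/-- Boundaries of degree `j`. -/
def Cx.Bc (A : Cx F) (j : ℤ) : Submodule F A.X := (A.gr (j + 1)).map A.d

/-- Homology in degree `j`. -/
abbrev Cx.Hc (A : Cx F) (j : ℤ) : Type := A.Zc j ⧸ (A.Bc j).submoduleOf (A.Zc j)

/-- The class of a cycle. -/
def Cx.cls {A : Cx F} {j : ℤ} (z : A.X) (h : z ∈ A.Zc j) : A.Hc j := Submodule.Quotient.mk ⟨z, h⟩

lemma Cx.cls_eq {A : Cx F} {j : ℤ} {z z' : A.X} (h : z ∈ A.Zc j) (h' : z' ∈ A.Zc j) :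
    Cx.cls z h = Cx.cls z' h' ↔ z - z' ∈ A.Bc j := Submodule.Quotient.eq _

lemma Cx.cls_zero {A : Cx F} {j : ℤ} {z : A.X} (h : z ∈ A.Zc j) :
    Cx.cls z h = 0 ↔ z ∈ A.Bc j := Submodule.Quotient.mk_eq_zero _

lemma Cx.exists_cls {A : Cx F} {j : ℤ} (x : A.Hc j) : ∃ z h, x = Cx.cls z h := by
  obtain ⟨⟨z, h⟩, rfl⟩ := Submodule.Quotient.mk_surjective _ x
  exact ⟨z, h, rfl⟩

/-- The map on homology induced by a linear map preserving cycles and boundaries. -/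
def Cx.hmap {A B : Cx F} {i j : ℤ} (f : A.X →ₗ[F] B.X) (hz : ∀ x ∈ A.Zc i, f x ∈ B.Zc j)
    (hb : ∀ x ∈ A.Bc i, f x ∈ B.Bc j) : A.Hc i →ₗ[F] B.Hc j :=
  Submodule.mapQ _ _ (f.restrict hz) fun x hx => hb x.1 hx

lemma Cx.hmap_cls {A B : Cx F} {i j : ℤ} (f : A.X →ₗ[F] B.X) (hz : ∀ x ∈ A.Zc i, f x ∈ B.Zc j)
    (hb : ∀ x ∈ A.Bc i, f x ∈ B.Bc j) (z : A.X) (h : z ∈ A.Zc i) :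
    Cx.hmap f hz hb (Cx.cls z h) = Cx.cls (f z) (hz z h) := rfl

lemma Cx.Hom.mem_Zc {A B : Cx F} (u : A ⟶ B) {j : ℤ} (x : A.X) (h : x ∈ A.Zc j) :
    u.f x ∈ B.Zc j :=
  ⟨u.gr _ _ h.1, LinearMap.mem_ker.2 (by rw [← u.comm, LinearMap.mem_ker.1 h.2, map_zero])⟩

lemma Cx.Hom.mem_Bc {A B : Cx F} (u : A ⟶ B) {j : ℤ} (x : A.X) (h : x ∈ A.Bc j) :
    u.f x ∈ B.Bc j := by
  obtain ⟨y, hy, rfl⟩ := h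
  exact ⟨u.f y, u.gr _ _ hy, (u.comm y).symm⟩

/-- Homology is invariant under isomorphisms. -/
def Cx.hIso {A B : Cx F} (e : A ≅ B) (j : ℤ) : A.Hc j ≃ₗ[F] B.Hc j :=
  LinearEquiv.ofLinearMap (Cx.hmap e.hom.f (Hom.mem_Zc e.hom) (Hom.mem_Bc e.hom))
    (Cx.hmap e.inv.f (Hom.mem_Zc e.inv) (Hom.mem_Bc e.inv))
    (by
      refine LinearMap.ext fun x => ?_
      obtain ⟨z, h, rfl⟩ := exists_cls x
      refine (cls_eq _ _).2 ?_
      have h2 : e.hom.f (e.inv.f z) = z := LinearMap.congr_fun (congrArg Hom.f e.inv_hom_id) z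
      change e.hom.f (e.inv.f z) - z ∈ B.Bc j
      rw [h2, sub_self]
      exact zero_mem _)
    (by
      refine LinearMap.ext fun x => ?_
      obtain ⟨z, h, rfl⟩ := exists_cls x
      refine (cls_eq _ _).2 ?_
      have h2 : e.inv.f (e.hom.f z) = z := LinearMap.congr_fun (congrArg Hom.f e.hom_inv_id) z
      change e.inv.f (e.hom.f z) - z ∈ A.Bc j
      rw [h2, sub_self]
      exact zero_mem _)

lemma Van.subsingleton {A : Cx F} {m j : ℤ} (h : A.Van m) (hj : 2 * j < m) :
    Subsingleton (A.Hc j) := by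
  refine ⟨fun x y => ?_⟩
  obtain ⟨z, hz, rfl⟩ := exists_cls x
  obtain ⟨z', hz', rfl⟩ := exists_cls y
  obtain ⟨w, hw, dw⟩ := h j hj (z - z') (sub_mem hz.1 hz'.1) (LinearMap.mem_ker.1
    (sub_mem hz.2 hz'.2))
  exact (cls_eq _ _).2 ⟨w, hw, dw⟩

section exact

variable {A : FIo ⥤ Cx F} {j : ℤ} {m : ℕ} {S : FIo}

/-- The connecting map from the homology of the derivative. -/
def hdel (A : FIo ⥤ Cx F) (j : ℤ) (S : FIo) :
    ((FIo.sh.D.obj A).obj S).Hc (j + 1) →ₗ[F] (A.obj S.plus).Hc j :=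
  Cx.hmap (A := cone (A.map S.forget)) (LinearMap.fst F (A.obj S.plus).X (A.obj S).X)
    (by
      rintro ⟨a, b⟩ ⟨h1, h2⟩
      refine ⟨?_, neg_eq_zero.1 (congrArg Prod.fst ((cone_d _ a b).symm.trans h2))⟩
      have := h1.1
      rwa [add_sub_cancel_right] at this)
    (by
      rintro _ ⟨⟨a, b⟩, h, rfl⟩
      refine ⟨-a, neg_mem ?_, map_neg _ _⟩
      have := h.1
      rwa [add_sub_cancel_right] at this)

/-- Forgetting the added point, on homology. -/
def hforget (A : FIo ⥤ Cx F) (j : ℤ) (S : FIo) : (A.obj S.plus).Hc j →ₗ[F] (A.obj S).Hc j :=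
  Cx.hmap (A.map S.forget).f (Hom.mem_Zc _) (Hom.mem_Bc _)

lemma hdel_injective (h : Sur A (j + 1) m) (hS : m ≤ S.card) :
    Function.Injective (hdel A j S) := by
  refine (injective_iff_map_eq_zero _).2 fun x hx => ?_
  obtain ⟨⟨a, b⟩, hz, rfl⟩ := exists_cls x
  obtain ⟨c, hc, dc : (A.obj S.plus).d c = a⟩ := (cls_zero _).1 hx
  subst dc
  exact (cls_zero hz).2 (h.boundary hS hc hz.1.2
    (congrArg Prod.snd ((cone_d (A.map S.forget) _ b).symm.trans hz.2)))

lemma hforget_surjective (h : Sur A j m) (hS : m ≤ S.card) :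
    Function.Surjective (hforget A j S) := by
  intro x
  obtain ⟨v, hv, rfl⟩ := exists_cls x
  obtain ⟨a, ha, b, hb, da, e⟩ := h S hS v hv.1 hv.2
  refine ⟨Cx.cls a ⟨ha, da⟩, (cls_eq _ _).2 ⟨-b, neg_mem hb, ?_⟩⟩
  change (A.obj S).d (-b) = (A.map S.forget).f a - v
  rw [map_neg, ← e]
  abel

lemma ker_hforget (A : FIo ⥤ Cx F) (j : ℤ) (S : FIo) :
    LinearMap.ker (hforget A j S) = LinearMap.range (hdel A j S) := by
  refine le_antisymm (fun x hx => ?_) ?_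
  · obtain ⟨z, hz, rfl⟩ := exists_cls x
    obtain ⟨b, hb, db : (A.obj S).d b = (A.map S.forget).f z⟩ := (cls_zero _).1 hx
    refine ⟨Cx.cls (A := cone (A.map S.forget)) ((z, -b) : _ × _) ⟨⟨?_, neg_mem hb⟩, ?_⟩, rfl⟩
    · rw [add_sub_cancel_right]; exact hz.1
    · refine (cone_d _ _ _).trans (Prod.ext ?_ ?_)
      · exact neg_eq_zero.2 hz.2
      · change (A.map S.forget).f z + (A.obj S).d (-b) = 0
        rw [map_neg, db, add_neg_cancel]
  · rintro _ ⟨x, rfl⟩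
    obtain ⟨⟨a, b⟩, hz, rfl⟩ := exists_cls x
    refine (cls_zero _).2 ⟨-b, neg_mem hz.1.2, ?_⟩
    rw [map_neg]
    exact neg_eq_of_add_eq_zero_left
      (congrArg Prod.snd ((cone_d (A.map S.forget) a b).symm.trans hz.2))

end exact

/-- Discrete antiderivatives of polynomials, from Bernoulli polynomials. -/
lemma exists_antidiff (q : Polynomial ℚ) (t : ℕ) (hq : q.degree < t) :
    ∃ p : Polynomial ℚ, p.degree < (t + 1 : ℕ) ∧ ∀ x : ℚ, p.eval (x + 1) = p.eval x + q.eval x := by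
  refine ⟨∑ j ∈ Finset.range t, Polynomial.C (q.coeff j / (j + 1)) * Polynomial.bernoulli (j + 1),
    ?_, fun x => ?_⟩
  · refine (Polynomial.degree_sum_le _ _).trans_lt ?_
    refine (Finset.sup_lt_iff (WithBot.bot_lt_coe _)).2 fun j hj => ?_
    have h : (Polynomial.bernoulli (j + 1)).degree ≤ (j + 1 : ℕ) := by
      refine (Polynomial.degree_sum_le _ _).trans (Finset.sup_le fun i _ => ?_)
      exact (Polynomial.degree_monomial_le _ _).trans (by exact_mod_cast Nat.sub_le _ _)
    refine ((Polynomial.degree_mul_le _ _).trans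
      ((add_le_add Polynomial.degree_C_le h).trans_eq (zero_add _))).trans_lt ?_
    have := Finset.mem_range.1 hj
    exact_mod_cast Nat.succ_lt_succ this
  · rw [Polynomial.eval_finsetSum, Polynomial.eval_finsetSum,
      Polynomial.eval_eq_sum, Polynomial.sum_def,
      Finset.sum_subset (s₁ := q.support) (s₂ := Finset.range t) (fun j hj => by
        by_contra h
        exact Polynomial.mem_support_iff.1 hj (Polynomial.coeff_eq_zero_of_degree_lt
          (hq.trans_le (by exact_mod_cast not_lt.1 (mt Finset.mem_range.2 h)))))
        (fun j _ h => by rw [Polynomial.notMem_support_iff.1 h, zero_mul]),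
      ← Finset.sum_add_distrib]
    refine Finset.sum_congr rfl fun j _ => ?_
    simp only [Polynomial.eval_mul, Polynomial.eval_C, add_comm x 1,
      Polynomial.bernoulli_eval_one_add, Nat.add_sub_cancel]
    have : (j : ℚ) + 1 ≠ 0 := by positivity
    push_cast
    field_simp

/-- A function on `n ≥ N` whose differences are polynomial is polynomial. -/
lemma poly_of_diff (f : ℕ → ℚ) (q : Polynomial ℚ) (t N : ℕ) (hq : q.degree < t)
    (h : ∀ n, N ≤ n → f (n + 1) = f n + q.eval (n : ℚ)) :
    ∃ p : Polynomial ℚ, p.degree < (t + 1 : ℕ) ∧ ∀ n, N ≤ n → f n = p.eval (n : ℚ) := by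
  obtain ⟨p, hp, e⟩ := exists_antidiff q t hq
  refine ⟨p + Polynomial.C (f N - p.eval (N : ℚ)), ?_, fun n hn => ?_⟩
  · refine (Polynomial.degree_add_le _ _).trans_lt (max_lt hp ?_)
    exact Polynomial.degree_C_le.trans_lt (by exact_mod_cast Nat.succ_pos t)
  · induction n, hn using Nat.le_induction with
    | base => simp
    | succ n hn ih =>
      rw [h n hn, ih, Polynomial.eval_add, Polynomial.eval_add, Nat.cast_succ, e]
      simp only [Polynomial.eval_C]
      ring

/-- The finite set with `n` elements. -/
def FIo.std (n : ℕ) : FIo := ⟨Fin n, inferInstance⟩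

lemma FIo.card_std (n : ℕ) : (FIo.std n).card = n := Nat.card_fin n

/-- Adding a point to the standard set. -/
def FIo.stdPlus (n : ℕ) : (FIo.std n).plus ≅ FIo.std (n + 1) :=
  FIo.isoOf (S := (FIo.std n).plus) (T := FIo.std (n + 1)) (finSuccEquiv n).symm

/-- Descending induction on the order `i` of the derivative: the dimensions for `A` have those for
its derivative as differences, and these vanish for `i > 2 * k`. -/
theorem HV.poly (k t : ℕ) : ∀ {A : FIo ⥤ Cx F} {i : ℕ}, HV A i → 2 * k + 1 ≤ i + t →
    (∀ n, 4 * k ≤ n → Module.Finite F ((A.obj (FIo.std n)).Hc (k + i))) →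
    ∃ p : Polynomial ℚ, p.degree < (t : ℕ) ∧ ∀ n, 4 * k ≤ n →
      (Module.finrank F ((A.obj (FIo.std n)).Hc (k + i)) : ℚ) = p.eval (n : ℚ) := by
  induction t with
  | zero =>
    intro A i h hk _
    refine ⟨0, by simp, fun n _ => ?_⟩
    have := Van.subsingleton (h.van _ (FIo.std n) rfl) (j := k + i) (by omega)
    rw [Module.finrank_zero_of_subsingleton]
    simp
  | succ t ih =>
    intro A i h hk hfin
    have e1 : ((k : ℤ) + ((i + 1 : ℕ) : ℤ)) = k + i + 1 := by push_cast; ring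
    have hfin' : ∀ n, 4 * k ≤ n → Module.Finite F ((A.obj (FIo.std n).plus).Hc (k + i)) :=
      fun n hn => have := hfin (n + 1) (by omega)
        Module.Finite.equiv (Cx.hIso (A.mapIso (FIo.stdPlus n)) _).symm
    have inj : ∀ n, 4 * k ≤ n → Function.Injective (hdel A (k + i) (FIo.std n)) := fun n hn =>
      hdel_injective (h.sur (k := k) _ le_rfl) (by rwa [FIo.card_std])
    have hfin2 : ∀ n, 4 * k ≤ n →
        Module.Finite F (((FIo.sh.D.obj A).obj (FIo.std n)).Hc (k + i + 1)) := fun n hn =>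
      have := hfin' n hn
      Module.Finite.of_injective _ (inj n hn)
    obtain ⟨q, hq, e⟩ := ih h.D (by omega) (by rw [e1]; exact hfin2)
    rw [e1] at e
    refine poly_of_diff _ q t (4 * k) hq fun n hn => ?_
    have := hfin' n hn
    rw [← e n hn, ← (Cx.hIso (A.mapIso (FIo.stdPlus n)) (k + i)).finrank_eq]
    have h1 := LinearMap.finrank_range_add_finrank_ker (hforget A (k + i) (FIo.std n))
    rw [ker_hforget, LinearMap.finrank_range_of_inj (inj n hn), LinearMap.range_eq_top.2
      (hforget_surjective (h.sur (k := k) _ (by omega)) (by rwa [FIo.card_std])),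
      finrank_top] at h1
    exact_mod_cast h1.symm

end dimensions

/-! ### Singular cohomology as the dual of homology -/

section duality

open Cx

variable {F : Type} [Field F]

/-- Cohomology of the dual is the dual of homology: here `V'' → V → V'` is the part of the complex
`A` around degree `j`, `K` and `R` are the cocycles and coboundaries among the functionals on `V`,
which are parametrized by `Q`. -/
lemma dual_core {Q V V' V'' : Type} [AddCommGroup Q] [Module F Q] [AddCommGroup V] [Module F V]
    [AddCommGroup V'] [Module F V'] [AddCommGroup V''] [Module F V''] {A : Cx F} {j : ℤ}
    {d : V →ₗ[F] V'} {d' : V'' →ₗ[F] V} {ι : V →ₗ[F] A.X} (hι : Function.Injective ι)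
    (hZ : ∀ x, x ∈ A.Zc j ↔ ∃ v, d v = 0 ∧ ι v = x) (hB : ∀ x, x ∈ A.Bc j ↔ ∃ v, ι (d' v) = x)
    (K : Submodule F Q) (R : Submodule F K) (ev : Q ≃ₗ[F] Module.Dual F V)
    (hK : ∀ q, q ∈ K ↔ ∀ v, ev q (d' v) = 0)
    (hR : ∀ q : K, q ∈ R ↔ ∃ ψ : Module.Dual F V', ∀ v, ev q v = ψ (d v)) :
    Nonempty ((K ⧸ R) ≃ₗ[F] Module.Dual F (A.Hc j)) := by
  obtain ⟨κ, hκ⟩ := LinearMap.exists_leftInverse_of_injective ι (LinearMap.ker_eq_bot.2 hι)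
  have hκ' : ∀ v, κ (ι v) = v := fun v => LinearMap.congr_fun hκ v
  have hq : ∀ q : K, (A.Bc j).submoduleOf (A.Zc j) ≤
      LinearMap.ker ((ev q ∘ₗ κ) ∘ₗ (A.Zc j).subtype) := by
    rintro q ⟨x, hx⟩ h
    obtain ⟨v, rfl⟩ := (hB x).1 h
    refine LinearMap.mem_ker.2 ?_
    change ev q (κ (ι (d' v))) = 0
    rw [hκ']
    exact (hK _).1 q.2 v
  let Φ : K →ₗ[F] Module.Dual F (A.Hc j) :=
    { toFun := fun q => Submodule.liftQ _ ((ev q ∘ₗ κ) ∘ₗ (A.Zc j).subtype) (hq q)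
      map_add' := fun q q' => by
        refine LinearMap.ext fun x => ?_
        obtain ⟨z, h, rfl⟩ := exists_cls x
        change ev (q + q' : Q) (κ z) = ev q (κ z) + ev q' (κ z)
        rw [map_add]; rfl
      map_smul' := fun c q => by
        refine LinearMap.ext fun x => ?_
        obtain ⟨z, h, rfl⟩ := exists_cls x
        change ev (c • (q : Q)) (κ z) = c • ev q (κ z)
        rw [map_smul]; rfl }
  have hΦ : ∀ (q : K) z h, Φ q (Cx.cls z h) = ev q (κ z) := fun _ _ _ => rfl
  have hker : R = LinearMap.ker Φ := by
    ext q
    rw [hR, LinearMap.mem_ker]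
    constructor
    · rintro ⟨ψ, hψ⟩
      refine LinearMap.ext fun x => ?_
      obtain ⟨z, h, rfl⟩ := exists_cls x
      obtain ⟨v, hv, rfl⟩ := (hZ z).1 h
      rw [hΦ, hκ', hψ, hv, map_zero]
      rfl
    · intro h
      have : ev q ∈ LinearMap.range d.dualMap := by
        rw [LinearMap.range_dualMap_eq_dualAnnihilator_ker, Submodule.mem_dualAnnihilator]
        intro v hv
        have h1 := hΦ q (ι v) ((hZ _).2 ⟨v, hv, rfl⟩)
        rw [h, hκ'] at h1
        exact h1.symm
      obtain ⟨ψ, hψ⟩ := this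
      exact ⟨ψ, fun v => LinearMap.congr_fun hψ.symm v⟩
  have hsurj : Function.Surjective Φ := by
    intro θ
    obtain ⟨Θ, hΘ⟩ := LinearMap.exists_extend (θ ∘ₗ Submodule.mkQ _)
    have hΘ' : ∀ z (h : z ∈ A.Zc j), Θ z = θ (Cx.cls z h) := fun z h =>
      LinearMap.congr_fun hΘ ⟨z, h⟩
    have hBZ : ∀ v, ι (d' v) ∈ A.Zc j := fun v => by
      obtain ⟨w, hw, e⟩ := (hB _).2 ⟨v, rfl⟩
      rw [← e]
      refine ⟨?_, A.dd w⟩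
      simpa using A.d_gr _ _ hw
    refine ⟨⟨ev.symm (Θ ∘ₗ ι), (hK _).2 fun v => ?_⟩, LinearMap.ext fun x => ?_⟩
    · rw [LinearEquiv.apply_symm_apply, LinearMap.comp_apply, hΘ' _ (hBZ v),
        (cls_zero _).2 ((hB _).2 ⟨v, rfl⟩), map_zero]
    · obtain ⟨z, h, rfl⟩ := exists_cls x
      obtain ⟨v, hv, rfl⟩ := (hZ z).1 h
      rw [hΦ, hκ', ← hΘ']
      change ev (ev.symm (Θ ∘ₗ ι)) v = _
      rw [LinearEquiv.apply_symm_apply]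
      rfl
  exact ⟨(Submodule.quotEquivOfEq _ _ hker).trans (Φ.quotKerEquivOfSurjective hsurj)⟩

variable (F) (X : TopCat.{0})

/-- The singular chains of dimension `j` inside all singular chains. -/
noncomputable def chι (j : ℕ) : (singularChains F X).X j →ₗ[F] ((CS F).obj X).X :=
  (Finsupp.lmapDomain F F fun σ => ⟨j, X.toSSetObjEquiv (Opposite.op (SimplexCategory.mk j)) σ⟩ :
    ((TopCat.toSSet.obj X).obj (Opposite.op (SimplexCategory.mk j)) →₀ F) →ₗ[F] (Sx X →₀ F))

lemma chι_single (j : ℕ) (σ : (TopCat.toSSet.obj X).obj (Opposite.op (SimplexCategory.mk j))) :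
    chι F X j (Finsupp.single σ 1) = (Finsupp.single ⟨j, X.toSSetObjEquiv _ σ⟩ 1 : Sx X →₀ F) :=
  Finsupp.mapDomain_single

lemma chι_injective (j : ℕ) : Function.Injective (chι F X j) :=
  Finsupp.mapDomain_injective fun _ _ h =>
    (X.toSSetObjEquiv _).injective (eq_of_heq (Sigma.mk.inj_iff.1 h).2)

lemma mem_gr_iff (j : ℕ) (x : ((CS F).obj X).X) :
    x ∈ ((CS F).obj X).gr j ↔ ∃ y, chι F X j y = x := by
  change x ∈ Finsupp.supported F F {σ : Sx X | (σ.1 : ℤ) = j} ↔ x ∈ LinearMap.range (chι F X j)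
  have h1 : {σ : Sx X | (σ.1 : ℤ) = j} =
      (fun σ => (⟨j, X.toSSetObjEquiv (Opposite.op (SimplexCategory.mk j)) σ⟩ : Sx X)) ''
        Set.univ := by
    ext ⟨n, σ⟩
    constructor
    · intro h
      obtain rfl : n = j := by exact_mod_cast h
      exact ⟨(X.toSSetObjEquiv _).symm σ, trivial,
        congrArg (Sigma.mk n) ((X.toSSetObjEquiv (Opposite.op (SimplexCategory.mk n))).apply_symm_apply σ)⟩
    · rintro ⟨τ, -, h⟩
      obtain ⟨rfl, -⟩ := Sigma.mk.inj_iff.1 h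
      rfl
  rw [h1, ← Finsupp.lmapDomain_supported, Finsupp.supported_univ, Submodule.map_top]
  rfl

/-- The two differentials agree. -/
lemma chι_d (j : ℕ) (x : (singularChains F X).X (j + 1)) :
    chι F X j (((singularChains F X).d (j + 1) j).hom x) =
      ((CS F).obj X).d (chι F X (j + 1) x) := by
  have : chι F X j ∘ₗ ((singularChains F X).d (j + 1) j).hom =
      ((CS F).obj X).d ∘ₗ chι F X (j + 1) := by
    refine Finsupp.lhom_ext' fun σ => LinearMap.ext_ring ?_
    change chι F X j (((singularChains F X).d (j + 1) j).hom (Finsupp.single σ 1)) =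
      dS F (chι F X (j + 1) (Finsupp.single σ 1))
    rw [chι_single, dS_single, ds]
    have e : (singularChains F X).d (j + 1) j = ∑ i : Fin (j + 2), (-1 : ℤ) ^ (i : ℕ) •
        (((SimplicialObject.whiskering _ _).obj (ModuleCat.free F)).obj
          (TopCat.toSSet.obj X)).δ i := AlternatingFaceMapComplex.obj_d_eq _ j
    let Y := ((SimplicialObject.whiskering _ _).obj (ModuleCat.free F)).obj (TopCat.toSSet.obj X)
    have e1 : ∀ y : Y.obj (Opposite.op (SimplexCategory.mk (j + 1))),
        (∑ i : Fin (j + 2), (-1 : ℤ) ^ (i : ℕ) • Y.δ i).hom y =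
          ∑ i : Fin (j + 2), (-1 : ℤ) ^ (i : ℕ) • (Y.δ i).hom y := by
      intro y
      rw [ModuleCat.hom_sum, LinearMap.sum_apply]
      refine Finset.sum_congr rfl fun i _ => ?_
      rw [ModuleCat.hom_zsmul, LinearMap.smul_apply]
    have e2 : ((singularChains F X).d (j + 1) j).hom (Finsupp.single σ 1) =
        (∑ i : Fin (j + 2), (-1 : ℤ) ^ (i : ℕ) • (Y.δ i).hom (Finsupp.single σ 1) :) :=
      (congrArg (fun f => ModuleCat.Hom.hom f (Finsupp.single σ 1)) e).trans (e1 _)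
    have e3 : ∀ i : Fin (j + 2), chι F X j ((Y.δ i).hom (Finsupp.single σ 1)) =
        (Finsupp.single ⟨j, (X.toSSetObjEquiv _ σ).comp (face i)⟩ 1 : Sx X →₀ F) := fun i =>
      (congrArg (chι F X j) Finsupp.mapDomain_single).trans
        (chι_single F X j ((TopCat.toSSet.obj X).δ i σ))
    refine (congrArg (chι F X j) e2).trans ((map_sum (chι F X j) _ _).trans ?_)
    refine Finset.sum_congr rfl fun i _ => ?_
    refine (map_zsmul (chι F X j) _ _).trans ?_
    have e4 : (((-1 : ℤ) ^ (i : ℕ) : ℤ) : F) = (-1) ^ (i : ℕ) := by push_cast; rfl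
    rw [e3]
    exact (Int.cast_smul_eq_zsmul F _ _).symm.trans (congrArg (· • _) e4)
  exact LinearMap.congr_fun this x

lemma Zc_iff (k p : ℕ) (hp : p + 1 = k ∨ k = 0 ∧ p = 0) (x : ((CS F).obj X).X) :
    x ∈ ((CS F).obj X).Zc k ↔ ∃ v, ((singularChains F X).d k p).hom v = 0 ∧ chι F X k v = x := by
  have h : ∀ v, ((singularChains F X).d k p).hom v = 0 ↔
      ((CS F).obj X).d (chι F X k v) = 0 := by
    intro v
    rcases hp with rfl | ⟨rfl, rfl⟩
    · rw [← chι_d, map_eq_zero_iff _ (chι_injective F X p)]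
    · have h0 : (singularChains F X).d 0 0 = 0 := (singularChains F X).shape _ _ (by simp)
      refine iff_of_true (by rw [h0]; rfl) ?_
      have := ((CS F).obj X).d_gr _ _ ((mem_gr_iff F X 0 _).2 ⟨v, rfl⟩)
      refine Finsupp.ext fun σ => ?_
      by_contra hne
      have h1 : (σ.1 : ℤ) = ((0 : ℕ) : ℤ) - 1 := this (Finsupp.mem_support_iff.2 hne)
      omega
  constructor
  · rintro ⟨h1, h2⟩
    obtain ⟨v, rfl⟩ := (mem_gr_iff F X k x).1 h1
    exact ⟨v, (h v).2 h2, rfl⟩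
  · rintro ⟨v, hv, rfl⟩
    exact ⟨(mem_gr_iff F X k _).2 ⟨v, rfl⟩, (h v).1 hv⟩

lemma Bc_iff (k : ℕ) (x : ((CS F).obj X).X) :
    x ∈ ((CS F).obj X).Bc k ↔ ∃ v, chι F X k (((singularChains F X).d (k + 1) k).hom v) = x := by
  constructor
  · rintro ⟨w, hw, rfl⟩
    obtain ⟨v, rfl⟩ := (mem_gr_iff F X (k + 1) w).1 (by exact_mod_cast hw)
    exact ⟨v, chι_d F X k v⟩
  · rintro ⟨v, rfl⟩
    exact ⟨chι F X (k + 1) v, by exact_mod_cast (mem_gr_iff F X (k + 1) _).2 ⟨v, rfl⟩,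
      (chι_d F X k v).symm⟩

/-- Singular cohomology is dual to singular homology. -/
theorem SCoh_dual (k : ℕ) :
    Nonempty (SCoh F k X ≃ₗ[F] Module.Dual F (((CS F).obj X).Hc k)) := by
  set S := (singularCochains F X).sc k with hS
  have hn : (ComplexShape.down ℕ).symm.next k = k + 1 := ComplexShape.next_eq' _ rfl
  have hp : (ComplexShape.down ℕ).symm.prev k + 1 = k ∨
      k = 0 ∧ (ComplexShape.down ℕ).symm.prev k = 0 := by
    rcases k with _ | k
    · exact Or.inr ⟨rfl, ComplexShape.prev_eq_self _ _ (by simp)⟩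
    · exact Or.inl (congrArg (· + 1) (ComplexShape.prev_eq' _ rfl))
  let ev : S.X₂ ≃ₗ[F] Module.Dual F ((singularChains F X).X k) :=
    ModuleCat.homLinearEquiv (S := F) (M := (singularChains F X).X k) (N := ModuleCat.of F F)
  have hg : ∀ q : S.X₂, q ∈ LinearMap.ker S.g.hom ↔
      ∀ v, ev q (((singularChains F X).d (k + 1) k).hom v) = 0 := by
    intro q
    have hg' : ∀ m, (ComplexShape.down ℕ).symm.next k = m → (q ∈ LinearMap.ker S.g.hom ↔
      ∀ v, ev q (((singularChains F X).d m k).hom v) = 0) := by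
      rintro m rfl
      rw [LinearMap.mem_ker]
      constructor
      · exact fun h v => LinearMap.congr_fun (congrArg ModuleCat.Hom.hom h) v
      · exact fun h => ModuleCat.hom_ext (LinearMap.ext h)
    exact hg' _ hn
  obtain ⟨e⟩ := dual_core (A := (CS F).obj X) (j := k) (chι_injective F X k) (Zc_iff F X k _ hp)
    (Bc_iff F X k) (LinearMap.ker S.g.hom) (LinearMap.range S.moduleCatToCycles) ev hg (by
      intro q
      constructor
      · rintro ⟨ψ, rfl⟩
        exact ⟨ModuleCat.Hom.hom ψ, fun v => rfl⟩
      · rintro ⟨ψ, h⟩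
        exact ⟨ModuleCat.ofHom ψ, Subtype.ext (ModuleCat.hom_ext (LinearMap.ext fun v =>
          (h v).symm))⟩)
  exact ⟨S.moduleCatHomologyIso.toLinearEquiv.trans e⟩

end duality

/-! ### The theorem -/

/-- A locally Euclidean connected space is path connected. -/
lemma pathConnected_of_charts {d : ℕ} {X : Type} [TopologicalSpace X] [ConnectedSpace X]
    (hman : ∀ x : X, ∃ U : Set X, IsOpen U ∧ x ∈ U ∧ Nonempty (U ≃ₜ (Fin d → ℝ))) :
    PathConnectedSpace X := by
  refine pathConnectedSpace_iff_univ.2 ?_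
  obtain ⟨x₀⟩ := (inferInstance : Nonempty X)
  have hj : ∀ x : X, ∃ U : Set X, IsOpen U ∧ x ∈ U ∧ ∀ y ∈ U, Joined x y := by
    intro x
    obtain ⟨U, hU, hx, ⟨e⟩⟩ := hman x
    refine ⟨U, hU, hx, fun y hy => ?_⟩
    have h := (PathConnectedSpace.joined (e ⟨x, hx⟩) (e ⟨y, hy⟩)).map
      (continuous_subtype_val.comp e.symm.continuous)
    simpa using h
  have hcl : IsClopen (pathComponent x₀) := by
    refine ⟨⟨isOpen_iff_forall_mem_open.2 fun x hx => ?_⟩,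
      isOpen_iff_forall_mem_open.2 fun x hx => ?_⟩
    · obtain ⟨U, hU, hxU, h⟩ := hj x
      exact ⟨U, fun y hy hy' => hx (hy'.trans (h y hy).symm), hU, hxU⟩
    · obtain ⟨U, hU, hxU, h⟩ := hj x
      exact ⟨U, fun y hy => hx.trans (h y hy), hU, hxU⟩
  rw [← hcl.eq_univ ⟨x₀, mem_pathComponent_self x₀⟩]
  exact isPathConnected_pathComponent

/-- For a connected topological manifold `X` (without boundary) of dimension `d ≥ 2`,
if `H^k(PConf_n(X); F)` is finite dimensional for all `n`, then these dimensions agree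
with a polynomial of degree `≤ 2k` for all `n > max(-1, 8k - 2)`. -/
theorem stmt_15 (d : ℕ) (hd : 2 ≤ d) (X : Type) [TopologicalSpace X] [T2Space X]
    [SecondCountableTopology X] [ConnectedSpace X]
    (hman : ∀ x : X, ∃ U : Set X, IsOpen U ∧ x ∈ U ∧ Nonempty (U ≃ₜ (Fin d → ℝ)))
    (F : Type) [Field F] (k : ℕ)
    (hfin : ∀ n : ℕ, FiniteDimensional F (SCoh F k (TopCat.of (PConf n X)))) :
    ∃ p : Polynomial ℚ, p.degree ≤ (2 * k : ℕ) ∧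
      ∀ n : ℕ, max (-1 : ℤ) (8 * (k : ℤ) - 2) < (n : ℤ) →
        (Module.finrank F (SCoh F k (TopCat.of (PConf n X))) : ℚ) = p.eval (n : ℚ) := by
  have := pathConnected_of_charts hman
  have hL : LocE (Fin d → ℝ) X := fun x => by
    obtain ⟨U, hU, hx, ⟨e⟩⟩ := hman x
    refine ⟨Set.univ, fun v => e.symm v, isOpen_univ, ?_, ⟨e ⟨x, hx⟩, trivial⟩, by simp⟩
    exact hU.isOpenEmbedding_subtypeVal.comp
      (e.symm.isOpenEmbedding.comp isOpen_univ.isOpenEmbedding_subtypeVal)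
  have hch : ∀ x : X, ∃ W : Set X, IsOpen W ∧ x ∈ W ∧
      ∃ φ : C(W, Fin d → ℝ), Topology.IsOpenEmbedding φ := fun x => by
    obtain ⟨U, hU, hx, ⟨e⟩⟩ := hman x
    exact ⟨U, hU, hx, ⟨e, e.continuous⟩, e.isOpenEmbedding⟩
  have hE : 1 < Module.rank ℝ (Fin d → ℝ) := by
    rw [rank_fin_fun]
    exact_mod_cast hd
  have hV : HV (Conf X ⋙ CS F) 0 := fun n => by
    have h : ((T FIo.zero (List.replicate n FIo.sh)).obj (Conf X ⋙ CS F)).Van (3 * n) :=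
      conf_van hL hch hE n
    exact h.mono (by simp)
  have hdual : ∀ n, Nonempty (SCoh F k (TopCat.of (PConf n X)) ≃ₗ[F]
      Module.Dual F (((Conf X ⋙ CS F).obj (FIo.std n)).Hc ((k : ℤ) + (0 : ℕ)))) := fun n => by
    rw [Nat.cast_zero, add_zero]
    exact SCoh_dual F (TopCat.of (PConf n X)) k
  have hf : ∀ n, Module.Finite F (((Conf X ⋙ CS F).obj (FIo.std n)).Hc ((k : ℤ) + (0 : ℕ))) := by
    intro n
    obtain ⟨e⟩ := hdual n
    have := hfin n
    exact (Module.finite_dual_iff F).1 (Module.Finite.equiv e)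
  obtain ⟨p, hp, h⟩ := hV.poly k (2 * k + 1) (by omega) fun n _ => hf n
  refine ⟨p, ?_, fun n hn => ?_⟩
  · rcases eq_or_ne p 0 with rfl | h0
    · simp
    · rw [Polynomial.degree_eq_natDegree h0] at hp ⊢
      norm_cast at hp ⊢
      omega
  · obtain ⟨e⟩ := hdual n
    rw [e.finrank_eq, Subspace.dual_finrank_eq]
    exact h n (by omega)
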